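/- arXiv:0910.1962 — 10 statements merged into one kernel-verified Lean document; each statement's English description precedes it below -/
import Mathlib

section
/- Every pair (A ⊆ B) of finite abelian p-groups with p²A = 0 is isomorphic, as a pair, to a finite direct sum of pickets P_ℓ^m with ℓ ≤ min{2, m} and bipickets T_2^{m,r} with 1 ≤ r ≤ m−2. -/
lemma aux_ext {M B Q : Type} [AddCommGroup M] [AddCommGroup B] [AddCommGroup Q]
    (hQ : Module.Baer ℤ Q) (F : M →ₗ[ℤ] B) (G : M →ₗ[ℤ] Q) (h : F.ker ≤ G.ker) :
    ∃ H : B →ₗ[ℤ] Q, ∀ m, H (F m) = G m := by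
  obtain ⟨H, hH⟩ := hQ.extension_property (F.ker.liftQ F le_rfl)
    (LinearMap.ker_eq_bot.1 (Submodule.ker_liftQ_eq_bot _ _ _ le_rfl)) (F.ker.liftQ G h)
  refine ⟨H, fun m => ?_⟩
  have := LinearMap.congr_fun hH (Submodule.Quotient.mk m)
  simpa using this

lemma ext_zmod {M B : Type} [AddCommGroup M] [AddCommGroup B] (n : ℕ) [NeZero n]
    (f : M →+ B) (g : M →+ ZMod n) (H : ∀ m b, f m = (n : ℤ) • b → g m = 0) :
    ∃ h : B →+ ZMod n, ∀ m, h (f m) = g m := by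
  let F : M × B →ₗ[ℤ] B := f.toIntLinearMap.coprod ((n : ℤ) • LinearMap.id)
  let G : M × B →ₗ[ℤ] UnitAddCircle :=
    ((ZMod.toAddCircle.comp g).toIntLinearMap).comp (LinearMap.fst ℤ M B)
  have hF : ∀ m b, F (m, b) = f m + (n : ℤ) • b := fun m b => by simp [F]
  have hG : ∀ m b, G (m, b) = ZMod.toAddCircle (g m) := fun m b => by simp [G]
  obtain ⟨h, hh⟩ := aux_ext (Module.Baer.of_divisible _) F G (by
    rintro ⟨m, b⟩ hm
    rw [LinearMap.mem_ker, hF] at hm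
    rw [LinearMap.mem_ker, hG, H m (-b) (by rw [smul_neg]; exact eq_neg_of_add_eq_zero_left hm),
      map_zero])
  have h1 : ∀ b, ∃ c : ZMod n, ZMod.toAddCircle c = h b := by
    intro b
    have h2 : (n : ℤ) • h b = 0 := by
      have := hh (0, b)
      rw [hF, hG] at this
      simpa using this
    obtain ⟨x, hx⟩ := QuotientAddGroup.mk_surjective (h b)
    have h3 : (((n : ℤ) • x : ℝ) : UnitAddCircle) = 0 := by
      rw [← h2, ← hx]; rfl
    obtain ⟨k, hk⟩ := (AddCircle.coe_eq_zero_iff _).1 h3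
    refine ⟨(k : ZMod n), ?_⟩
    rw [ZMod.toAddCircle_intCast, ← hx]
    have : (k : ℝ) / n = x := by
      have : (n : ℝ) ≠ 0 := by exact_mod_cast NeZero.ne n
      field_simp
      simpa [mul_comm] using hk
    rw [this]
  choose g' hg' using h1
  refine ⟨AddMonoidHom.mk' g' fun a b => ?_, fun m => ?_⟩
  · apply ZMod.toAddCircle_injective n
    rw [map_add, hg', hg', hg', map_add]
  · apply ZMod.toAddCircle_injective n
    have := hh (m, 0)
    rw [hF, hG] at this
    simpa [hg'] using this

/-- If `x` is killed by `p` and `x ∉ p^m B` then `k x ∈ p^m B` implies `p ∣ k`. -/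
lemma dvd_of_smul {B : Type} [AddCommGroup B] {p : ℕ} (hp : p.Prime) {m : ℕ} {x : B}
    (hx : (p : ℤ) • x = 0) (hn : ¬ ∃ b, x = (p : ℤ) ^ m • b) {k : ℤ}
    (hk : ∃ b, k • x = (p : ℤ) ^ m • b) : (p : ℤ) ∣ k := by
  by_contra hd
  have hc : IsCoprime k (p : ℤ) := ((Nat.prime_iff_prime_int.1 hp).coprime_iff_not_dvd.2 hd).symm
  obtain ⟨u, v, huv⟩ := hc
  obtain ⟨b, hb⟩ := hk
  apply hn
  refine ⟨u • b, ?_⟩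
  calc x = (u * k + v * p) • x := by rw [huv, one_smul]
    _ = u • (k • x) + v • ((p : ℤ) • x) := by module
    _ = _ := by rw [hb, hx]; module

/-- purity of cyclic -/
lemma pure_cyc {B : Type} [AddCommGroup B] {p : ℕ} (hp : p.Prime) {R : ℕ} {z : B}
    (hz : (p : ℤ) ^ (R + 1) • z = 0)
    (hn : ¬ ∃ b, (p : ℤ) ^ R • z = (p : ℤ) ^ (R + 1) • b) {k : ℤ}
    (hk : ∃ b, k • z = (p : ℤ) ^ (R + 1) • b) : (p : ℤ) ^ (R + 1) ∣ k := by
  obtain ⟨b, hb⟩ := hk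
  have : ∀ t, t ≤ R + 1 → (p : ℤ) ^ t ∣ k := by
    intro t
    induction t with
    | zero => simp
    | succ t ih =>
      intro ht
      obtain ⟨k', rfl⟩ := ih (by omega)
      rw [pow_succ]
      apply mul_dvd_mul_left
      apply dvd_of_smul hp (x := (p : ℤ) ^ R • z) (m := R + 1) _ hn
      · refine ⟨(p : ℤ) ^ (R - t) • b, ?_⟩
        have e : (p : ℤ) ^ R = (p : ℤ) ^ (R - t) * (p : ℤ) ^ t := by rw [← pow_add]; congr 1; omega
        rw [e, smul_comm _ _ b, ← hb]; module
      · rw [← hz]; module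
  exact this _ le_rfl

/-- two-generator purity -/
lemma pure_two {B : Type} [AddCommGroup B] {p : ℕ} (hp : p.Prime) {R M : ℕ} {y z : B}
    (hRM : R + 1 ≤ M)
    (hz : (p : ℤ) ^ (R + 1) • z = 0)
    (hn : ¬ ∃ b, (p : ℤ) ^ R • z = (p : ℤ) ^ (R + 1) • b)
    (hy : (p : ℤ) ^ (M + 1) • y = 0)
    (hny : ¬ ∃ b, (p : ℤ) ^ M • y = (p : ℤ) ^ (M + 1) • b) {α β : ℤ}
    (hk : ∃ b, α • y + β • z = (p : ℤ) ^ (M + 1) • b) : (p : ℤ) ^ (M + 1) ∣ α := by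
  obtain ⟨b, hb⟩ := hk
  have : ∀ t, t ≤ M + 1 → (p : ℤ) ^ t ∣ α := by
    intro t
    induction t with
    | zero => simp
    | succ t ih =>
      intro ht
      obtain ⟨k', rfl⟩ := ih (by omega)
      rw [pow_succ]
      apply mul_dvd_mul_left
      have e : (p : ℤ) ^ M = (p : ℤ) ^ (M - t) * (p : ℤ) ^ t := by rw [← pow_add]; congr 1; omega
      have e2 : (p : ℤ) ^ M = (p : ℤ) ^ (R + 1) * (p : ℤ) ^ (M - (R + 1)) := by
        rw [← pow_add]; congr 1; omega
      have h1 : k' • (p : ℤ) ^ M • y + ((p : ℤ) ^ (M - t) * β) • z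
          = (p : ℤ) ^ (M + 1) • (p : ℤ) ^ (M - t) • b := by
        rw [smul_comm _ _ b, ← hb, e]; module
      have h2 : (p : ℤ) ^ (R + 1) ∣ ((p : ℤ) ^ (M - t) * β) := by
        apply pure_cyc hp hz hn
        refine ⟨(p : ℤ) ^ (M - (R + 1)) • (p • (p : ℤ) ^ (M - t) • b - k' • y), ?_⟩
        rw [← mul_smul, ← e2, eq_sub_of_add_eq' h1]; module
      obtain ⟨c, hc⟩ := h2
      have h3 : ((p : ℤ) ^ (M - t) * β) • z = 0 := by
        rw [hc, mul_comm, mul_smul, hz, smul_zero]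
      apply dvd_of_smul hp (x := (p : ℤ) ^ M • y) (m := M + 1) _ hny
      · exact ⟨_, by rw [← h1, h3, add_zero]⟩
      · rw [← hy]; module
  exact this _ le_rfl

def GoodPair (p : ℕ) (B : Type) [AddCommGroup B] (A : AddSubgroup B) : Prop :=
  ∃ (n₁ n₂ : ℕ) (ℓ m₁ : Fin n₁ → ℕ) (m₂ r : Fin n₂ → ℕ),
      (∀ i, ℓ i ≤ min 2 (m₁ i)) ∧
      (∀ j, 1 ≤ r j ∧ r j + 2 ≤ m₂ j) ∧
      ∃ (f : ∀ i, B →+ ZMod (p ^ m₁ i)) (g : ∀ j, B →+ ZMod (p ^ m₂ j) × ZMod (p ^ r j)),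
        (∀ b, (∀ i, f i b = 0) → (∀ j, g j b = 0) → b = 0) ∧
        (∀ (u : ∀ i, ZMod (p ^ m₁ i)) (v : ∀ j, ZMod (p ^ m₂ j) × ZMod (p ^ r j)), ∃ b, (∀ i, f i b = u i) ∧ (∀ j, g j b = v j)) ∧
        (∀ b, b ∈ A ↔ (∀ i, f i b ∈ AddSubgroup.zmultiples ((p : ZMod (p ^ m₁ i)) ^ (m₁ i - ℓ i)))
          ∧ (∀ j, g j b ∈ AddSubgroup.zmultiples
                ((p : ZMod (p ^ m₂ j)) ^ (m₂ j - 2), (p : ZMod (p ^ r j)) ^ (r j - 1))))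

lemma GoodPair.final {p : ℕ} {B : Type} [AddCommGroup B] {A : AddSubgroup B}
    (h : GoodPair p B A) : ∃ (n₁ n₂ : ℕ) (ℓ m₁ : Fin n₁ → ℕ) (m₂ r : Fin n₂ → ℕ),
      (∀ i, ℓ i ≤ min 2 (m₁ i)) ∧
      (∀ j, 1 ≤ r j ∧ r j + 2 ≤ m₂ j) ∧
      ∃ e : B ≃+ ((∀ i, ZMod (p ^ m₁ i)) × (∀ j, ZMod (p ^ m₂ j) × ZMod (p ^ r j))),
        A.map e.toAddMonoidHom =
          (AddSubgroup.pi Set.univ fun i =>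
              AddSubgroup.zmultiples ((p : ZMod (p ^ m₁ i)) ^ (m₁ i - ℓ i))).prod
            (AddSubgroup.pi Set.univ fun j =>
              AddSubgroup.zmultiples
                ((p : ZMod (p ^ m₂ j)) ^ (m₂ j - 2), (p : ZMod (p ^ r j)) ^ (r j - 1))) := by
  obtain ⟨n₁, n₂, ℓ, m₁, m₂, r, h1, h2, f, g, hi, hs, hm⟩ := h
  let E : B →+ ((∀ i, ZMod (p ^ m₁ i)) × (∀ j, ZMod (p ^ m₂ j) × ZMod (p ^ r j))) :=
    (AddMonoidHom.pi f).prod (AddMonoidHom.pi g)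
  have hE : Function.Bijective E := by
    constructor
    · rw [injective_iff_map_eq_zero]
      intro b hb
      have hb1 := congrArg Prod.fst hb
      have hb2 := congrArg Prod.snd hb
      exact hi b (fun i => congrFun hb1 i) (fun j => congrFun hb2 j)
    · rintro ⟨u, v⟩
      obtain ⟨b, hb1, hb2⟩ := hs u v
      exact ⟨b, Prod.ext (funext hb1) (funext hb2)⟩
  refine ⟨n₁, n₂, ℓ, m₁, m₂, r, h1, h2, AddEquiv.ofBijective E hE, ?_⟩
  ext x
  obtain ⟨b, rfl⟩ := hE.2 x
  have : E b ∈ A.map (AddEquiv.ofBijective E hE).toAddMonoidHom ↔ b ∈ A := by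
    constructor
    · rintro ⟨b', hb', h⟩
      rwa [← hE.1 h]
    · exact fun h => ⟨b, h, rfl⟩
  rw [this, hm]
  simp only [AddSubgroup.mem_prod, AddSubgroup.mem_pi, Set.mem_univ, true_imp_iff]
  rfl

section split
variable {B P : Type} [AddCommGroup B] [AddCommGroup P] (f : B →+ P) (s : P →+ B)
  (hs : ∀ q, f (s q) = q)

def kproj : B →+ f.ker :=
  ((AddMonoidHom.id B) - s.comp f).codRestrict f.ker
    (fun b => by simp [AddMonoidHom.mem_ker, hs])

lemma kproj_coe (b : B) : (kproj f s hs b : B) = b - s (f b) := rfl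

lemma kproj_ker (c : f.ker) : kproj f s hs (c : B) = c := by
  apply Subtype.ext
  rw [kproj_coe, show f (c : B) = 0 from c.2]; simp

lemma kproj_s (q : P) : kproj f s hs (s q) = 0 := by
  apply Subtype.ext
  rw [kproj_coe, hs]; simp

lemma mem_split (A : AddSubgroup B) (Q : AddSubgroup P) (h1 : ∀ q ∈ Q, s q ∈ A)
    (h2 : ∀ a ∈ A, f a ∈ Q) (b : B) :
    b ∈ A ↔ f b ∈ Q ∧ kproj f s hs b ∈ A.comap f.ker.subtype := by
  rw [AddSubgroup.mem_comap]
  change _ ↔ _ ∧ b - s (f b) ∈ A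
  constructor
  · exact fun h => ⟨h2 b h, A.sub_mem h (h1 _ (h2 b h))⟩
  · rintro ⟨h, h'⟩
    simpa using A.add_mem h' (h1 _ h)

end split

lemma GoodPair.cons₁ {p : ℕ} {B : Type} [AddCommGroup B] {A : AddSubgroup B} (l m : ℕ)
    (hl : l ≤ min 2 m) (f : B →+ ZMod (p ^ m)) (s : ZMod (p ^ m) →+ B) (hs : ∀ q, f (s q) = q)
    (h1 : ∀ q ∈ AddSubgroup.zmultiples ((p : ZMod (p ^ m)) ^ (m - l)), s q ∈ A)
    (h2 : ∀ a ∈ A, f a ∈ AddSubgroup.zmultiples ((p : ZMod (p ^ m)) ^ (m - l)))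
    (h : GoodPair p f.ker (A.comap f.ker.subtype)) : GoodPair p B A := by
  obtain ⟨n₁, n₂, ℓ, m₁, m₂, r, hb1, hb2, F, G, hi, hsu, hm⟩ := h
  let k := kproj f s hs
  refine ⟨n₁ + 1, n₂, Fin.cons l ℓ, Fin.cons m m₁, m₂, r, ?_, hb2,
    Fin.cons (α := fun i => B →+ ZMod (p ^ (Fin.cons m m₁ : Fin (n₁ + 1) → ℕ) i)) f
      (fun i => (F i).comp k), fun j => (G j).comp k, ?_, ?_, ?_⟩
  · rw [Fin.forall_fin_succ]; exact ⟨hl, hb1⟩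
  · intro b hb hb'
    rw [Fin.forall_fin_succ] at hb
    have h0 : f b = 0 := hb.1
    have : k b = 0 := hi _ hb.2 hb'
    have h3 := congrArg Subtype.val this
    rw [kproj_coe, h0] at h3
    simpa using h3
  · intro u v
    obtain ⟨q, hq⟩ : ∃ q : ZMod (p ^ m), q = u 0 := ⟨_, rfl⟩
    obtain ⟨c, hc, hc'⟩ := hsu (fun i => u i.succ) v
    have hk : k (c + s q) = c := by
      rw [map_add, kproj_ker, kproj_s, add_zero]
    refine ⟨c + s q, ?_, ?_⟩
    · rw [Fin.forall_fin_succ]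
      constructor
      · refine Eq.trans ?_ hq
        change f (c + s q) = q
        rw [map_add, hs, show f (c : B) = 0 from c.2, zero_add]
      · intro i
        change F i (k (c + s q)) = _
        rw [hk, hc]
    · intro i
      change G i (k (c + s q)) = _
      rw [hk, hc']
  · intro b
    rw [mem_split f s hs A _ h1 h2, hm, Fin.forall_fin_succ, and_assoc]
    rfl

lemma GoodPair.cons₂ {p : ℕ} {B : Type} [AddCommGroup B] {A : AddSubgroup B} (m t : ℕ)
    (hl : 1 ≤ t ∧ t + 2 ≤ m) (f : B →+ ZMod (p ^ m) × ZMod (p ^ t))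
    (s : ZMod (p ^ m) × ZMod (p ^ t) →+ B) (hs : ∀ q, f (s q) = q)
    (h1 : ∀ q ∈ AddSubgroup.zmultiples
      ((p : ZMod (p ^ m)) ^ (m - 2), (p : ZMod (p ^ t)) ^ (t - 1)), s q ∈ A)
    (h2 : ∀ a ∈ A, f a ∈ AddSubgroup.zmultiples
      ((p : ZMod (p ^ m)) ^ (m - 2), (p : ZMod (p ^ t)) ^ (t - 1)))
    (h : GoodPair p f.ker (A.comap f.ker.subtype)) : GoodPair p B A := by
  obtain ⟨n₁, n₂, ℓ, m₁, m₂, r, hb1, hb2, F, G, hi, hsu, hm⟩ := h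
  let k := kproj f s hs
  refine ⟨n₁, n₂ + 1, ℓ, m₁, Fin.cons m m₂, Fin.cons t r, hb1, ?_, fun j => (F j).comp k,
    Fin.cons (α := fun i => B →+ ZMod (p ^ (Fin.cons m m₂ : Fin (n₂ + 1) → ℕ) i) ×
      ZMod (p ^ (Fin.cons t r : Fin (n₂ + 1) → ℕ) i)) f
      (fun i => (G i).comp k), ?_, ?_, ?_⟩
  · rw [Fin.forall_fin_succ]; exact ⟨hl, hb2⟩
  · intro b hb' hb
    rw [Fin.forall_fin_succ] at hb
    have h0 : f b = 0 := hb.1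
    have : k b = 0 := hi _ hb' hb.2
    have h3 := congrArg Subtype.val this
    rw [kproj_coe, h0] at h3
    simpa using h3
  · intro u v
    obtain ⟨q, hq⟩ : ∃ q : ZMod (p ^ m) × ZMod (p ^ t), q = v 0 := ⟨_, rfl⟩
    obtain ⟨c, hc, hc'⟩ := hsu u (fun i => v i.succ)
    have hk : k (c + s q) = c := by
      rw [map_add, kproj_ker, kproj_s, add_zero]
    refine ⟨c + s q, ?_, ?_⟩
    · intro i
      change F i (k (c + s q)) = _
      rw [hk, hc]
    · rw [Fin.forall_fin_succ]
      constructor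
      · refine Eq.trans ?_ hq
        change f (c + s q) = q
        rw [map_add, hs, show f (c : B) = 0 from c.2, zero_add]
      · intro i
        change G i (k (c + s q)) = _
        rw [hk, hc']
  · intro b
    rw [mem_split f s hs A _ h1 h2, hm, Fin.forall_fin_succ, and_left_comm]
    rfl

lemma exists_sec {B : Type} [AddCommGroup B] (n : ℕ) (z : B) (h : (n : ℤ) • z = 0) :
    ∃ s : ZMod n →+ B, ∀ k : ℤ, s k = k • z :=
  ⟨ZMod.lift n ⟨zmultiplesHom B z, by simpa using h⟩, by simp⟩

lemma zmod_tors {p a l : ℕ} (hp : p.Prime) (c : ZMod (p ^ (a + l))) (h : (p : ℤ) ^ l • c = 0) :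
    ∃ k : ℤ, c = k • (p : ZMod (p ^ (a + l))) ^ a := by
  obtain ⟨j, rfl⟩ := ZMod.intCast_surjective c
  have h1 : ((p ^ l * j : ℤ) : ZMod (p ^ (a + l))) = 0 := by
    rw [← h]; push_cast; rw [zsmul_eq_mul]; push_cast; rfl
  rw [ZMod.intCast_zmod_eq_zero_iff_dvd] at h1
  push_cast at h1
  rw [pow_add, mul_comm] at h1
  obtain ⟨k, rfl⟩ := Int.dvd_of_mul_dvd_mul_left
    (pow_ne_zero l (by exact_mod_cast hp.ne_zero : (p : ℤ) ≠ 0)) h1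
  refine ⟨k, ?_⟩
  rw [zsmul_eq_mul]; push_cast; ring

lemma picket_step {p : ℕ} (hp : p.Prime) {B : Type} [AddCommGroup B] {A : AddSubgroup B}
    (IH : ∀ (P : Type) [AddCommGroup P] (f : B →+ P), (∃ b, f b ≠ 0) →
      GoodPair p f.ker (A.comap f.ker.subtype))
    {M l m' : ℕ} (hm : M + l = m' + 1) (hl : l ≤ 2) (y : B)
    (hA : ∀ a ∈ A, (p : ℤ) ^ l • a = 0) (hyA : (p : ℤ) ^ M • y ∈ A)
    (hy : (p : ℤ) ^ (m' + 1) • y = 0)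
    (hn : ¬ ∃ b, (p : ℤ) ^ m' • y = (p : ℤ) ^ (m' + 1) • b) : GoodPair p B A := by
  have : NeZero (p ^ (M + l)) := ⟨pow_ne_zero _ hp.ne_zero⟩
  obtain ⟨f, hf⟩ := ext_zmod (p ^ (M + l)) (zmultiplesHom B y)
    (Int.castAddHom (ZMod (p ^ (M + l)))) (by
      intro k b hk
      have := pure_cyc hp hy hn (k := k) ⟨b, by simpa [hm] using hk⟩
      simp only [Int.coe_castAddHom]
      rw [ZMod.intCast_zmod_eq_zero_iff_dvd, hm]
      exact_mod_cast this)
  have hf1 : ∀ k : ℤ, f (k • y) = k := fun k => by simpa using hf k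
  obtain ⟨s, hs⟩ := exists_sec (p ^ (M + l)) y (by rw [hm]; exact_mod_cast hy)
  refine GoodPair.cons₁ l (M + l) (by simp [hl]) f s ?_ ?_ ?_ (IH _ f ⟨y, ?_⟩)
  · intro q
    obtain ⟨k, rfl⟩ := ZMod.intCast_surjective q
    rw [hs, hf1]
  · intro q hq
    obtain ⟨k, rfl⟩ := AddSubgroup.mem_zmultiples_iff.1 hq
    rw [map_zsmul]
    apply A.zsmul_mem
    have := hs ((p : ℤ) ^ M)
    push_cast at this
    rwa [Nat.add_sub_cancel, this]
  · intro a ha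
    obtain ⟨k, hk⟩ := zmod_tors hp (f a) (by rw [← map_zsmul, hA a ha, map_zero])
    rw [hk, Nat.add_sub_cancel]
    exact AddSubgroup.zsmul_mem _ (AddSubgroup.mem_zmultiples _) k
  · have := hf1 1
    rw [one_smul] at this
    rw [this]
    have : Fact (1 < p ^ (M + l)) := ⟨Nat.one_lt_pow (by omega) hp.one_lt⟩
    simp

lemma bipicket_step {p : ℕ} (hp : p.Prime) {B : Type} [AddCommGroup B] {A : AddSubgroup B}
    (IH : ∀ (P : Type) [AddCommGroup P] (f : B →+ P), (∃ b, f b ≠ 0) →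
      GoodPair p f.ker (A.comap f.ker.subtype))
    (hA : ∀ a ∈ A, (p : ℤ) ^ 2 • a = 0)
    (N1 : ∀ M (y : B), (p : ℤ) ^ M • y ∈ A → ∃ b, (p : ℤ) ^ (M + 1) • y = (p : ℤ) ^ (M + 2) • b)
    {R M : ℕ} (hRM : R + 1 ≤ M) (y w : B) (hwA : (p : ℤ) ^ R • w ∈ A)
    (hmax : ∀ x ∈ A, (∃ b, x = (p : ℤ) ^ (R + 1) • b) → (p : ℤ) • x = 0)
    (hwy : (p : ℤ) ^ (R + 1) • w = (p : ℤ) ^ (M + 1) • y)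
    (hny : ¬ ∃ b, (p : ℤ) ^ (M + 1) • y = (p : ℤ) ^ (M + 2) • b) : GoodPair p B A := by
  have hw0 : (p : ℤ) ^ (R + 1) • w ≠ 0 := fun h => hny ⟨0, by rw [← hwy, h, smul_zero]⟩
  have hwn : ¬ ∃ b, (p : ℤ) ^ R • w = (p : ℤ) ^ (R + 1) • b := fun h => by
    apply hw0
    rw [← hmax _ hwA h]; module
  have hy : (p : ℤ) ^ (M + 2) • y = 0 := by
    have := hA _ hwA
    calc _ = (p : ℤ) • (p : ℤ) ^ (M + 1) • y := by module
      _ = 0 := by rw [← hwy, ← this]; module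
  obtain ⟨d, rfl⟩ := Nat.exists_eq_add_of_le hRM
  obtain ⟨z, hzdef⟩ : ∃ z, z = w - (p : ℤ) ^ (d + 1) • y := ⟨_, rfl⟩
  have hz1 : (p : ℤ) ^ R • z = (p : ℤ) ^ R • w - (p : ℤ) ^ (R + 1 + d) • y := by
    rw [hzdef]; module
  have hz : (p : ℤ) ^ (R + 1) • z = 0 := by
    calc _ = (p : ℤ) ^ (R + 1) • w - (p : ℤ) ^ (R + 1 + d + 1) • y := by rw [hzdef]; module
      _ = 0 := by rw [hwy, sub_self]
  have hzn : ¬ ∃ b, (p : ℤ) ^ R • z = (p : ℤ) ^ (R + 1) • b := by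
    rintro ⟨b, hb⟩
    apply hwn
    refine ⟨b + (p : ℤ) ^ d • y, ?_⟩
    rw [smul_add, ← hb, hz1]; module
  have : NeZero (p ^ (R + 1 + d + 2)) := ⟨pow_ne_zero _ hp.ne_zero⟩
  have : NeZero (p ^ (R + 1)) := ⟨pow_ne_zero _ hp.ne_zero⟩
  -- first coordinate
  obtain ⟨f, hf⟩ := ext_zmod (p ^ (R + 1 + d + 2))
    ((zmultiplesHom B y).coprod (zmultiplesHom B z))
    ((Int.castAddHom (ZMod (p ^ (R + 1 + d + 2)))).comp (AddMonoidHom.fst ℤ ℤ)) (by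
      rintro ⟨α, β⟩ b hk
      have := pure_two hp (M := R + 1 + d + 1) (by omega) hz hzn hy hny (α := α) (β := β)
        ⟨b, by simpa using hk⟩
      simp only [Int.coe_castAddHom, AddMonoidHom.comp_apply, AddMonoidHom.coe_fst]
      rw [ZMod.intCast_zmod_eq_zero_iff_dvd]
      exact_mod_cast this)
  have hf1 : ∀ α β : ℤ, f (α • y + β • z) = α := fun α β => by simpa using hf (α, β)
  have hfy : ∀ α : ℤ, f (α • y) = α := fun α => by simpa using hf1 α 0
  have hfz : f z = 0 := by simpa using hf1 0 1
  have hfa : f ((p : ℤ) ^ R • w) = (p : ZMod (p ^ (R + 1 + d + 2))) ^ (R + 1 + d) := by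
    have : (p : ℤ) ^ R • w = (p : ℤ) ^ R • z + (p : ℤ) ^ (R + 1 + d) • y := by rw [hz1]; module
    rw [this, map_add, map_zsmul, hfz, hfy]; simp
  -- key divisibility
  have key1 : ∀ x ∈ A, f x = 0 → ∀ β : ℤ, (p : ℤ) ^ (R + 1) ∣ p * β →
      (∃ b, x + β • z = (p : ℤ) ^ (R + 1) • b) → (p : ℤ) ^ (R + 1) ∣ β := by
    rintro x hx hfx β hβ ⟨b, hb⟩
    rw [pow_succ, mul_comm] at hβ
    obtain ⟨β', rfl⟩ := Int.dvd_of_mul_dvd_mul_left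
      (by exact_mod_cast hp.ne_zero : (p : ℤ) ≠ 0) hβ
    rw [pow_succ]
    apply mul_dvd_mul_left
    by_contra hd
    obtain ⟨u, v, huv⟩ :=
      ((Nat.prime_iff_prime_int.1 hp).coprime_iff_not_dvd.2 hd).symm
    have h1 : (p : ℤ) • (u • x + (p : ℤ) ^ R • w) = 0 := by
      apply hmax _ (A.add_mem (A.zsmul_mem hx u) hwA)
      refine ⟨u • b + v • z + (p : ℤ) ^ d • y, ?_⟩
      have h2 : (p : ℤ) ^ R • w = (u * β' + v * p) • (p : ℤ) ^ R • z
          + (p : ℤ) ^ (R + 1 + d) • y := by rw [huv, hz1]; module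
      rw [h2, smul_add, smul_add, smul_comm _ u b, ← hb]; module
    have h3 := congrArg f h1
    rw [smul_add, map_add, map_zsmul, map_zsmul, hfx, smul_zero, smul_zero, zero_add,
      ← mul_smul, ← pow_succ', hwy, hfy, map_zero, ZMod.intCast_zmod_eq_zero_iff_dvd] at h3
    have h4 : p ^ (R + 1 + d + 2) ∣ p ^ (R + 1 + d + 1) := by exact_mod_cast h3
    have := (Nat.pow_dvd_pow_iff_le_right hp.one_lt).1 h4
    omega
  have key2 : ∀ x ∈ A, f x = 0 → ∀ β : ℤ,
      (∃ b, x + β • z = (p : ℤ) ^ (R + 1) • b) → (p : ℤ) ^ (R + 1) ∣ β := by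
    rintro x hx hfx β ⟨b, hb⟩
    refine key1 x hx hfx β ?_ ⟨b, hb⟩
    have h1 : (p : ℤ) ^ (R + 1) ∣ p ^ 2 * β := by
      apply pure_cyc hp hz hzn
      refine ⟨(p : ℤ) ^ 2 • b, ?_⟩
      have := hA x hx
      rw [smul_comm _ _ b, ← hb, smul_add, this]; module
    cases R with
    | zero => simp
    | succ R =>
      rw [show R + 1 + 1 = R + 2 from rfl, pow_add, mul_comm] at h1
      obtain ⟨β', rfl⟩ := Int.dvd_of_mul_dvd_mul_left
        (pow_ne_zero 2 (by exact_mod_cast hp.ne_zero : (p : ℤ) ≠ 0)) h1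
      have hx' : x = (p : ℤ) ^ R • ((p : ℤ) ^ 2 • b - β' • z) := by
        rw [eq_sub_of_add_eq hb]; module
      obtain ⟨b', hb'⟩ := N1 R ((p : ℤ) ^ 2 • b - β' • z) (hx' ▸ hx)
      apply pure_cyc hp hz hzn
      refine ⟨(p : ℤ) • b - b', ?_⟩
      rw [smul_sub, ← hb']; module
  -- second coordinate
  obtain ⟨g, hg⟩ := ext_zmod (p ^ (R + 1))
    ((A ⊓ f.ker).subtype.coprod ((zmultiplesHom B y).coprod (zmultiplesHom B z)))
    ((Int.castAddHom (ZMod (p ^ (R + 1)))).comp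
      ((AddMonoidHom.snd ℤ ℤ).comp (AddMonoidHom.snd _ (ℤ × ℤ)))) (by
      rintro ⟨⟨x, hx, hfx⟩, α, β⟩ b hk
      have hfx : f x = 0 := hfx
      have hk : x + (α • y + β • z) = (p : ℤ) ^ (R + 1) • b := by simpa using hk
      have hα : (p : ℤ) ^ (R + 1) ∣ α := by
        have h1 := congrArg f hk
        obtain ⟨c, hc⟩ := ZMod.intCast_surjective (f b)
        rw [map_add, hfx, zero_add, hf1, map_zsmul, ← hc, ← sub_eq_zero, zsmul_eq_mul,
          ← Int.cast_mul, ← Int.cast_sub, ZMod.intCast_zmod_eq_zero_iff_dvd] at h1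
        push_cast at h1
        have h2 : (p : ℤ) ^ (R + 1) ∣ α - p ^ (R + 1) * c :=
          (pow_dvd_pow _ (by omega)).trans h1
        exact (dvd_sub_left (dvd_mul_right _ _)).1 h2
      obtain ⟨α', rfl⟩ := hα
      have := key2 x hx hfx β ⟨b - α' • y, by rw [smul_sub, ← hk]; module⟩
      simp only [Int.coe_castAddHom, AddMonoidHom.comp_apply, AddMonoidHom.coe_snd]
      rw [ZMod.intCast_zmod_eq_zero_iff_dvd]
      exact_mod_cast this)
  have hg0 : ∀ x ∈ A, f x = 0 → g x = 0 := fun x hx hfx => by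
    simpa using hg (⟨x, hx, hfx⟩, 0, 0)
  have hg1 : ∀ α β : ℤ, g (α • y + β • z) = β := fun α β => by simpa using hg (0, α, β)
  have hga : g ((p : ℤ) ^ R • w) = (p : ZMod (p ^ (R + 1))) ^ R := by
    have : (p : ℤ) ^ R • w = (p : ℤ) ^ (R + 1 + d) • y + (p : ℤ) ^ R • z := by rw [hz1]; module
    rw [this, hg1]; simp
  obtain ⟨s, hs⟩ := exists_sec (p ^ (R + 1 + d + 2)) y (by exact_mod_cast hy)
  obtain ⟨t, ht⟩ := exists_sec (p ^ (R + 1)) z (by exact_mod_cast hz)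
  refine GoodPair.cons₂ (R + 1 + d + 2) (R + 1) (by omega) (f.prod g) (s.coprod t) ?_ ?_ ?_
    (IH _ _ ⟨y, ?_⟩)
  · rintro ⟨q, q'⟩
    obtain ⟨k, rfl⟩ := ZMod.intCast_surjective q
    obtain ⟨k', rfl⟩ := ZMod.intCast_surjective q'
    rw [AddMonoidHom.coprod_apply, hs, ht, AddMonoidHom.prod_apply, hf1, hg1]
  · intro q hq
    obtain ⟨k, rfl⟩ := AddSubgroup.mem_zmultiples_iff.1 hq
    rw [map_zsmul]
    apply A.zsmul_mem
    have h1 := hs ((p : ℤ) ^ (R + 1 + d))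
    have h2 := ht ((p : ℤ) ^ R)
    push_cast at h1 h2
    rw [Nat.add_sub_cancel, Nat.add_sub_cancel, AddMonoidHom.coprod_apply, h1, h2, hz1]
    simpa using hwA
  · intro a ha
    obtain ⟨k, hk⟩ := zmod_tors (a := R + 1 + d) (l := 2) hp (f a)
      (by rw [← map_zsmul, hA a ha, map_zero])
    have hgk : g a = k • (p : ZMod (p ^ (R + 1))) ^ R := by
      have := hg0 (a - k • (p : ℤ) ^ R • w) (A.sub_mem ha (A.zsmul_mem hwA k))
        (by rw [map_sub, map_zsmul, hfa, hk, sub_self])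
      rw [map_sub, map_zsmul, hga] at this
      exact sub_eq_zero.1 this
    rw [AddMonoidHom.prod_apply, hk, hgk, Nat.add_sub_cancel, Nat.add_sub_cancel]
    exact AddSubgroup.mem_zmultiples_iff.2 ⟨k, rfl⟩
  · intro h
    have h1 : f y = 0 := congrArg Prod.fst h
    have h2 := hfy 1
    rw [one_smul, h1] at h2
    have : Fact (1 < p ^ (R + 1 + d + 2)) := ⟨Nat.one_lt_pow (by omega) hp.one_lt⟩
    simp at h2

lemma exists_height {p : ℕ} {B : Type} [AddCommGroup B]
    {N : ℕ} (hN : ∀ b : B, (p : ℤ) ^ N • b = 0) (x : B) (hx : x ≠ 0) :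
    ∃ M y, x = (p : ℤ) ^ M • y ∧ ¬ ∃ b, x = (p : ℤ) ^ (M + 1) • b := by
  classical
  have hex : ∃ k, ¬ ∃ b, x = (p : ℤ) ^ k • b := ⟨N, by rintro ⟨b, hb⟩; rw [hN] at hb; exact hx hb⟩
  obtain ⟨k, hk, hmin⟩ : ∃ k, (¬ ∃ b, x = (p : ℤ) ^ k • b) ∧
      ∀ j < k, ∃ b, x = (p : ℤ) ^ j • b :=
    ⟨Nat.find hex, Nat.find_spec hex, fun j hj => not_not.1 (Nat.find_min hex hj)⟩
  cases k with
  | zero => exact absurd ⟨x, by simp⟩ hk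
  | succ M =>
    obtain ⟨y, hy⟩ := hmin M (by omega)
    exact ⟨M, y, hy, hk⟩

theorem good_all {p : ℕ} (hp : p.Prime) (N : ℕ) : ∀ (n : ℕ) (B : Type) [AddCommGroup B] [Finite B],
    Nat.card B = n → (∀ b : B, (p : ℤ) ^ N • b = 0) → ∀ A : AddSubgroup B,
    (∀ a ∈ A, (p : ℤ) ^ 2 • a = 0) → GoodPair p B A := by
  intro n
  induction n using Nat.strong_induction_on with
  | _ n ih =>
  intro B _ _ hn hN A hA
  have IH : ∀ (P : Type) [AddCommGroup P] (f : B →+ P), (∃ b, f b ≠ 0) →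
      GoodPair p f.ker (A.comap f.ker.subtype) := by
    rintro P _ f ⟨b, hb⟩
    refine ih (Nat.card f.ker) ?_ f.ker rfl ?_ _ ?_
    · rw [← hn]
      exact Finite.card_subtype_lt (x := b) hb
    · rintro ⟨c, hc⟩
      exact Subtype.ext (hN c)
    · rintro ⟨c, hc⟩ h
      exact Subtype.ext (hA c h)
  by_cases N1 : ∀ M (y : B), (p : ℤ) ^ M • y ∈ A →
      ∃ b, (p : ℤ) ^ (M + 1) • y = (p : ℤ) ^ (M + 2) • b
  swap
  · push Not at N1
    obtain ⟨M, y, hyA, hny⟩ := N1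
    refine picket_step hp IH (M := M) (l := 2) (m' := M + 1) rfl le_rfl y hA hyA ?_ ?_
    · rw [← hA _ hyA]; module
    · rintro ⟨b, hb⟩; exact hny b hb
  by_cases h2 : ∃ a ∈ A, (p : ℤ) • a ≠ 0
  · classical
    have hex : ∃ k, ∀ x ∈ A, (∃ b, x = (p : ℤ) ^ k • b) → (p : ℤ) • x = 0 :=
      ⟨N, by rintro x hx ⟨b, rfl⟩; rw [hN, smul_zero]⟩
    obtain ⟨k, hk, hmin⟩ : ∃ k, (∀ x ∈ A, (∃ b, x = (p : ℤ) ^ k • b) → (p : ℤ) • x = 0) ∧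
        ∀ j < k, ¬ (∀ x ∈ A, (∃ b, x = (p : ℤ) ^ j • b) → (p : ℤ) • x = 0) :=
      ⟨Nat.find hex, Nat.find_spec hex, fun j hj => Nat.find_min hex hj⟩
    cases k with
    | zero =>
      obtain ⟨a, ha, hpa⟩ := h2
      exact absurd (hk a ha ⟨a, by simp⟩) hpa
    | succ R =>
      have := hmin R (by omega)
      push Not at this
      obtain ⟨_, hwA, ⟨w, rfl⟩, hw⟩ := this
      obtain ⟨M, y, hy, hny⟩ := exists_height hN _ hw
      have hw' : (p : ℤ) ^ (R + 1) • w = (p : ℤ) ^ M • y := by rw [← hy]; module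
      have hM : R + 2 ≤ M := by
        by_contra hlt
        obtain ⟨b, hb⟩ := N1 R w hwA
        apply hny
        obtain ⟨e, he⟩ := Nat.exists_eq_add_of_le (show M + 1 ≤ R + 2 by omega)
        refine ⟨(p : ℤ) ^ e • b, ?_⟩
        rw [← mul_smul (_ ^ (M + 1)), ← pow_add, ← he, ← hb]; module
      obtain ⟨M, rfl⟩ : ∃ M', M = M' + 1 := ⟨M - 1, by omega⟩
      refine bipicket_step hp IH hA N1 (R := R) (M := M) (by omega) y w hwA hk hw' ?_
      rwa [hy] at hny
  push Not at h2
  by_cases h3 : ∃ a ∈ A, a ≠ 0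
  · obtain ⟨a, ha, ha0⟩ := h3
    obtain ⟨M, y, rfl, hny⟩ := exists_height hN a ha0
    refine picket_step hp IH (M := M) (l := 1) (m' := M) rfl (by omega) y ?_ ha ?_ hny
    · simpa using h2
    · rw [← h2 _ ha]; module
  push Not at h3
  by_cases h4 : ∃ b : B, b ≠ 0
  · obtain ⟨x, hx, hpx⟩ : ∃ x : B, x ≠ 0 ∧ (p : ℤ) • x = 0 := by
      by_contra hcon
      push Not at hcon
      obtain ⟨b, hb⟩ := h4
      have : ∀ k, (p : ℤ) ^ k • b ≠ 0 := by
        intro k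
        induction k with
        | zero => simpa using hb
        | succ k ihk => rw [pow_succ', mul_smul]; exact hcon _ ihk
      exact this N (hN b)
    obtain ⟨M, y, rfl, hny⟩ := exists_height hN x hx
    have hy : (p : ℤ) ^ (M + 1) • y = 0 := by rw [← hpx]; module
    refine picket_step hp IH (M := M + 1) (l := 0) (m' := M) rfl (by omega) y ?_ ?_ hy hny
    · simpa using h3
    · rw [hy]; exact A.zero_mem
  push Not at h4
  refine ⟨0, 0, Fin.elim0, Fin.elim0, Fin.elim0, Fin.elim0, fun i => i.elim0, fun i => i.elim0,
    fun i => i.elim0, fun i => i.elim0, fun b _ _ => h4 b,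
    fun _ _ => ⟨0, fun i => i.elim0, fun i => i.elim0⟩, fun b => ?_⟩
  rw [h4 b]
  exact ⟨fun _ => ⟨fun i => i.elim0, fun i => i.elim0⟩, fun _ => A.zero_mem⟩

/-- Every pair `(A ⊆ B)` of finite abelian `p`-groups with `p² A = 0` is isomorphic, as a
pair, to a finite direct sum of pickets `P_ℓ^m` (`ℓ ≤ min 2 m`) and bipickets `T_2^{m,r}`
(`1 ≤ r ≤ m - 2`).  The picket `P_ℓ^m` is the pair
`(p^{m-ℓ}(ℤ/p^m) ⊆ ℤ/p^m)` and the bipicket `T_2^{m,r}` is the pair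
`(⟨(p^{m-2}, p^{r-1})⟩ ⊆ ℤ/p^m ⊕ ℤ/p^r)`. -/
theorem stmt_0 (p : ℕ) (hp : p.Prime) (B : Type) [AddCommGroup B] [Fintype B]
    (hB : ∀ b : B, ∃ n : ℕ, p ^ n • b = 0)
    (A : AddSubgroup B) (hA : ∀ a ∈ A, p ^ 2 • a = 0) :
    ∃ (n₁ n₂ : ℕ) (ℓ m₁ : Fin n₁ → ℕ) (m₂ r : Fin n₂ → ℕ),
      (∀ i, ℓ i ≤ min 2 (m₁ i)) ∧
      (∀ j, 1 ≤ r j ∧ r j + 2 ≤ m₂ j) ∧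
      ∃ e : B ≃+ ((∀ i, ZMod (p ^ m₁ i)) × (∀ j, ZMod (p ^ m₂ j) × ZMod (p ^ r j))),
        A.map e.toAddMonoidHom =
          (AddSubgroup.pi Set.univ fun i =>
              AddSubgroup.zmultiples ((p : ZMod (p ^ m₁ i)) ^ (m₁ i - ℓ i))).prod
            (AddSubgroup.pi Set.univ fun j =>
              AddSubgroup.zmultiples
                ((p : ZMod (p ^ m₂ j)) ^ (m₂ j - 2), (p : ZMod (p ^ r j)) ^ (r j - 1))) := by

  have : ∃ N : ℕ, ∀ b : B, (p : ℤ) ^ N • b = 0 := by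
    choose n hn using hB
    refine ⟨∑ b, n b, fun b => ?_⟩
    have hle : n b ≤ ∑ b, n b := Finset.single_le_sum (fun _ _ => Nat.zero_le _) (Finset.mem_univ b)
    obtain ⟨k, hk⟩ := Nat.exists_eq_add_of_le' hle
    have h0 : (p : ℤ) ^ n b • b = 0 := by
      rw [← hn b, ← natCast_zsmul]; push_cast; rfl
    rw [hk, pow_add, mul_smul, h0, smul_zero]
  obtain ⟨N, hN⟩ := this
  refine (good_all hp N _ B rfl hN A fun a ha => ?_).final
  rw [← hA a ha, ← natCast_zsmul]; push_cast; rfl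
end

section
/- Let p be a prime and B = ℤ/p⁴ℤ × ℤ/p³ℤ × ℤ/p²ℤ. Then the number of subgroups U of B such that U is isomorphic to ℤ/p³ℤ × ℤ/p²ℤ × ℤ/pℤ and B/U is isomorphic to ℤ/p²ℤ × ℤ/pℤ equals 2p² + p − 1. -/
abbrev HB (p : ℕ) := ZMod (p ^ 4) × ZMod (p ^ 3) × ZMod (p ^ 2)
abbrev HC (p : ℕ) := ZMod (p ^ 3) × ZMod (p ^ 2) × ZMod p
abbrev HQ (p : ℕ) := ZMod (p ^ 2) × ZMod p

def hT (p : ℕ) (x y z : ℤ) : HB p := ((x : ZMod (p^4)), (y : ZMod (p^3)), (z : ZMod (p^2)))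

theorem hT_surj (p : ℕ) (b : HB p) : ∃ x y z : ℤ, b = hT p x y z := by
  obtain ⟨x, y, z⟩ := b
  obtain ⟨x, rfl⟩ := ZMod.intCast_surjective x
  obtain ⟨y, rfl⟩ := ZMod.intCast_surjective y
  obtain ⟨z, rfl⟩ := ZMod.intCast_surjective z
  exact ⟨x, y, z, rfl⟩

theorem hT_add (p : ℕ) (x y z x' y' z' : ℤ) :
    hT p x y z + hT p x' y' z' = hT p (x+x') (y+y') (z+z') := by
  simp [hT]

theorem hT_smul (p : ℕ) (n x y z : ℤ) : n • hT p x y z = hT p (n*x) (n*y) (n*z) := by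
  simp [hT]

theorem hT_zero (p : ℕ) (x y z : ℤ) :
    hT p x y z = 0 ↔ (p:ℤ)^4 ∣ x ∧ (p:ℤ)^3 ∣ y ∧ (p:ℤ)^2 ∣ z := by
  simp only [hT, Prod.mk_eq_zero, ZMod.intCast_zmod_eq_zero_iff_dvd]
  push_cast
  rfl

/-- a homomorphism out of a cyclic group -/
def hcyc {A : Type*} [AddCommGroup A] (n : ℕ) (u : A) (h : (n:ℤ) • u = 0) : ZMod n →+ A :=
  ZMod.lift n ⟨(zmultiplesHom A) u, by simpa using h⟩

theorem hcyc_coe {A : Type*} [AddCommGroup A] (n : ℕ) (u : A) (h : (n:ℤ) • u = 0) (i : ℤ) :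
    hcyc n u h (i : ZMod n) = i • u := by
  simp [hcyc]

def hphi (p : ℕ) (a b c d e f : ℤ) : HB p →+ HQ p :=
  (hcyc (p^4) ((a : ZMod (p^2)), (d : ZMod p)) (by
    simp only [Prod.smul_mk, zsmul_eq_mul, Prod.mk_eq_zero, ← Int.cast_mul,
      ZMod.intCast_zmod_eq_zero_iff_dvd]
    push_cast
    exact ⟨Dvd.intro (p^2 * a) (by ring), Dvd.intro (p^3 * d) (by ring)⟩)).coprod
  ((hcyc (p^3) ((b : ZMod (p^2)), (e : ZMod p)) (by
    simp only [Prod.smul_mk, zsmul_eq_mul, Prod.mk_eq_zero, ← Int.cast_mul,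
      ZMod.intCast_zmod_eq_zero_iff_dvd]
    push_cast
    exact ⟨Dvd.intro (p * b) (by ring), Dvd.intro (p^2 * e) (by ring)⟩)).coprod
  (hcyc (p^2) ((c : ZMod (p^2)), (f : ZMod p)) (by
    simp only [Prod.smul_mk, zsmul_eq_mul, Prod.mk_eq_zero, ← Int.cast_mul,
      ZMod.intCast_zmod_eq_zero_iff_dvd]
    push_cast
    exact ⟨Dvd.intro c (by ring), Dvd.intro (p * f) (by ring)⟩)))

theorem hphi_T (p : ℕ) (a b c d e f x y z : ℤ) :
    hphi p a b c d e f (hT p x y z) =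
      (((a*x+b*y+c*z : ℤ) : ZMod (p^2)), ((d*x+e*y+f*z : ℤ) : ZMod p)) := by
  simp only [hphi, hT, AddMonoidHom.coprod_apply, hcyc_coe]
  ext <;> simp <;> ring

def hK (p : ℕ) (a b c d e f : ℤ) : AddSubgroup (HB p) := (hphi p a b c d e f).ker

theorem hK_mem (p : ℕ) (a b c d e f x y z : ℤ) :
    hT p x y z ∈ hK p a b c d e f ↔ (p:ℤ)^2 ∣ a*x+b*y+c*z ∧ (p:ℤ) ∣ d*x+e*y+f*z := by
  rw [hK, AddMonoidHom.mem_ker, hphi_T, Prod.mk_eq_zero, ZMod.intCast_zmod_eq_zero_iff_dvd,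
    ZMod.intCast_zmod_eq_zero_iff_dvd]
  push_cast
  rfl

def hGood (p : ℕ) (U : AddSubgroup (HB p)) : Prop :=
  Nonempty (U ≃+ HC p) ∧ Nonempty (HB p ⧸ U ≃+ HQ p)

theorem hgood_of (p : ℕ) (hp : p.Prime) (a b c d e f : ℤ) (u v w : HB p)
    (hu : u ∈ hK p a b c d e f) (hv : v ∈ hK p a b c d e f) (hw : w ∈ hK p a b c d e f)
    (ou : ((p^3 : ℕ):ℤ) • u = 0) (ov : ((p^2 : ℕ):ℤ) • v = 0) (ow : (p:ℤ) • w = 0)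
    (hind : ∀ i j k : ℤ, i • u + (j • v + k • w) = 0 →
      (p:ℤ)^3 ∣ i ∧ (p:ℤ)^2 ∣ j ∧ (p:ℤ) ∣ k)
    (hs : ∀ m n : ℤ, ∃ x y z : ℤ, a*x+b*y+c*z = m ∧ d*x+e*y+f*z = n) :
    hGood p (hK p a b c d e f) := by
  have : NeZero p := ⟨hp.ne_zero⟩
  have hsurj : Function.Surjective (hphi p a b c d e f) := by
    rintro ⟨m, n⟩
    obtain ⟨m, rfl⟩ := ZMod.intCast_surjective m
    obtain ⟨n, rfl⟩ := ZMod.intCast_surjective n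
    obtain ⟨x, y, z, rfl, rfl⟩ := hs m n
    exact ⟨hT p x y z, hphi_T ..⟩
  let ψ : HC p →+ HB p := (hcyc (p^3) u ou).coprod ((hcyc (p^2) v ov).coprod (hcyc p w ow))
  have hψ : ∀ i j k : ℤ, ψ ((i : ZMod (p^3)), (j : ZMod (p^2)), (k : ZMod p)) =
      i • u + (j • v + k • w) := by
    intro i j k
    simp only [ψ, AddMonoidHom.coprod_apply, hcyc_coe]
  have hψinj : Function.Injective ψ := by
    rw [injective_iff_map_eq_zero]
    rintro ⟨i, j, k⟩ h
    obtain ⟨i, rfl⟩ := ZMod.intCast_surjective i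
    obtain ⟨j, rfl⟩ := ZMod.intCast_surjective j
    obtain ⟨k, rfl⟩ := ZMod.intCast_surjective k
    rw [hψ] at h
    have := hind i j k h
    simp only [Prod.mk_eq_zero, ZMod.intCast_zmod_eq_zero_iff_dvd]
    push_cast
    exact this
  have hle : ψ.range ≤ hK p a b c d e f := by
    rintro _ ⟨⟨i, j, k⟩, rfl⟩
    obtain ⟨i, rfl⟩ := ZMod.intCast_surjective i
    obtain ⟨j, rfl⟩ := ZMod.intCast_surjective j
    obtain ⟨k, rfl⟩ := ZMod.intCast_surjective k
    rw [hψ]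
    exact add_mem (zsmul_mem hu _) (add_mem (zsmul_mem hv _) (zsmul_mem hw _))
  have c1 : Nat.card ψ.range = p^6 := by
    rw [← Nat.card_congr (AddMonoidHom.ofInjective hψinj).toEquiv]
    simp only [Nat.card_prod, Nat.card_zmod]; ring
  have q : HB p ⧸ hK p a b c d e f ≃+ HQ p :=
    QuotientAddGroup.quotientKerEquivOfSurjective _ hsurj
  have c2 : Nat.card (hK p a b c d e f) = p^6 := by
    have h1 := AddSubgroup.card_eq_card_quotient_mul_card_addSubgroup (hK p a b c d e f)
    rw [Nat.card_congr q.toEquiv] at h1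
    simp only [Nat.card_prod, Nat.card_zmod] at h1
    have : 0 < p ^ 3 := pow_pos hp.pos 3
    apply Nat.eq_of_mul_eq_mul_left this
    rw [← pow_add]
    calc _ = p^2 * p * Nat.card (hK p a b c d e f) := by ring
      _ = _ := by rw [← h1]; ring
  have heq : ψ.range = hK p a b c d e f := by
    apply AddSubgroup.eq_of_le_of_card_ge hle
    rw [c1, c2]
  refine ⟨?_, ⟨q⟩⟩
  rw [← heq]
  exact ⟨(AddMonoidHom.ofInjective hψinj).symm⟩

def hA1 (p : ℕ) (t e : ℕ) := hK p 1 (p*t) 0 0 e 1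
def hA2 (p : ℕ) (s : ℕ) := hK p 1 0 (p*s) 0 1 0
def hBB (p : ℕ) (a c : ℕ) := hK p a 1 (p*c) 1 0 0

theorem hA1_good (p : ℕ) (hp : p.Prime) (t e : ℕ) : hGood p (hA1 p t e) := by
  have hp0 : (p:ℤ) ≠ 0 := by exact_mod_cast hp.ne_zero
  apply hgood_of p hp _ _ _ _ _ _ (hT p (-p*t) 1 (-e)) (hT p (p^2) 0 0) (hT p 0 0 p)
  · rw [hK_mem]; constructor <;> (try ring_nf) <;> simp
  · rw [hK_mem]; constructor <;> (try ring_nf) <;> simp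
  · rw [hK_mem]; constructor <;> (try ring_nf) <;> simp
  · rw [hT_smul, hT_zero]; push_cast
    exact ⟨⟨-t, by ring⟩, ⟨1, by ring⟩, ⟨-p*e, by ring⟩⟩
  · rw [hT_smul, hT_zero]; push_cast
    exact ⟨⟨1, by ring⟩, ⟨0, by ring⟩, ⟨0, by ring⟩⟩
  · rw [hT_smul, hT_zero]
    exact ⟨⟨0, by ring⟩, ⟨0, by ring⟩, ⟨1, by ring⟩⟩
  · intro i j k
    simp only [hT_smul, hT_add, hT_zero]
    rintro ⟨h1, ⟨i', h2⟩, h3⟩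
    have hi : i = p^3 * i' := by linarith
    subst hi
    refine ⟨⟨i', rfl⟩, ?_, ?_⟩
    · have : (p:ℤ)^4 ∣ p^2 * j := by
        have := dvd_add h1 (Dvd.intro (i'*t) rfl : (p:ℤ)^4 ∣ p^4 * (i'*t))
        convert this using 1 <;> first | rfl | ring
      rw [show (p:ℤ)^4 = p^2*p^2 by ring] at this
      exact (mul_dvd_mul_iff_left (pow_ne_zero 2 hp0)).1 this
    · have : (p:ℤ)^2 ∣ p * k := by
        have := dvd_add h3 (Dvd.intro (p*i'*e) rfl : (p:ℤ)^2 ∣ p^2 * (p*i'*e))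
        convert this using 1 <;> first | rfl | ring
      rw [show (p:ℤ)^2 = p*p by ring] at this
      exact (mul_dvd_mul_iff_left hp0).1 this
  · intro m n
    exact ⟨m, 0, n, by ring, by ring⟩

theorem hA2_good (p : ℕ) (hp : p.Prime) (s : ℕ) (hs : ¬ p ∣ s) : hGood p (hA2 p s) := by
  have hp0 : (p:ℤ) ≠ 0 := by exact_mod_cast hp.ne_zero
  have hco : IsCoprime ((p:ℤ)^3) (s:ℤ) := by
    apply IsCoprime.pow_left
    rw [Nat.isCoprime_iff_coprime]
    exact (Nat.Prime.coprime_iff_not_dvd hp).2 hs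
  apply hgood_of p hp _ _ _ _ _ _ (hT p (-p*s) 0 1) (hT p 0 p 0) (hT p 0 0 p)
  · rw [hK_mem]; constructor <;> (try ring_nf) <;> simp
  · rw [hK_mem]; constructor <;> (try ring_nf) <;> simp
  · rw [hK_mem]; constructor
    · exact ⟨s, by ring⟩
    · simp
  · rw [hT_smul, hT_zero]; push_cast
    exact ⟨⟨-s, by ring⟩, ⟨0, by ring⟩, ⟨p, by ring⟩⟩
  · rw [hT_smul, hT_zero]; push_cast
    exact ⟨⟨0, by ring⟩, ⟨1, by ring⟩, ⟨0, by ring⟩⟩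
  · rw [hT_smul, hT_zero]
    exact ⟨⟨0, by ring⟩, ⟨0, by ring⟩, ⟨1, by ring⟩⟩
  · intro i j k
    simp only [hT_smul, hT_add, hT_zero]
    rintro ⟨h1, h2, h3⟩
    have hi : (p:ℤ)^3 ∣ i := by
      have : (p:ℤ) * p^3 ∣ p * (i * s) := by
        rw [← dvd_neg]; convert h1 using 1 <;> first | rfl | ring
      exact hco.dvd_of_dvd_mul_right ((mul_dvd_mul_iff_left hp0).1 this)
    refine ⟨hi, ?_, ?_⟩
    · have : (p:ℤ) * p^2 ∣ p * j := by convert h2 using 1 <;> ring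
      exact (mul_dvd_mul_iff_left hp0).1 this
    · obtain ⟨i', rfl⟩ := hi
      have : (p:ℤ)^2 ∣ p * k := by
        have := dvd_sub h3 (Dvd.intro (p*i') rfl : (p:ℤ)^2 ∣ p^2 * (p*i'))
        convert this using 1 <;> first | rfl | ring
      rw [show (p:ℤ)^2 = p*p by ring] at this
      exact (mul_dvd_mul_iff_left hp0).1 this
  · intro m n
    exact ⟨m, n, 0, by ring, by ring⟩

theorem hBB_good (p : ℕ) (hp : p.Prime) (a c : ℕ) : hGood p (hBB p a c) := by
  have hp0 : (p:ℤ) ≠ 0 := by exact_mod_cast hp.ne_zero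
  apply hgood_of p hp _ _ _ _ _ _ (hT p p (-a*p) 0) (hT p 0 (-p*c) 1) (hT p 0 (p^2) 0)
  · rw [hK_mem]; constructor <;> (try ring_nf) <;> simp
  · rw [hK_mem]; constructor <;> (try ring_nf) <;> simp
  · rw [hK_mem]; constructor <;> (try ring_nf) <;> simp
  · rw [hT_smul, hT_zero]; push_cast
    exact ⟨⟨1, by ring⟩, ⟨-a*p, by ring⟩, ⟨0, by ring⟩⟩
  · rw [hT_smul, hT_zero]; push_cast
    exact ⟨⟨0, by ring⟩, ⟨-c, by ring⟩, ⟨1, by ring⟩⟩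
  · rw [hT_smul, hT_zero]
    exact ⟨⟨0, by ring⟩, ⟨1, by ring⟩, ⟨0, by ring⟩⟩
  · intro i j k
    simp only [hT_smul, hT_add, hT_zero]
    rintro ⟨h1, h2, h3⟩
    have hi : (p:ℤ)^3 ∣ i := by
      have : (p:ℤ) * p^3 ∣ p * i := by convert h1 using 1 <;> ring
      exact (mul_dvd_mul_iff_left hp0).1 this
    have hj : (p:ℤ)^2 ∣ j := by convert h3 using 1; ring
    refine ⟨hi, hj, ?_⟩
    obtain ⟨i', rfl⟩ := hi
    obtain ⟨j', rfl⟩ := hj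
    have : (p:ℤ)^2 * p ∣ p^2 * k := by
      have := dvd_add h2 (Dvd.intro (i'*a*p+j'*c) rfl : (p:ℤ)^3 ∣ p^3 * (i'*a*p+j'*c))
      convert this using 1 <;> first | rfl | ring
    exact (mul_dvd_mul_iff_left (pow_ne_zero 2 hp0)).1 this
  · intro m n
    exact ⟨n, m-a*n, 0, by ring, by ring⟩

theorem hdvd_of_p2 {p : ℤ} (hp0 : p ≠ 0) {x : ℤ} (h : p^2 ∣ p * x) : p ∣ x := by
  rw [sq] at h
  exact (mul_dvd_mul_iff_left hp0).1 h

theorem hlt_eq {p a b : ℕ} (ha : a < p) (hb : b < p) (h : (p:ℤ) ∣ (a:ℤ) - b) : a = b := by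
  have h1 : (a:ℤ) - b = 0 := by
    apply Int.eq_zero_of_abs_lt_dvd h
    rw [abs_lt]; omega
  omega

abbrev HI (p : ℕ) := (Fin p × Fin p) ⊕ Fin (p-1) ⊕ (Fin p × Fin p)

def hF (p : ℕ) : HI p → AddSubgroup (HB p)
  | .inl (t, e) => hA1 p t e
  | .inr (.inl s) => hA2 p (s+1)
  | .inr (.inr (a, c)) => hBB p a c

theorem hF_good (p : ℕ) (hp : p.Prime) (i : HI p) : hGood p (hF p i) := by
  rcases i with ⟨t, e⟩ | s | ⟨a, c⟩
  · exact hA1_good p hp _ _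
  · apply hA2_good p hp
    intro h
    have := Nat.le_of_dvd (by omega) h
    have := s.2
    omega
  · exact hBB_good p hp _ _

theorem hA1_mem (p t e : ℕ) (x y z : ℤ) : hT p x y z ∈ hA1 p t e ↔
    (p:ℤ)^2 ∣ x + p*t*y ∧ (p:ℤ) ∣ e*y+z := by
  rw [hA1, hK_mem]; ring_nf
theorem hA2_mem (p s : ℕ) (x y z : ℤ) : hT p x y z ∈ hA2 p s ↔
    (p:ℤ)^2 ∣ x + p*s*z ∧ (p:ℤ) ∣ y := by
  rw [hA2, hK_mem]; ring_nf
theorem hBB_mem (p a c : ℕ) (x y z : ℤ) : hT p x y z ∈ hBB p a c ↔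
    (p:ℤ)^2 ∣ a*x+y + p*c*z ∧ (p:ℤ) ∣ x := by
  rw [hBB, hK_mem]; ring_nf

theorem hF_inj (p : ℕ) (hp : p.Prime) : Function.Injective (hF p) := by
  have hp0 : (p:ℤ) ≠ 0 := by exact_mod_cast hp.ne_zero
  have hp1 : ¬ (p:ℤ) ∣ 1 := by
    intro h; have := Int.natCast_dvd_natCast.1 (by simpa using h : (p:ℤ) ∣ (1:ℕ))
    exact hp.one_lt.ne' (Nat.dvd_one.1 this)
  have k1 : ∀ t e : ℕ, hT p (-p*t) 1 (-e) ∈ hA1 p t e := by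
    intro t e; rw [hA1_mem]; ring_nf; simp
  have k2 : ∀ s : ℕ, hT p (-p*s) 0 1 ∈ hA2 p s := by
    intro s; rw [hA2_mem]; ring_nf; simp
  have k2' : ∀ s : ℕ, hT p 0 p 0 ∈ hA2 p s := by
    intro s; rw [hA2_mem]; simp
  have k3 : ∀ a c : ℕ, hT p p (-a*p) 0 ∈ hBB p a c := by
    intro s; simp only [hBB_mem]; ring_nf; simp
  have k3' : ∀ a c : ℕ, hT p 0 (-p*c) 1 ∈ hBB p a c := by
    intro s; simp only [hBB_mem]; ring_nf; simp
  have n12 : ∀ t e s : ℕ, hA1 p t e ≠ hA2 p s := by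
    intro t e s h
    have := k1 t e
    rw [h, hA2_mem] at this
    exact hp1 this.2
  have n13 : ∀ t e a c : ℕ, hA1 p t e ≠ hBB p a c := by
    intro t e a c h
    have := k1 t e
    rw [h, hBB_mem] at this
    obtain ⟨⟨m, hm⟩, _⟩ := this
    exact hp1 ⟨p*m+a*t+c*e, by linear_combination hm⟩
  have n23 : ∀ s a c : ℕ, hA2 p s ≠ hBB p a c := by
    intro s a c h
    have := k2' s
    rw [h, hBB_mem] at this
    apply hp1
    apply hdvd_of_p2 hp0
    convert this.1 using 1; ring
  rintro (⟨t, e⟩ | s | ⟨a, c⟩) (⟨t', e'⟩ | s' | ⟨a', c'⟩) h <;> simp only [hF] at h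
  · have := k1 t e
    rw [h, hA1_mem] at this
    have h1 : (t':ℕ) = t := hlt_eq t'.2 t.2 (hdvd_of_p2 hp0 (by convert this.1 using 1; ring))
    have h2 : (e':ℕ) = e := hlt_eq e'.2 e.2 (by convert this.2 using 1; ring)
    rw [Fin.ext h1, Fin.ext h2]
  · exact (n12 _ _ _ h).elim
  · exact (n13 _ _ _ _ h).elim
  · exact (n12 _ _ _ h.symm).elim
  · have := k2 (s+1)
    rw [h, hA2_mem] at this
    have h1 : (s'+1:ℕ) = s+1 := hlt_eq (by omega) (by omega)
      (hdvd_of_p2 hp0 (by convert this.1 using 1; push_cast; ring))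
    have h2 : s' = s := Fin.ext (by omega)
    rw [h2]
  · exact (n23 _ _ _ h).elim
  · exact (n13 _ _ _ _ h.symm).elim
  · exact (n23 _ _ _ h.symm).elim
  · have := k3 a c
    rw [h, hBB_mem] at this
    have h1 : (a':ℕ) = a := hlt_eq a'.2 a.2 (hdvd_of_p2 hp0 (by convert this.1 using 1; ring))
    have := k3' a c
    rw [h, hBB_mem] at this
    have h2 : (c':ℕ) = c := hlt_eq c'.2 c.2 (hdvd_of_p2 hp0 (by convert this.1 using 1; ring))
    rw [Fin.ext h1, Fin.ext h2]

theorem hcard1 (p k : ℕ) (hp : p.Prime) :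
    Nat.card {x : ZMod (p^(k+1)) // p • x = 0} = p := by
  have : NeZero p := ⟨hp.ne_zero⟩
  have h := IsAddCyclic.card_nsmulAddMonoidHom_ker (ZMod (p^(k+1))) p
  rw [Nat.card_zmod, Nat.gcd_eq_right (Dvd.intro_left (p^k) (by ring))] at h
  exact h

theorem hcard3 (p i j k : ℕ) (hp : p.Prime) :
    Nat.card {x : ZMod (p^(i+1)) × ZMod (p^(j+1)) × ZMod (p^(k+1)) // p • x = 0} = p * (p * p) := by
  let E : {x : ZMod (p^(i+1)) × ZMod (p^(j+1)) × ZMod (p^(k+1)) // p • x = 0} ≃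
     {x : ZMod (p^(i+1)) // p • x = 0} × {x : ZMod (p^(j+1)) // p • x = 0} ×
     {x : ZMod (p^(k+1)) // p • x = 0} :=
    { toFun := fun x => (⟨x.1.1, congrArg Prod.fst x.2⟩,
        ⟨x.1.2.1, congrArg (fun y => y.2.1) x.2⟩, ⟨x.1.2.2, congrArg (fun y => y.2.2) x.2⟩)
      invFun := fun x => ⟨(x.1.1, x.2.1.1, x.2.2.1), by
        ext
        · exact x.1.2
        · exact x.2.1.2
        · exact x.2.2.2⟩
      left_inv := fun x => rfl
      right_inv := fun x => rfl }
  rw [Nat.card_congr E, Nat.card_prod, Nat.card_prod, hcard1 _ _ hp, hcard1 _ _ hp, hcard1 _ _ hp]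

theorem htors (p : ℕ) (hp : p.Prime) (U : AddSubgroup (HB p)) (h : U ≃+ HC p) (b : HB p)
    (hb : p • b = 0) : b ∈ U := by
  have : NeZero p := ⟨hp.ne_zero⟩
  have c1 : Nat.card {x : HB p // p • x = 0} = p * (p * p) := hcard3 p 3 2 1 hp
  have c2 : Nat.card {x : HC p // p • x = 0} = p * (p * p) := by
    have := hcard3 p 2 1 0 hp
    rw [show p ^ (0+1) = p by simp] at this
    exact this
  let g : {x : HC p // p • x = 0} → {x : HB p // p • x = 0} := fun x =>
    ⟨(h.symm x.1 : U), by
      have : p • h.symm x.1 = 0 := by rw [← map_nsmul, x.2, map_zero]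
      simpa using congrArg (Subtype.val) this⟩
  have gi : Function.Injective g := by
    intro x y hxy
    have := congrArg Subtype.val hxy
    exact Subtype.ext (h.symm.injective (Subtype.ext this))
  have gb : Function.Bijective g := by
    apply (Nat.bijective_iff_injective_and_card g).2 ⟨gi, by rw [c1, c2]⟩
  obtain ⟨x, hx⟩ := gb.2 ⟨b, hb⟩
  have := congrArg Subtype.val hx
  simp only at this
  rw [← this]
  exact (h.symm x.1).2

/-- Inverse modulo `p ^ 2`. -/
theorem hinv {p : ℕ} (hp : p.Prime) {a : ℤ} (h : ¬ (p:ℤ) ∣ a) :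
    ∃ a' k : ℤ, a' * a = 1 + p^2 * k := by
  have hco : IsCoprime ((p:ℤ)^2) a :=
    IsCoprime.pow_left ((Nat.prime_iff_prime_int.1 hp).coprime_iff_not_dvd.2 h)
  obtain ⟨u, v, huv⟩ := hco
  exact ⟨v, -u, by linear_combination huv⟩

/-- Residue modulo `p`. -/
theorem hres {p : ℕ} (hp : p.Prime) (a : ℤ) : ∃ (i : Fin p) (k : ℤ), a = (i:ℕ) + p * k := by
  have hp0 : (p:ℤ) ≠ 0 := by exact_mod_cast hp.ne_zero
  have hpp : (0:ℤ) < p := by exact_mod_cast hp.pos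
  have h1 := Int.emod_nonneg a hp0
  have h2 := Int.emod_lt_of_pos a hpp
  refine ⟨⟨(a % p).toNat, by omega⟩, a / p, ?_⟩
  have := Int.emod_add_mul_ediv a p
  simp only [Int.toNat_of_nonneg h1]
  linarith

theorem hmain (p : ℕ) (hp : p.Prime) (U : AddSubgroup (HB p)) (a b c d e f : ℤ)
    (hU : ∀ x y z : ℤ, hT p x y z ∈ U ↔ (p:ℤ)^2 ∣ a*x+b*y+c*z ∧ (p:ℤ) ∣ d*x+e*y+f*z)
    (hs : ∀ m n : ℤ, ∃ x y z k l : ℤ, a*x+b*y+c*z = m + p^2*k ∧ d*x+e*y+f*z = n + p*l)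
    (h1 : (p:ℤ) ∣ c) (h2 : ∀ x y z : ℤ, hT p x y z ∈ U → (p:ℤ) ∣ x)
    (h3 : ∃ x y z : ℤ, hT p x y z ∈ U ∧ ¬ ((p:ℤ)^2 ∣ x ∧ (p:ℤ) ∣ y)) :
    ∃ i, hF p i = U := by
  have hp0 : (p:ℤ) ≠ 0 := by exact_mod_cast hp.ne_zero
  have hP : Prime (p:ℤ) := Nat.prime_iff_prime_int.1 hp
  have hp1 : ¬ (p:ℤ) ∣ 1 := hP.not_dvd_one
  have red : ∀ i, (∀ x y z : ℤ, hT p x y z ∈ hF p i ↔ hT p x y z ∈ U) → ∃ i, hF p i = U := by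
    intro i h
    refine ⟨i, ?_⟩
    ext w
    obtain ⟨x, y, z, rfl⟩ := hT_surj p w
    exact h x y z
  obtain ⟨c, rfl⟩ := h1
  by_cases hb : (p:ℤ) ∣ b
  · obtain ⟨b, rfl⟩ := hb
    have ha : ¬ (p:ℤ) ∣ a := by
      rintro ⟨a, rfl⟩
      obtain ⟨x, y, z, k, l, h, -⟩ := hs 1 0
      exact hp1 ⟨a*x+b*y+c*z-p*k, by linear_combination -h⟩
    obtain ⟨a', ka, ha'⟩ := hinv hp ha
    have e1 : ∀ x y z : ℤ, (p:ℤ)^2 ∣ a*x+p*b*y+p*c*z ↔ (p:ℤ)^2 ∣ x + p*(a'*b)*y+p*(a'*c)*z := by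
      intro x y z
      constructor
      · rintro ⟨m, hm⟩
        exact ⟨a'*m - ka*x, by linear_combination a'*hm - x*ha'⟩
      · rintro ⟨m, hm⟩
        exact ⟨a*m - ka*(p*b*y+p*c*z), by linear_combination a*hm - (p*b*y+p*c*z)*ha'⟩
    by_cases hf : (p:ℤ) ∣ f
    · obtain ⟨f, rfl⟩ := hf
      have e2 : ∀ x y z : ℤ, (p:ℤ)^2 ∣ a*x+p*b*y+p*c*z → (p:ℤ) ∣ d*x+e*y+p*f*z → (p:ℤ) ∣ e*y := by
        intro x y z hh
        rw [e1] at hh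
        obtain ⟨m, hm⟩ := hh
        rintro ⟨n, hn⟩
        exact ⟨n-f*z-d*(p*m-(a'*b)*y-(a'*c)*z), by linear_combination hn-d*hm⟩
      have he : ¬ (p:ℤ) ∣ e := by
        rintro ⟨e, rfl⟩
        obtain ⟨x, y, z, k, l, h, h'⟩ := hs 0 1
        have : (p:ℤ)^2 ∣ a*x+p*b*y+p*c*z := ⟨k, by linear_combination h⟩
        rw [e1] at this
        obtain ⟨m, hm⟩ := this
        exact hp1 ⟨d*(p*m-(a'*b)*y-(a'*c)*z)+e*y+f*z-l, by linear_combination -h'+d*hm⟩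
      obtain ⟨s, k, hk⟩ := hres hp (a'*c)
      have key : ∀ x y z : ℤ, hT p x y z ∈ U ↔ (p:ℤ)^2 ∣ x + p*(s:ℕ)*z ∧ (p:ℤ) ∣ y := by
        intro x y z
        rw [hU]
        constructor
        · rintro ⟨g1, g2⟩
          obtain ⟨y, rfl⟩ := (hP.dvd_or_dvd (e2 x y z g1 g2)).resolve_left he
          rw [e1] at g1
          obtain ⟨m, hm⟩ := g1
          exact ⟨⟨m - a'*b*y-k*z, by linear_combination hm - p*z*hk⟩, dvd_mul_right _ _⟩
        · rintro ⟨⟨m, hm⟩, ⟨y, rfl⟩⟩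
          rw [e1]
          refine ⟨⟨m + a'*b*y+k*z, by linear_combination hm + p*z*hk⟩, ?_⟩
          exact ⟨d*(p*m-(s:ℕ)*z)+e*y+f*z, by linear_combination d*hm⟩
      have hs0 : (s:ℕ) ≠ 0 := by
        intro h0
        obtain ⟨x, y, z, hm, hn⟩ := h3
        rw [key, h0] at hm
        apply hn
        simpa using hm
      have hlt := s.2
      apply red (.inr (.inl ⟨(s:ℕ)-1, by omega⟩))
      intro x y z
      simp only [hF]
      rw [hA2_mem, key, show (s:ℕ)-1+1 = s by omega]
    · obtain ⟨f', kf, hf'⟩ := hinv hp hf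
      obtain ⟨e0, k, hk⟩ := hres hp (f'*e)
      obtain ⟨t, l, hl⟩ := hres hp (a'*b-a'*c*(e0:ℕ))
      apply red (.inl (t, e0))
      intro x y z
      simp only [hF]
      rw [hA1_mem, hU, e1]
      constructor
      · rintro ⟨⟨m, hm⟩, ⟨n, hn⟩⟩
        refine ⟨⟨m + a'*c*n + l*y, by linear_combination hm + p*a'*c*hn + p*y*hl⟩, ?_⟩
        exact ⟨d*(p*m-(t:ℕ)*y) + f*n + e*y*(-p*kf) + f*k*y, by
          linear_combination d*hm + f*hn + f*y*hk - e*y*hf'⟩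
      · rintro ⟨⟨m, hm⟩, ⟨n, hn⟩⟩
        have : (p:ℤ) ∣ (e0:ℕ)*y+z :=
          ⟨f'*n - f'*d*(p*m-a'*b*y-a'*c*z) - k*y - p*kf*z, by
            linear_combination f'*hn - f'*d*hm - y*hk - z*hf'⟩
        refine ⟨?_, this⟩
        obtain ⟨r, hr⟩ := this
        exact ⟨m - a'*c*r - l*y, by linear_combination hm - p*a'*c*hr - p*y*hl⟩
  · obtain ⟨b', kb, hb'⟩ := hinv hp hb
    have e1 : ∀ x y z : ℤ, (p:ℤ)^2 ∣ a*x+b*y+p*c*z ↔ (p:ℤ)^2 ∣ (b'*a)*x + y+p*(b'*c)*z := by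
      intro x y z
      constructor
      · rintro ⟨m, hm⟩
        exact ⟨b'*m - kb*y, by linear_combination b'*hm - y*hb'⟩
      · rintro ⟨m, hm⟩
        exact ⟨b*m - kb*(a*x+p*c*z), by linear_combination b*hm - (a*x+p*c*z)*hb'⟩
    have hf : (p:ℤ) ∣ f := by
      by_contra hf
      obtain ⟨f', kf, hf'⟩ := hinv hp hf
      apply hp1
      apply h2 1 (-b'*a-p*b'*c*(-(d-e*b'*a)*f')) (-(d-e*b'*a)*f')
      rw [hU, e1]
      exact ⟨⟨0, by ring⟩, ⟨-(d-e*b'*a)*p*kf - e*b'*c*(-(d-e*b'*a)*f'), by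
        linear_combination -(d-e*b'*a)*hf'⟩⟩
    obtain ⟨f, rfl⟩ := hf
    have hd : ¬ (p:ℤ) ∣ d - e*b'*a := by
      rintro ⟨g, hg⟩
      obtain ⟨x, y, z, k, l, h, h'⟩ := hs 0 1
      have : (p:ℤ)^2 ∣ a*x+b*y+p*c*z := ⟨k, by linear_combination h⟩
      rw [e1] at this
      obtain ⟨m, hm⟩ := this
      exact hp1 ⟨g*x+e*(p*m-b'*c*z)+f*z-l, by linear_combination -h'+x*hg+e*hm⟩
    obtain ⟨a0, k, hk⟩ := hres hp (b'*a)
    obtain ⟨c0, l, hl⟩ := hres hp (b'*c)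
    apply red (.inr (.inr (a0, c0)))
    intro x y z
    simp only [hF]
    rw [hBB_mem, hU, e1]
    constructor
    · rintro ⟨⟨m, hm⟩, ⟨x, rfl⟩⟩
      refine ⟨⟨m + k*x + l*z, by linear_combination hm + p*x*hk+p*z*hl⟩, ?_⟩
      exact ⟨d*x+e*(p*m-a0*x-c0*z)+f*z, by linear_combination e*hm⟩
    · rintro ⟨⟨m, hm⟩, ⟨n, hn⟩⟩
      have : (p:ℤ) ∣ (d-e*b'*a)*x :=
        ⟨n - f*z - e*(p*m-b'*c*z), by linear_combination hn - e*hm⟩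
      obtain ⟨x, rfl⟩ := (hP.dvd_or_dvd this).resolve_left hd
      exact ⟨⟨m-k*x-l*z, by linear_combination hm - p*x*hk - p*z*hl⟩, dvd_mul_right _ _⟩

theorem hF_surj (p : ℕ) (hp : p.Prime) (U : AddSubgroup (HB p)) (h : hGood p U) :
    ∃ i, hF p i = U := by
  have hp0 : (p:ℤ) ≠ 0 := by exact_mod_cast hp.ne_zero
  obtain ⟨⟨g⟩, ⟨q⟩⟩ := h
  let φ : HB p →+ HQ p := q.toAddMonoidHom.comp (QuotientAddGroup.mk' U)
  have hφ : ∀ w, φ w = 0 ↔ w ∈ U := by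
    intro w
    simp [φ]
  have hsur : Function.Surjective φ := q.surjective.comp (QuotientAddGroup.mk'_surjective U)
  have get : ∀ w : HQ p, ∃ m n : ℤ, w = ((m : ZMod (p^2)), (n : ZMod p)) := by
    rintro ⟨m, n⟩
    obtain ⟨m, rfl⟩ := ZMod.intCast_surjective m
    obtain ⟨n, rfl⟩ := ZMod.intCast_surjective n
    exact ⟨m, n, rfl⟩
  obtain ⟨a, d, h1⟩ := get (φ (hT p 1 0 0))
  obtain ⟨b, e, h2⟩ := get (φ (hT p 0 1 0))
  obtain ⟨c, f, h3⟩ := get (φ (hT p 0 0 1))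
  have hφT : ∀ x y z : ℤ, φ (hT p x y z) =
      (((a*x+b*y+c*z : ℤ) : ZMod (p^2)), ((d*x+e*y+f*z : ℤ) : ZMod p)) := by
    intro x y z
    have : hT p x y z = x • hT p 1 0 0 + (y • hT p 0 1 0 + z • hT p 0 0 1) := by
      simp only [hT_smul, hT_add]; ring_nf
    rw [this, map_add, map_add, map_zsmul, map_zsmul, map_zsmul, h1, h2, h3]
    ext <;> simp <;> ring
  have hU : ∀ x y z : ℤ, hT p x y z ∈ U ↔
      (p:ℤ)^2 ∣ a*x+b*y+c*z ∧ (p:ℤ) ∣ d*x+e*y+f*z := by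
    intro x y z
    rw [← hφ, hφT, Prod.mk_eq_zero, ZMod.intCast_zmod_eq_zero_iff_dvd,
      ZMod.intCast_zmod_eq_zero_iff_dvd]
    push_cast
    rfl
  apply hmain p hp U a b c d e f hU
  · intro m n
    obtain ⟨w, hw⟩ := hsur ((m : ZMod (p^2)), (n : ZMod p))
    obtain ⟨x, y, z, rfl⟩ := hT_surj p w
    rw [hφT, Prod.mk.injEq, ZMod.intCast_eq_intCast_iff_dvd_sub,
      ZMod.intCast_eq_intCast_iff_dvd_sub] at hw
    obtain ⟨⟨k, hk⟩, ⟨l, hl⟩⟩ := hw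
    push_cast at hk
    exact ⟨x, y, z, -k, -l, by linear_combination -hk, by linear_combination -hl⟩
  · have : hT p 0 0 p ∈ U := by
      apply htors p hp U g
      have := hT_smul p p 0 0 p
      rw [natCast_zsmul] at this
      rw [this, hT_zero]
      exact ⟨⟨0, by ring⟩, ⟨0, by ring⟩, ⟨1, by ring⟩⟩
    rw [hU] at this
    apply hdvd_of_p2 hp0
    convert this.1 using 1; ring
  · intro x y z hm
    have h0 : ((p:ℤ)^3) • (⟨_, hm⟩ : U) = 0 := by
      apply g.injective
      rw [map_zsmul, map_zero]
      generalize g ⟨_, hm⟩ = w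
      obtain ⟨i, j, k⟩ := w
      obtain ⟨i, rfl⟩ := ZMod.intCast_surjective i
      obtain ⟨j, rfl⟩ := ZMod.intCast_surjective j
      obtain ⟨k, rfl⟩ := ZMod.intCast_surjective k
      simp only [Prod.smul_mk, zsmul_eq_mul, Prod.mk_eq_zero, ← Int.cast_mul,
        ZMod.intCast_zmod_eq_zero_iff_dvd]
      push_cast
      exact ⟨⟨i, by ring⟩, ⟨p*j, by ring⟩, ⟨p^2*k, by ring⟩⟩
    have h0 : ((p:ℤ)^3) • hT p x y z = 0 := congrArg Subtype.val h0
    rw [hT_smul, hT_zero] at h0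
    rw [pow_succ (p:ℤ) 3] at h0
    exact (mul_dvd_mul_iff_left (pow_ne_zero 3 hp0)).1 h0.1
  · by_contra hcon
    push Not at hcon
    have h0 : ((p:ℤ)^2) • (g.symm ((1:ℤ), 0, 0)) = 0 := by
      apply Subtype.ext
      have hm := (g.symm ((1:ℤ), 0, 0)).2
      push_cast
      push_cast at hm
      generalize ((g.symm (1, 0, 0) : U) : HB p) = w at *
      obtain ⟨x, y, z, rfl⟩ := hT_surj p w
      obtain ⟨⟨x, rfl⟩, ⟨y, rfl⟩⟩ := hcon x y z hm
      rw [hT_smul, hT_zero]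
      exact ⟨⟨x, by ring⟩, ⟨y, by ring⟩, ⟨z, by ring⟩⟩
    rw [← map_zsmul, map_eq_zero_iff _ g.symm.injective] at h0
    simp only [Prod.smul_mk, zsmul_eq_mul, Prod.mk_eq_zero, ← Int.cast_mul,
        ZMod.intCast_zmod_eq_zero_iff_dvd] at h0
    have h1 := h0.1
    push_cast at h1
    rw [pow_succ (p:ℤ) 2] at h1
    exact (Nat.prime_iff_prime_int.1 hp).not_dvd_one
      ((mul_dvd_mul_iff_left (pow_ne_zero 2 hp0)).1 h1)


/-- The Hall polynomial `g_{(3,2,1),(2,1)}^{(4,3,2)}(p)`: the number of subgroups `U` of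
`B = ℤ/p⁴ × ℤ/p³ × ℤ/p²` with `U ≅ ℤ/p³ × ℤ/p² × ℤ/p` and `B/U ≅ ℤ/p² × ℤ/p`
equals `2p² + p - 1`. -/
theorem stmt_2 (p : ℕ) (hp : p.Prime) :
    Nat.card {U : AddSubgroup (ZMod (p ^ 4) × ZMod (p ^ 3) × ZMod (p ^ 2)) //
        Nonempty (U ≃+ (ZMod (p ^ 3) × ZMod (p ^ 2) × ZMod p)) ∧
        Nonempty ((ZMod (p ^ 4) × ZMod (p ^ 3) × ZMod (p ^ 2)) ⧸ U ≃+
          (ZMod (p ^ 2) × ZMod p))} = 2 * p ^ 2 + p - 1 := by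
  have : Function.Bijective (fun i : HI p => (⟨hF p i, hF_good p hp i⟩ : {U // hGood p U})) := by
    constructor
    · intro i j h
      exact hF_inj p hp (congrArg Subtype.val h)
    · rintro ⟨U, hU⟩
      obtain ⟨i, hi⟩ := hF_surj p hp U hU
      exact ⟨i, Subtype.ext hi⟩
  have h := Nat.card_congr (Equiv.ofBijective _ this)
  have hpos := hp.pos
  have h' : Nat.card (HI p) = 2 * p ^ 2 + p - 1 := by
    simp only [HI, Nat.card_sum, Nat.card_prod, Nat.card_fin]
    rw [← sq]
    omega
  exact h.symm.trans h'
end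

section
/- Let p be a prime and let 1 ≤ r ≤ m−2 be integers. Set B = ℤ/p^mℤ ⊕ ℤ/p^rℤ and let A be the cyclic subgroup of B generated by (p^{m−2}, p^{r−1}). Then the number of group endomorphisms f of B with f(A) ⊆ A equals p^{m+3r−1}. -/
lemma aux_int (p : ℤ) (hp : p ≠ 0) (s t : ℕ) (α β γ δ : ℤ)
    (h : p ^ (t + s + 3) ∣ p ^ (t + 1) * β) :
    (∃ k : ℤ, p ^ (t + s + 3) ∣ (p ^ (t + s + 1) * α + p ^ t * β) - k * p ^ (t + s + 1) ∧
      p ^ (t + 1) ∣ (p ^ (t + s + 1) * γ + p ^ t * δ) - k * p ^ t) ↔ p ∣ α - δ := by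
  have hb : ∃ b, β = p ^ (s + 2) * b := by
    obtain ⟨b, hb⟩ := h
    refine ⟨b, mul_left_cancel₀ (pow_ne_zero (t + 1) hp) ?_⟩
    rw [hb]; ring
  obtain ⟨b, rfl⟩ := hb
  have e1 : ∀ k : ℤ, p ^ (t + s + 3) ∣
      (p ^ (t + s + 1) * α + p ^ t * (p ^ (s + 2) * b)) - k * p ^ (t + s + 1) ↔
      p ^ 2 ∣ α + p * b - k := by
    intro k
    rw [← mul_dvd_mul_iff_left (pow_ne_zero (t + s + 1) hp) (b := p ^ 2)]
    ring_nf
  have e2 : ∀ k : ℤ, p ^ (t + 1) ∣ (p ^ (t + s + 1) * γ + p ^ t * δ) - k * p ^ t ↔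
      p ∣ δ - k := by
    intro k
    rw [← mul_dvd_mul_iff_left (pow_ne_zero t hp) (b := p)]
    rw [show (p ^ (t + s + 1) * γ + p ^ t * δ) - k * p ^ t =
      p ^ (t + 1) * (p ^ s * γ) + p ^ t * (δ - k) by ring, dvd_add_right (dvd_mul_right _ _),
      pow_succ]
  simp only [e1, e2]
  constructor
  · rintro ⟨k, ⟨x, hx⟩, ⟨y, hy⟩⟩
    exact ⟨p * x - b - y, by linear_combination hx - hy⟩
  · rintro ⟨x, hx⟩
    exact ⟨α + p * b, by simp, -x - b, by linear_combination -hx⟩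

def homEquiv (n : ℕ) (G : Type*) [AddCommGroup G] :
    (ZMod n →+ G) ≃ (nsmulAddMonoidHom n : G →+ G).ker :=
  (ZMod.lift n (A := G)).symm.trans
    ((zmultiplesHom G).symm.subtypeEquiv (by
      intro f
      rw [AddMonoidHom.mem_ker]
      simp only [zmultiplesHom_symm_apply, nsmulAddMonoidHom_apply]
      rw [← map_nsmul]; simp))

lemma card_hom (a b : ℕ) [NeZero b] : Nat.card (ZMod a →+ ZMod b) = b.gcd a := by
  rw [Nat.card_congr (homEquiv a (ZMod b)), IsAddCyclic.card_nsmulAddMonoidHom_ker]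
  simp

def homProd (X Y Z W : Type*) [AddCommGroup X] [AddCommGroup Y] [AddCommGroup Z] [AddCommGroup W] :
    (X × Y →+ Z × W) ≃ ((X →+ Z) × (X →+ W)) × ((Y →+ Z) × (Y →+ W)) where
  toFun f := ((((AddMonoidHom.fst Z W).comp f).comp (AddMonoidHom.inl X Y),
    ((AddMonoidHom.snd Z W).comp f).comp (AddMonoidHom.inl X Y)),
    (((AddMonoidHom.fst Z W).comp f).comp (AddMonoidHom.inr X Y),
    ((AddMonoidHom.snd Z W).comp f).comp (AddMonoidHom.inr X Y)))
  invFun q := (q.1.1.prod q.1.2).coprod (q.2.1.prod q.2.2)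
  left_inv f := by
    ext x <;> simp [← Prod.fst_add, ← Prod.snd_add, ← map_add]
  right_inv q := by
    ext x <;> simp

lemma card_end (p m r : ℕ) (hp : p.Prime) (h2 : r ≤ m) :
    Nat.card ((ZMod (p ^ m) × ZMod (p ^ r)) →+ (ZMod (p ^ m) × ZMod (p ^ r))) =
      p ^ (m + 3 * r) := by
  have : NeZero p := ⟨hp.ne_zero⟩
  rw [Nat.card_congr (homProd _ _ _ _)]
  simp only [Nat.card_prod, card_hom, Nat.gcd_self]
  rw [Nat.gcd_eq_left (pow_dvd_pow p h2), Nat.gcd_eq_right (pow_dvd_pow p h2)]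
  ring

lemma aux_mem (p : ℕ) (hp : p.Prime) (s t : ℕ)
    (f : (ZMod (p ^ (t+s+3)) × ZMod (p ^ (t+1))) →+ (ZMod (p ^ (t+s+3)) × ZMod (p ^ (t+1)))) :
    (f ((p : ZMod (p ^ (t+s+3))) ^ (t+s+1), (p : ZMod (p ^ (t+1))) ^ t) ∈
      AddSubgroup.zmultiples ((p : ZMod (p ^ (t+s+3))) ^ (t+s+1), (p : ZMod (p ^ (t+1))) ^ t)) ↔
    ZMod.castHom (dvd_pow_self p (by omega : t+s+3 ≠ 0)) (ZMod p) (f (1, 0)).1 -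
    ZMod.castHom (dvd_pow_self p (by omega : t+1 ≠ 0)) (ZMod p) (f (0, 1)).2 = 0 := by
  have hg : (((p : ZMod (p ^ (t+s+3))) ^ (t+s+1), (p : ZMod (p ^ (t+1))) ^ t) :
      ZMod (p ^ (t+s+3)) × ZMod (p ^ (t+1))) = (p ^ (t+s+1)) • (1, 0) + (p ^ t) • (0, 1) := by
    ext <;> simp
  have hv : (p ^ (t+1)) • f (0, 1) = 0 := by
    rw [← map_nsmul]
    have : (p ^ (t+1)) • ((0, 1) : ZMod (p ^ (t+s+3)) × ZMod (p ^ (t+1))) = 0 := by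
      ext
      · simp
      · simp
    rw [this, map_zero]
  have hf : f ((p : ZMod (p ^ (t+s+3))) ^ (t+s+1), (p : ZMod (p ^ (t+1))) ^ t) =
      (p ^ (t+s+1)) • f (1, 0) + (p ^ t) • f (0, 1) := by
    rw [hg, map_add, map_nsmul, map_nsmul]
  rw [hf]
  generalize f (1, 0) = u at *
  generalize f (0, 1) = v at *
  clear hf hg f
  obtain ⟨a, c⟩ := u
  obtain ⟨b, d⟩ := v
  obtain ⟨α, rfl⟩ := ZMod.intCast_surjective a
  obtain ⟨β, rfl⟩ := ZMod.intCast_surjective b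
  obtain ⟨γ, rfl⟩ := ZMod.intCast_surjective c
  obtain ⟨δ, rfl⟩ := ZMod.intCast_surjective d
  have h : (p : ℤ) ^ (t + s + 3) ∣ (p : ℤ) ^ (t + 1) * β := by
    have := congrArg Prod.fst hv
    have h' : (((p : ℤ) ^ (t + 1) * β : ℤ) : ZMod (p ^ (t+s+3))) = 0 := by
      simpa using this
    rw [ZMod.intCast_zmod_eq_zero_iff_dvd] at h'
    exact_mod_cast h'
  have key := aux_int p (by exact_mod_cast hp.ne_zero) s t α β γ δ h
  have R : (ZMod.castHom (dvd_pow_self p (by omega : t+s+3 ≠ 0)) (ZMod p) (α : ZMod (p ^ (t+s+3))) -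
    ZMod.castHom (dvd_pow_self p (by omega : t+1 ≠ 0)) (ZMod p) (δ : ZMod (p ^ (t+1))) = 0) ↔
    (p : ℤ) ∣ α - δ := by
    rw [map_intCast, map_intCast, ← Int.cast_sub, ZMod.intCast_zmod_eq_zero_iff_dvd]
  refine Iff.trans ?_ (key.trans R.symm)
  rw [AddSubgroup.mem_zmultiples_iff]
  refine exists_congr fun k => ?_
  rw [Prod.ext_iff]
  refine and_congr ?_ ?_
  · have := ZMod.intCast_zmod_eq_zero_iff_dvd
      (((p:ℤ) ^ (t + s + 1) * α + (p:ℤ) ^ t * β) - k * (p:ℤ) ^ (t + s + 1)) (p ^ (t+s+3))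
    rw [Nat.cast_pow] at this
    rw [← this]
    push_cast
    rw [sub_eq_zero, eq_comm]
    simp
  · have := ZMod.intCast_zmod_eq_zero_iff_dvd
      (((p:ℤ) ^ (t + s + 1) * γ + (p:ℤ) ^ t * δ) - k * (p:ℤ) ^ t) (p ^ (t+1))
    rw [Nat.cast_pow] at this
    rw [← this]
    push_cast
    rw [sub_eq_zero, eq_comm]
    simp

def phi (p s t : ℕ) :
    ((ZMod (p ^ (t+s+3)) × ZMod (p ^ (t+1))) →+ (ZMod (p ^ (t+s+3)) × ZMod (p ^ (t+1)))) →+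
      ZMod p where
  toFun f := ZMod.castHom (dvd_pow_self p (by omega : t+s+3 ≠ 0)) (ZMod p) (f (1, 0)).1 -
    ZMod.castHom (dvd_pow_self p (by omega : t+1 ≠ 0)) (ZMod p) (f (0, 1)).2
  map_zero' := by simp
  map_add' f g := by
    simp only [AddMonoidHom.add_apply, Prod.fst_add, Prod.snd_add, map_add]
    ring

lemma phi_surj (p s t : ℕ) : Function.Surjective (phi p s t) := by
  intro x
  obtain ⟨k, rfl⟩ := ZMod.intCast_surjective x
  refine ⟨k • (AddMonoidHom.inl _ _).comp (AddMonoidHom.fst _ _), ?_⟩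
  rw [map_zsmul, zsmul_eq_mul]
  have : phi p s t ((AddMonoidHom.inl _ _).comp (AddMonoidHom.fst _ _)) = 1 := by
    change ZMod.castHom _ (ZMod p) 1 - ZMod.castHom _ (ZMod p) 0 = 1
    rw [map_one, map_zero, sub_zero]
  rw [this, mul_one]

/-- The number of endomorphisms of the bipicket pair `T_2^{m,r}`, i.e. endomorphisms `f` of
`B = ℤ/p^m ⊕ ℤ/p^r` with `f(A) ⊆ A` where `A = ⟨(p^{m-2}, p^{r-1})⟩`, equals
`p^{m+3r-1}`. -/
theorem stmt_3 (p : ℕ) (hp : p.Prime) (m r : ℕ) (h1 : 1 ≤ r) (h2 : r + 2 ≤ m) :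
    Nat.card {f : (ZMod (p ^ m) × ZMod (p ^ r)) →+ (ZMod (p ^ m) × ZMod (p ^ r)) //
        ∀ a ∈ AddSubgroup.zmultiples ((p : ZMod (p ^ m)) ^ (m - 2), (p : ZMod (p ^ r)) ^ (r - 1)),
          f a ∈ AddSubgroup.zmultiples
            ((p : ZMod (p ^ m)) ^ (m - 2), (p : ZMod (p ^ r)) ^ (r - 1))} =
      p ^ (m + 3 * r - 1) := by
  obtain ⟨t, rfl⟩ : ∃ t, r = t + 1 := ⟨r - 1, by omega⟩
  obtain ⟨s, rfl⟩ : ∃ s, m = t + s + 3 := ⟨m - t - 3, by omega⟩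
  have hc := (phi p s t).ker.card_mul_index
  rw [AddSubgroup.index_ker, AddMonoidHom.range_eq_top.2 (phi_surj p s t),
    card_end p _ _ hp (by omega)] at hc
  have hT : Nat.card (⊤ : AddSubgroup (ZMod p)) = p := by simp
  rw [hT] at hc
  apply Nat.eq_of_mul_eq_mul_right hp.pos
  rw [← pow_succ, show t + s + 3 + 3 * (t + 1) - 1 + 1 = t + s + 3 + 3 * (t + 1) by omega, ← hc]
  congr 1
  refine Nat.card_congr (Equiv.subtypeEquivRight fun f => ?_)
  rw [AddMonoidHom.mem_ker]
  refine Iff.trans ?_ (aux_mem p hp s t f)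
  constructor
  · intro h
    exact h _ (AddSubgroup.mem_zmultiples _)
  · rintro h a ha
    obtain ⟨k, rfl⟩ := AddSubgroup.mem_zmultiples_iff.1 ha
    rw [map_zsmul]
    exact AddSubgroup.zsmul_mem _ h k
end

section
/- Let p be a prime and let 1 ≤ r ≤ m−2 be integers. Set B = ℤ/p^mℤ ⊕ ℤ/p^rℤ and let A be the cyclic subgroup of B generated by (p^{m−2}, p^{r−1}). Then the number of group automorphisms φ of B with φ(A) = A equals (p−1)·p^{m+3r−2}. -/
lemma aux_hom (p s t : ℕ) (a c w d : ℤ) :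
    ∃ g : (ZMod (p ^ (s+3+t)) × ZMod (p ^ (s+1))) →+ (ZMod (p ^ (s+3+t)) × ZMod (p ^ (s+1))),
      ∀ x y : ℤ, g ((x : ZMod (p ^ (s+3+t))), (y : ZMod (p ^ (s+1)))) =
        (((a * x + p ^ (t+2) * w * y : ℤ) : ZMod (p ^ (s+3+t))),
          ((c * x + d * y : ℤ) : ZMod (p ^ (s+1)))) := by
  have hz : ((p : ZMod (p ^ (s+3+t))) ^ (s+3+t)) = 0 := by
    have := ZMod.natCast_self (p ^ (s+3+t))
    exact_mod_cast this
  have hz2 : ((p : ZMod (p ^ (s+1))) ^ (s+1)) = 0 := by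
    have := ZMod.natCast_self (p ^ (s+1))
    exact_mod_cast this
  let f1 : ZMod (p ^ (s+3+t)) →+ (ZMod (p ^ (s+3+t)) × ZMod (p ^ (s+1))) :=
    ZMod.lift _ ⟨zmultiplesHom _ ((a : ZMod (p ^ (s+3+t))), (c : ZMod (p ^ (s+1)))), by
      ext
      · simp [hz]
      · simp [show s + 3 + t = (s+1) + (2+t) by ring, pow_add _ (s+1), hz2]⟩
  let f2 : ZMod (p ^ (s+1)) →+ (ZMod (p ^ (s+3+t)) × ZMod (p ^ (s+1))) :=
    ZMod.lift _ ⟨zmultiplesHom _ (((p ^ (t+2) * w : ℤ) : ZMod (p ^ (s+3+t))),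
      (d : ZMod (p ^ (s+1)))), by
      ext
      · simp only [zmultiplesHom_apply, Prod.smul_fst, Prod.fst_zero]
        simp [← mul_assoc, ← pow_add, show s + 1 + (t+2) = s + 3 + t by ring, hz]
      · simp [hz2]⟩
  refine ⟨f1.coprod f2, fun x y => ?_⟩
  simp only [AddMonoidHom.coprod_apply, f1, f2, ZMod.lift_coe, zmultiplesHom_apply]
  ext
  · simp; ring
  · simp; ring

lemma aux_split (p s t : ℕ) (φ : (ZMod (p ^ (s+3+t)) × ZMod (p ^ (s+1))) →+
    (ZMod (p ^ (s+3+t)) × ZMod (p ^ (s+1)))) (x y : ℤ) :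
    φ ((x : ZMod (p ^ (s+3+t))), (y : ZMod (p ^ (s+1)))) = x • φ (1, 0) + y • φ (0, 1) := by
  rw [← map_zsmul, ← map_zsmul, ← map_add]
  congr 1
  ext <;> simp

lemma aux_inj (p : ℕ) (hp : p.Prime) (s t : ℕ) (a c w d : ℤ) (ha : ¬ (p : ℤ) ∣ a)
    (hd : ¬ (p : ℤ) ∣ d)
    (g : (ZMod (p ^ (s+3+t)) × ZMod (p ^ (s+1))) →+ (ZMod (p ^ (s+3+t)) × ZMod (p ^ (s+1))))
    (hg : ∀ x y : ℤ, g ((x : ZMod (p ^ (s+3+t))), (y : ZMod (p ^ (s+1)))) =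
        (((a * x + p ^ (t+2) * w * y : ℤ) : ZMod (p ^ (s+3+t))),
          ((c * x + d * y : ℤ) : ZMod (p ^ (s+1))))) : Function.Injective g := by
  have hpI : Prime (p : ℤ) := Nat.prime_iff_prime_int.mp hp
  rw [injective_iff_map_eq_zero]
  rintro ⟨X, Y⟩ h
  obtain ⟨x, rfl⟩ := ZMod.intCast_surjective X
  obtain ⟨y, rfl⟩ := ZMod.intCast_surjective Y
  rw [hg] at h
  have e1 := congrArg Prod.fst h
  have e2 := congrArg Prod.snd h
  simp only [Prod.fst_zero, Prod.snd_zero] at e1 e2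
  rw [ZMod.intCast_zmod_eq_zero_iff_dvd] at e1 e2
  push_cast at e1 e2
  have e3 : (p : ℤ) ^ (s+3+t) ∣ (d * a - p ^ (t+2) * w * c) * x := by
    obtain ⟨k, hk⟩ := e1
    obtain ⟨l, hl⟩ := e2
    refine ⟨d * k - w * l, ?_⟩
    have : (p : ℤ) ^ (s+3+t) = p ^ (t+2) * p ^ (s+1) := by ring
    rw [this] at hk ⊢
    linear_combination d * hk - p ^ (t+2) * w * hl
  have hx : (p : ℤ) ^ (s+3+t) ∣ x := by
    refine IsCoprime.dvd_of_dvd_mul_left (IsCoprime.pow_left ?_) e3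
    rw [hpI.coprime_iff_not_dvd]
    intro hdv
    have : (p : ℤ) ∣ d * a := by
      have h2 : (p : ℤ) ∣ p ^ (t+2) * w * c :=
        ((dvd_pow_self _ (by omega)).mul_right _).mul_right _
      have := dvd_add hdv h2
      simpa using this
    rcases hpI.dvd_or_dvd this with h | h
    · exact hd h
    · exact ha h
  have hx2 : (p : ℤ) ^ (s+1) ∣ x := (pow_dvd_pow _ (by omega)).trans hx
  have hy : (p : ℤ) ^ (s+1) ∣ y := by
    have : (p : ℤ) ^ (s+1) ∣ d * y := by
      have := dvd_sub e2 (hx2.mul_left c)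
      simpa using this
    refine IsCoprime.dvd_of_dvd_mul_left (IsCoprime.pow_left ?_) this
    rwa [hpI.coprime_iff_not_dvd]
  ext
  · simp only [Prod.fst_zero]
    rw [ZMod.intCast_zmod_eq_zero_iff_dvd]; exact_mod_cast hx
  · simp only [Prod.snd_zero]
    rw [ZMod.intCast_zmod_eq_zero_iff_dvd]; exact_mod_cast hy

lemma aux_gen (p s t : ℕ) :
    ((p : ZMod (p ^ (s+3+t))) ^ (s+1+t), (p : ZMod (p ^ (s+1))) ^ s) =
    ((((p ^ (s+1+t) : ℤ)) : ZMod (p ^ (s+3+t))), (((p ^ s : ℤ)) : ZMod (p ^ (s+1)))) := by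
  simp

lemma aux_exists (p : ℕ) (hp : p.Prime) (s t : ℕ) (a c w d : ℤ) (ha : ¬ (p : ℤ) ∣ a)
    (hd : (p : ℤ) ∣ a - d) :
    ∃ φ : {φ : (ZMod (p ^ (s+3+t)) × ZMod (p ^ (s+1))) ≃+ (ZMod (p ^ (s+3+t)) × ZMod (p ^ (s+1))) //
        (AddSubgroup.zmultiples
            ((p : ZMod (p ^ (s+3+t))) ^ (s+1+t), (p : ZMod (p ^ (s+1))) ^ s)).map
            φ.toAddMonoidHom =
          AddSubgroup.zmultiples
            ((p : ZMod (p ^ (s+3+t))) ^ (s+1+t), (p : ZMod (p ^ (s+1))) ^ s)},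
      ∀ x y : ℤ, φ.1 ((x : ZMod (p ^ (s+3+t))), (y : ZMod (p ^ (s+1)))) =
        (((a * x + p ^ (t+2) * w * y : ℤ) : ZMod (p ^ (s+3+t))),
          ((c * x + d * y : ℤ) : ZMod (p ^ (s+1)))) := by
  have : NeZero p := ⟨hp.ne_zero⟩
  obtain ⟨g, hg⟩ := aux_hom p s t a c w d
  have hd' : ¬ (p : ℤ) ∣ d := fun h => ha (by simpa using dvd_add hd h)
  have hi := aux_inj p hp s t a c w d ha hd' g hg
  refine ⟨⟨AddEquiv.ofBijective g (Finite.injective_iff_bijective.mp hi), ?_⟩, ?_⟩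
  · apply AddSubgroup.eq_of_le_of_card_ge
    · rw [AddMonoidHom.map_zmultiples, AddSubgroup.zmultiples_le, AddSubgroup.mem_zmultiples_iff]
      refine ⟨a + p * w, ?_⟩
      simp only [AddEquiv.toAddMonoidHom_eq_coe, AddMonoidHom.coe_coe, AddEquiv.ofBijective_apply]
      rw [aux_gen, hg]
      ext
      · simp only [Prod.smul_mk, zsmul_eq_mul]
        rw [← Int.cast_mul]
        congr 1
        ring
      · simp only [Prod.smul_mk, zsmul_eq_mul]
        rw [← Int.cast_mul, ← sub_eq_zero, ← Int.cast_sub, ZMod.intCast_zmod_eq_zero_iff_dvd]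
        obtain ⟨k, hk⟩ := hd
        refine ⟨k + w - c * p ^ t, ?_⟩
        push_cast
        linear_combination p ^ s * hk
    · rw [Nat.card_congr (AddSubgroup.equivMapOfInjective _ _
        (AddEquiv.ofBijective g (Finite.injective_iff_bijective.mp hi)).injective).toEquiv]
      exact le_rfl
  · intro x y
    exact hg x y

lemma aux_conv (p : ℕ) (hp : p.Prime) (s t : ℕ)
    (φ : (ZMod (p ^ (s+3+t)) × ZMod (p ^ (s+1))) ≃+ (ZMod (p ^ (s+3+t)) × ZMod (p ^ (s+1))))
    (h : (AddSubgroup.zmultiples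
            ((p : ZMod (p ^ (s+3+t))) ^ (s+1+t), (p : ZMod (p ^ (s+1))) ^ s)).map
            φ.toAddMonoidHom =
          AddSubgroup.zmultiples
            ((p : ZMod (p ^ (s+3+t))) ^ (s+1+t), (p : ZMod (p ^ (s+1))) ^ s)) :
    ∃ a c w d : ℤ, ¬ (p : ℤ) ∣ a ∧ (p : ℤ) ∣ a - d ∧
      φ (1, 0) = ((a : ZMod (p ^ (s+3+t))), (c : ZMod (p ^ (s+1)))) ∧
      φ (0, 1) = (((p ^ (t+2) * w : ℤ) : ZMod (p ^ (s+3+t))), (d : ZMod (p ^ (s+1)))) := by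
  have hp0 : (p : ℤ) ≠ 0 := by exact_mod_cast hp.ne_zero
  obtain ⟨a, ha⟩ := ZMod.intCast_surjective (φ (1, 0)).1
  obtain ⟨c, hc⟩ := ZMod.intCast_surjective (φ (1, 0)).2
  obtain ⟨b, hb⟩ := ZMod.intCast_surjective (φ (0, 1)).1
  obtain ⟨d, hd⟩ := ZMod.intCast_surjective (φ (0, 1)).2
  have h10 : φ (1, 0) = ((a : ZMod (p ^ (s+3+t))), (c : ZMod (p ^ (s+1)))) := by
    rw [ha, hc]
  have h01 : φ (0, 1) = ((b : ZMod (p ^ (s+3+t))), (d : ZMod (p ^ (s+1)))) := by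
    rw [hb, hd]
  have key : ∀ x y : ℤ, φ ((x : ZMod (p ^ (s+3+t))), (y : ZMod (p ^ (s+1)))) =
      (((x * a + y * b : ℤ) : ZMod (p ^ (s+3+t))), ((x * c + y * d : ℤ) : ZMod (p ^ (s+1)))) := by
    intro x y
    have := aux_split p s t φ.toAddMonoidHom x y
    simp only [AddEquiv.toAddMonoidHom_eq_coe, AddMonoidHom.coe_coe] at this
    rw [this, h10, h01]
    ext <;> simp
  have hbw : (p : ℤ) ^ (t+2) ∣ b := by
    have h0 := key 0 (p ^ (s+1))
    have hz : (((0 : ℤ) : ZMod (p ^ (s+3+t))), (((p : ℤ) ^ (s+1) : ℤ) : ZMod (p ^ (s+1)))) = 0 := by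
      ext
      · simp
      · simp only [Prod.snd_zero]
        rw [ZMod.intCast_zmod_eq_zero_iff_dvd]; push_cast; exact dvd_rfl
    rw [hz, map_zero] at h0
    have e := (congrArg Prod.fst h0).symm
    simp only [Prod.fst_zero] at e
    rw [ZMod.intCast_zmod_eq_zero_iff_dvd] at e
    push_cast at e
    have h3 : (p : ℤ) ^ (s+3+t) = p ^ (s+1) * p ^ (t+2) := by ring
    rw [h3, zero_mul, zero_add] at e
    exact (mul_dvd_mul_iff_left (pow_ne_zero _ hp0)).mp e
  obtain ⟨w, rfl⟩ := hbw
  refine ⟨a, c, w, d, ?_, ?_, h10, h01⟩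
  · rintro ⟨k, rfl⟩
    have h0 := key (p ^ (s+2+t)) 0
    have hz : ((((p : ℤ) ^ (s+2+t) * (p * k) + 0 * (p ^ (t+2) * w) : ℤ) : ZMod (p ^ (s+3+t))),
      (((p : ℤ) ^ (s+2+t) * c + 0 * d : ℤ) : ZMod (p ^ (s+1)))) = 0 := by
      ext
      · simp only [Prod.fst_zero]
        rw [ZMod.intCast_zmod_eq_zero_iff_dvd]; push_cast; exact ⟨k, by ring⟩
      · simp only [Prod.snd_zero]
        rw [ZMod.intCast_zmod_eq_zero_iff_dvd]; push_cast; exact ⟨p ^ (1 + t) * c, by ring⟩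
    rw [hz, map_eq_zero_iff φ φ.injective] at h0
    have e := congrArg Prod.fst h0
    simp only [Prod.fst_zero] at e
    rw [ZMod.intCast_zmod_eq_zero_iff_dvd] at e
    have e' : p ^ (s+3+t) ∣ p ^ (s+2+t) := by exact_mod_cast e
    rw [Nat.pow_dvd_pow_iff_le_right hp.one_lt] at e'
    omega
  · have hm : φ ((p : ZMod (p ^ (s+3+t))) ^ (s+1+t), (p : ZMod (p ^ (s+1))) ^ s) ∈
        AddSubgroup.zmultiples
            ((p : ZMod (p ^ (s+3+t))) ^ (s+1+t), (p : ZMod (p ^ (s+1))) ^ s) := by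
      rw [← h]
      exact AddSubgroup.mem_map_of_mem _ (AddSubgroup.mem_zmultiples _)
    rw [AddSubgroup.mem_zmultiples_iff] at hm
    obtain ⟨k, hk⟩ := hm
    rw [aux_gen, key] at hk
    have e1 := congrArg Prod.fst hk
    have e2 := congrArg Prod.snd hk
    simp only [Prod.smul_mk, zsmul_eq_mul] at e1 e2
    rw [← Int.cast_mul, ← sub_eq_zero, ← Int.cast_sub, ZMod.intCast_zmod_eq_zero_iff_dvd] at e1 e2
    push_cast at e1 e2
    obtain ⟨u, hu⟩ := e1
    obtain ⟨v, hv⟩ := e2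
    have f1 : k - (a + p * w) = p ^ 2 * u := by
      apply mul_left_cancel₀ (pow_ne_zero (s+1+t) hp0)
      linear_combination hu
    have f2 : k - (p ^ (1+t) * c + d) = p * v := by
      apply mul_left_cancel₀ (pow_ne_zero s hp0)
      linear_combination hv
    refine ⟨v + p ^ t * c - p * u - w, ?_⟩
    linear_combination f2 - f1

lemma aux_digit (p : ℕ) (hp : p.Prime) (x x' u u' n : ℕ) (hx : x < p - 1) (hx' : x' < p - 1)
    (hu : u < p ^ n) (hu' : u' < p ^ n)
    (h : (((x + 1 + p * u : ℕ) : ℤ) : ZMod (p ^ (n+1))) = (((x' + 1 + p * u' : ℕ) : ℤ) : ZMod (p ^ (n+1)))) :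
    x = x' ∧ u = u' := by
  have hb : ∀ x u, x < p - 1 → u < p ^ n → x + 1 + p * u < p ^ (n+1) := by
    intro x u hx hu
    rw [pow_succ]
    nlinarith [hp.pos, Nat.mul_le_mul_left p (Nat.succ_le_of_lt hu), (by omega : x + 1 < p)]
  rw [Int.cast_natCast, Int.cast_natCast, ZMod.natCast_eq_natCast_iff] at h
  have h' := Nat.ModEq.eq_of_lt_of_lt h (hb _ _ hx hu) (hb _ _ hx' hu')
  have hm := congrArg (· % p) h'
  simp only [Nat.add_mul_mod_self_left] at hm
  rw [Nat.mod_eq_of_lt (by omega), Nat.mod_eq_of_lt (by omega)] at hm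
  have hxx : x = x' := by omega
  subst hxx
  refine ⟨rfl, ?_⟩
  have : p * u = p * u' := by omega
  exact Nat.eq_of_mul_eq_mul_left hp.pos this

lemma aux_repr (p : ℕ) (hp : p.Prime) (n : ℕ) (a : ℤ) (x : ℕ) (hx : (p : ℤ) ∣ a - (x + 1 : ℕ)) :
    ∃ u, u < p ^ n ∧ (((x + 1 + p * u : ℕ) : ℤ) : ZMod (p ^ (n+1))) = (a : ZMod (p ^ (n+1))) := by
  obtain ⟨k, hk⟩ := hx
  have hpos : (0 : ℤ) < (p : ℤ) ^ n := by exact_mod_cast pow_pos hp.pos n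
  have h0 := Int.emod_nonneg k hpos.ne'
  have h1 := Int.emod_lt_of_pos k hpos
  refine ⟨(k % (p ^ n : ℤ)).toNat, ?_, ?_⟩
  · zify
    rw [Int.toNat_of_nonneg h0]; exact h1
  · rw [← sub_eq_zero, ← Int.cast_sub, ZMod.intCast_zmod_eq_zero_iff_dvd]
    push_cast
    rw [Int.toNat_of_nonneg h0]
    refine ⟨- (k / p ^ n), ?_⟩
    push_cast at hk
    have := Int.emod_add_mul_ediv k (p ^ n)
    linear_combination -hk + p * this

lemma aux_main (p : ℕ) (hp : p.Prime) (s t : ℕ) :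
    Nat.card {φ : (ZMod (p ^ (s+3+t)) × ZMod (p ^ (s+1))) ≃+ (ZMod (p ^ (s+3+t)) × ZMod (p ^ (s+1))) //
        (AddSubgroup.zmultiples
            ((p : ZMod (p ^ (s+3+t))) ^ (s+1+t), (p : ZMod (p ^ (s+1))) ^ s)).map
            φ.toAddMonoidHom =
          AddSubgroup.zmultiples
            ((p : ZMod (p ^ (s+3+t))) ^ (s+1+t), (p : ZMod (p ^ (s+1))) ^ s)} =
      (p - 1) * p ^ (4 * s + t + 4) := by
  have hp0 : (p : ℤ) ≠ 0 := by exact_mod_cast hp.ne_zero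
  have ex : ∀ D : Fin (p - 1) × Fin (p ^ (s+2+t)) × Fin (p ^ s) × Fin (p ^ (s+1)) × Fin (p ^ (s+1)),
      _ := fun D => aux_exists p hp s t ((D.1 + 1 + p * D.2.1 : ℕ) : ℤ) (D.2.2.2.1 : ℕ)
        (D.2.2.2.2 : ℕ) ((D.1 + 1 + p * D.2.2.1 : ℕ) : ℤ)
        (by
          intro h
          have h' : p ∣ D.1 + 1 + p * D.2.1 := by exact_mod_cast h
          rw [Nat.dvd_add_left (dvd_mul_right _ _)] at h'
          have := Nat.le_of_dvd (by omega) h'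
          have := D.1.2
          omega)
        ⟨(D.2.1 : ℕ) - (D.2.2.1 : ℕ), by push_cast; ring⟩
  choose F hF using ex
  have hbij : Function.Bijective F := by
    constructor
    · rintro ⟨x, u, v, c, w⟩ ⟨x', u', v', c', w'⟩ hEq
      have h1 := hF (x, u, v, c, w) 1 0
      have h2 := hF (x, u, v, c, w) 0 1
      rw [hEq, hF] at h1 h2
      simp only [Prod.mk.injEq, mul_one, mul_zero, add_zero, zero_add] at h1 h2
      obtain ⟨e1, e2⟩ := h1
      obtain ⟨e3, e4⟩ := h2
      rw [show s + 3 + t = s + 2 + t + 1 by ring] at e1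
      obtain ⟨rx, ru⟩ := aux_digit p hp _ _ _ _ _ x'.2 x.2 u'.2 u.2 e1
      obtain ⟨-, rv⟩ := aux_digit p hp _ _ _ _ _ x'.2 x.2 v'.2 v.2 e4
      have rc : (c' : ℕ) = c := by
        rw [Int.cast_natCast, Int.cast_natCast, ZMod.natCast_eq_natCast_iff] at e2
        exact Nat.ModEq.eq_of_lt_of_lt e2 c'.2 c.2
      have rw' : (w' : ℕ) = w := by
        rw [ZMod.intCast_eq_intCast_iff_dvd_sub] at e3
        have h3 : ((p ^ (s+3+t) : ℕ) : ℤ) = p ^ (t+2) * (p ^ (s+1) : ℕ) := by push_cast; ring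
        rw [h3, ← mul_sub] at e3
        have e5 := (mul_dvd_mul_iff_left (pow_ne_zero _ hp0)).mp e3
        have e6 := (Nat.modEq_iff_dvd).mpr e5
        exact Nat.ModEq.eq_of_lt_of_lt e6 w'.2 w.2
      simp only [Prod.mk.injEq, Fin.ext_iff]
      exact ⟨rx.symm, ru.symm, rv.symm, rc.symm, rw'.symm⟩
    · rintro ⟨φ, hφ⟩
      obtain ⟨a, c, w, d, hna, had, h10, h01⟩ := aux_conv p hp s t φ hφ
      have hpp : (0 : ℤ) < p := by exact_mod_cast hp.pos
      have g0 := Int.emod_nonneg a hp0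
      have g1 := Int.emod_lt_of_pos a hpp
      have g2 : a % p ≠ 0 := fun h => hna (Int.dvd_of_emod_eq_zero h)
      obtain ⟨x, hx⟩ : ∃ x : ℕ, a % p = (x + 1 : ℕ) := ⟨(a % p).toNat - 1, by omega⟩
      have hxa : (p : ℤ) ∣ a - (x + 1 : ℕ) := by rw [← hx]; exact Int.dvd_self_sub_emod
      have hxd : (p : ℤ) ∣ d - (x + 1 : ℕ) := by
        have := dvd_sub hxa had
        rwa [show a - ((x + 1 : ℕ) : ℤ) - (a - d) = d - ((x + 1 : ℕ) : ℤ) by ring] at this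
      obtain ⟨u, hu, hua⟩ := aux_repr p hp (s+2+t) a x hxa
      obtain ⟨v, hv, hvd⟩ := aux_repr p hp s d x hxd
      rw [show s + 2 + t + 1 = s + 3 + t by ring] at hua
      have red : ∀ c : ℤ, ∃ n : ℕ, n < p ^ (s+1) ∧ ((p ^ (s+1) : ℕ) : ℤ) ∣ n - c := by
        intro c
        have hpos : (0 : ℤ) < ((p ^ (s+1) : ℕ) : ℤ) := by exact_mod_cast pow_pos hp.pos _
        have h0 := Int.emod_nonneg c hpos.ne'
        have h1 := Int.emod_lt_of_pos c hpos
        refine ⟨(c % ((p ^ (s+1) : ℕ) : ℤ)).toNat, by omega, ?_⟩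
        rw [Int.toNat_of_nonneg h0, ← dvd_neg, neg_sub]
        exact Int.dvd_self_sub_emod
      obtain ⟨c', hc', hcc⟩ := red c
      obtain ⟨w', hw', hww⟩ := red w
      refine ⟨(⟨x, by omega⟩, ⟨u, hu⟩, ⟨v, hv⟩, ⟨c', hc'⟩, ⟨w', hw'⟩), ?_⟩
      apply Subtype.ext
      apply AddEquiv.ext
      rintro ⟨X, Y⟩
      obtain ⟨X, rfl⟩ := ZMod.intCast_surjective X
      obtain ⟨Y, rfl⟩ := ZMod.intCast_surjective Y
      rw [hF]
      have := aux_split p s t φ.toAddMonoidHom X Y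
      simp only [AddEquiv.toAddMonoidHom_eq_coe, AddMonoidHom.coe_coe] at this
      simp only
      rw [this, h10, h01]
      have cc : ((c' : ℤ) : ZMod (p ^ (s+1))) = c := by
        rw [← sub_eq_zero, ← Int.cast_sub, ZMod.intCast_zmod_eq_zero_iff_dvd]; exact hcc
      have ww : ((p ^ (t+2) * (w' : ℤ) : ℤ) : ZMod (p ^ (s+3+t))) = (p ^ (t+2) * w : ℤ) := by
        rw [← sub_eq_zero, ← Int.cast_sub, ZMod.intCast_zmod_eq_zero_iff_dvd, ← mul_sub]
        have h3 : ((p ^ (s+3+t) : ℕ) : ℤ) = p ^ (t+2) * (p ^ (s+1) : ℕ) := by push_cast; ring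
        rw [h3]
        exact mul_dvd_mul_left _ hww
      ext
      · simp only [Prod.smul_mk, zsmul_eq_mul, Prod.mk_add_mk]
        rw [Int.cast_add, Int.cast_mul _ X, Int.cast_mul _ Y, hua, ww]
        ring
      · simp only [Prod.smul_mk, zsmul_eq_mul, Prod.mk_add_mk]
        rw [Int.cast_add, Int.cast_mul _ X, Int.cast_mul _ Y, hvd, cc]
        ring
  rw [← Nat.card_eq_of_bijective F hbij]
  simp only [Nat.card_prod, Nat.card_fin]
  rw [← pow_add, ← pow_add, ← pow_add]
  congr 2
  ring


/-- The number of automorphisms of the bipicket pair `T_2^{m,r}`, i.e. automorphisms `φ` of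
`B = ℤ/p^m ⊕ ℤ/p^r` with `φ(A) = A` where `A = ⟨(p^{m-2}, p^{r-1})⟩`, equals
`(p-1)·p^{m+3r-2}`. -/
theorem stmt_4 (p : ℕ) (hp : p.Prime) (m r : ℕ) (h1 : 1 ≤ r) (h2 : r + 2 ≤ m) :
    Nat.card {φ : (ZMod (p ^ m) × ZMod (p ^ r)) ≃+ (ZMod (p ^ m) × ZMod (p ^ r)) //
        (AddSubgroup.zmultiples
            ((p : ZMod (p ^ m)) ^ (m - 2), (p : ZMod (p ^ r)) ^ (r - 1))).map
            φ.toAddMonoidHom =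
          AddSubgroup.zmultiples
            ((p : ZMod (p ^ m)) ^ (m - 2), (p : ZMod (p ^ r)) ^ (r - 1))} =
      (p - 1) * p ^ (m + 3 * r - 2) := by
  obtain ⟨s, rfl⟩ : ∃ s, r = s + 1 := ⟨r - 1, by omega⟩
  obtain ⟨t, rfl⟩ : ∃ t, m = s + 3 + t := ⟨m - (s + 3), by omega⟩
  have := aux_main p hp s t
  rw [show s + 3 + t - 2 = s + 1 + t by omega, show s + 1 - 1 = s by omega,
    show s + 3 + t + 3 * (s + 1) - 2 = 4 * s + t + 4 by omega]
  exact this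
end

section
/- Let p be a prime and let 0 ≤ u ≤ v and 0 ≤ ℓ ≤ m be integers. Then the number of group homomorphisms f : ℤ/p^vℤ → ℤ/p^mℤ with f(p^{v−u}(ℤ/p^vℤ)) ⊆ p^{m−ℓ}(ℤ/p^mℤ) equals p^{min{m, v − max{0, u−ℓ}}}. -/
theorem aux_mem_s5 (p : ℕ) (hp : p.Prime) (ℓ m : ℕ) (hlm : ℓ ≤ m) (y : ZMod (p ^ m)) :
    y ∈ AddSubgroup.zmultiples ((p : ZMod (p ^ m)) ^ (m - ℓ)) ↔ (p ^ ℓ : ℕ) • y = 0 := by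
  have h0 : ((p : ZMod (p ^ m)) ^ m) = 0 := by
    exact_mod_cast ZMod.natCast_self (p ^ m)
  rw [AddSubgroup.mem_zmultiples_iff]
  constructor
  · rintro ⟨k, rfl⟩
    rw [nsmul_eq_mul, zsmul_eq_mul]
    push_cast
    rw [mul_left_comm, ← pow_add, Nat.add_sub_cancel' hlm, h0, mul_zero]
  · intro h
    obtain ⟨z, rfl⟩ := ZMod.intCast_surjective y
    have h2 : (((p ^ ℓ : ℕ) * z : ℤ) : ZMod (p ^ m)) = 0 := by
      rw [← h, nsmul_eq_mul]; push_cast; rfl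
    rw [ZMod.intCast_zmod_eq_zero_iff_dvd] at h2
    have h3 : ((p ^ m : ℕ) : ℤ) = (p ^ ℓ : ℕ) * (p : ℤ) ^ (m - ℓ) := by
      push_cast; rw [← pow_add, Nat.add_sub_cancel' hlm]
    rw [h3] at h2
    have h4 := Int.dvd_of_mul_dvd_mul_left (by
      have := hp.pos
      positivity) h2
    obtain ⟨k, rfl⟩ := h4
    refine ⟨k, ?_⟩
    rw [zsmul_eq_mul]; push_cast; ring

theorem aux_iff (p v m : ℕ) (u ℓ : ℕ) (hp : p.Prime) (huv : u ≤ v) (hlm : ℓ ≤ m)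
    (f : ZMod (p ^ v) →+ ZMod (p ^ m)) :
    (∀ a ∈ AddSubgroup.zmultiples ((p : ZMod (p ^ v)) ^ (v - u)),
          f a ∈ AddSubgroup.zmultiples ((p : ZMod (p ^ m)) ^ (m - ℓ))) ↔
      (p ^ (v - (u - ℓ))) • f 1 = 0 := by
  have hv : (p ^ v) • f 1 = 0 := by
    rw [← map_nsmul, nsmul_eq_mul, ZMod.natCast_self, zero_mul, map_zero]
  have h1 : (∀ a ∈ AddSubgroup.zmultiples ((p : ZMod (p ^ v)) ^ (v - u)),
          f a ∈ AddSubgroup.zmultiples ((p : ZMod (p ^ m)) ^ (m - ℓ))) ↔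
      (p ^ (ℓ + (v - u))) • f 1 = 0 := by
    have h2 : f ((p : ZMod (p ^ v)) ^ (v - u)) = (p ^ (v - u)) • f 1 := by
      rw [← map_nsmul, nsmul_eq_mul, mul_one]; push_cast; rfl
    rw [pow_add, mul_smul, ← h2, ← aux_mem_s5 p hp ℓ m hlm]
    constructor
    · intro h; exact h _ (AddSubgroup.mem_zmultiples _)
    · rintro h a ⟨k, rfl⟩
      simp only [map_zsmul]
      exact AddSubgroup.zsmul_mem _ h k
  rw [h1]
  rcases le_total ℓ u with h | h
  · rw [show ℓ + (v - u) = v - (u - ℓ) by omega]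
  · rw [Nat.sub_eq_zero_of_le h, Nat.sub_zero]
    refine ⟨fun _ => hv, fun _ => ?_⟩
    rw [show ℓ + (v - u) = (ℓ - u) + v by omega, pow_add, mul_smul, hv, smul_zero]

theorem aux_card (p m e : ℕ) (hp : p.Prime) :
    Nat.card {x : ZMod (p ^ m) // (p ^ e) • x = 0} = p ^ min m e := by
  have : NeZero (p ^ m) := ⟨pow_ne_zero _ hp.ne_zero⟩
  have h := IsAddCyclic.card_nsmulAddMonoidHom_ker (ZMod (p ^ m)) (p ^ e)
  rw [Nat.card_zmod] at h
  have hg : (p ^ m).gcd (p ^ e) = p ^ min m e := by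
    rcases le_total m e with h | h
    · rw [min_eq_left h, Nat.gcd_eq_left (pow_dvd_pow p h)]
    · rw [min_eq_right h, Nat.gcd_eq_right (pow_dvd_pow p h)]
  rw [← hg, ← h]
  rfl

/-- The number of morphisms of pairs from the picket `P_u^v` to the picket `P_ℓ^m`, i.e.
homomorphisms `f : ℤ/p^v → ℤ/p^m` with `f(p^{v-u}(ℤ/p^v)) ⊆ p^{m-ℓ}(ℤ/p^m)`, equals
`p^{min{m, v - max{0, u-ℓ}}}`. -/
theorem stmt_5 (p : ℕ) (hp : p.Prime) (u v ℓ m : ℕ) (huv : u ≤ v) (hlm : ℓ ≤ m) :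
    Nat.card {f : ZMod (p ^ v) →+ ZMod (p ^ m) //
        ∀ a ∈ AddSubgroup.zmultiples ((p : ZMod (p ^ v)) ^ (v - u)),
          f a ∈ AddSubgroup.zmultiples ((p : ZMod (p ^ m)) ^ (m - ℓ))} =
      p ^ min m (v - max 0 (u - ℓ)) := by
  rw [Nat.zero_max, ← aux_card p m _ hp]
  refine Nat.card_congr (Equiv.ofBijective
    (fun f => ⟨f.1 1, (aux_iff p v m u ℓ hp huv hlm f.1).1 f.2⟩) ⟨?_, ?_⟩)
  · rintro ⟨f, hf⟩ ⟨g, hg⟩ h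
    have h1 : f 1 = g 1 := congrArg Subtype.val h
    apply Subtype.ext
    ext a
    obtain ⟨z, rfl⟩ := ZMod.intCast_surjective a
    have h2 : (z : ZMod (p ^ v)) = z • 1 := by simp
    change f z = g z
    rw [h2, map_zsmul, map_zsmul, h1]
  · rintro ⟨x, hx⟩
    have hv : (p ^ v) • x = 0 := by
      rw [show v = (u - ℓ) + (v - (u - ℓ)) by omega, pow_add, mul_smul, hx, smul_zero]
    let F : ZMod (p ^ v) →+ ZMod (p ^ m) := ZMod.lift (p ^ v)
      ⟨zmultiplesHom _ x, by simpa using hv⟩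
    have hF : F 1 = x := by
      have := ZMod.lift_coe (p ^ v) (⟨zmultiplesHom _ x, by simpa using hv⟩ :
        {f : ℤ →+ ZMod (p ^ m) // f (p ^ v : ℕ) = 0}) 1
      simpa [F] using this
    exact ⟨⟨F, (aux_iff p v m u ℓ hp huv hlm F).2 (by rw [hF]; exact hx)⟩, Subtype.ext hF⟩
end

section
/- Let p be a prime and let 0 ≤ u ≤ v and 1 ≤ r ≤ m−2 be integers. Set B = ℤ/p^mℤ ⊕ ℤ/p^rℤ and let A be the cyclic subgroup of B generated by (p^{m−2}, p^{r−1}). Then the number of group homomorphisms f : ℤ/p^vℤ → B with f(p^{v−u}(ℤ/p^vℤ)) ⊆ A equals: p^{min{v,r} + min{v,m}} if u = 0; p^{min{v−1,r} + min{v,m}} if u = 1; and p^{min{v−u+1,r} + min{v−u+1,m}} if u ≥ 2. -/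
def S7mem (p m r w : ℕ) (x : ZMod (p ^ m)) (y : ZMod (p ^ r)) : Prop :=
  ∃ k : ℤ, (k : ZMod (p ^ m)) * (p : ZMod (p ^ m)) ^ (m - 2) = (p : ZMod (p ^ m)) ^ w * x ∧
    (k : ZMod (p ^ r)) * (p : ZMod (p ^ r)) ^ (r - 1) = (p : ZMod (p ^ r)) ^ w * y

lemma s7_self (p n e : ℕ) (h : n ≤ e) : (p : ZMod (p ^ n)) ^ e = 0 := by
  obtain ⟨c, rfl⟩ := Nat.exists_eq_add_of_le h
  have : ((p ^ n : ℕ) : ZMod (p ^ n)) = 0 := ZMod.natCast_self _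
  rw [pow_add]
  push_cast at this
  rw [this, zero_mul]

lemma s7_dvd (p : ℕ) (hp : p.Prime) (n a b : ℕ) (hab : a + b = n) (k : ℤ)
    (h : (k : ZMod (p ^ n)) * (p : ZMod (p ^ n)) ^ a = 0) : (p : ℤ) ^ b ∣ k := by
  have h' : ((k * (p : ℤ) ^ a : ℤ) : ZMod (p ^ n)) = 0 := by push_cast; exact h
  rw [ZMod.intCast_zmod_eq_zero_iff_dvd] at h'
  push_cast at h'
  rw [← hab, pow_add, mul_comm] at h'
  exact Int.dvd_of_mul_dvd_mul_right (by positivity [hp.pos]) h'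

lemma s7_card (p n w : ℕ) (hp : p.Prime) :
    Nat.card {x : ZMod (p ^ n) // (p : ZMod (p ^ n)) ^ w * x = 0} = p ^ min w n := by
  have : NeZero (p ^ n) := ⟨(pow_pos hp.pos n).ne'⟩
  have h := IsAddCyclic.card_nsmulAddMonoidHom_ker (ZMod (p ^ n)) (p ^ w)
  rw [Nat.card_zmod] at h
  have h3 : (p ^ n).gcd (p ^ w) = p ^ min w n := by
    rcases le_total w n with hh | hh
    · rw [min_eq_left hh]; exact Nat.gcd_eq_right (pow_dvd_pow p hh)
    · rw [min_eq_right hh]; exact Nat.gcd_eq_left (pow_dvd_pow p hh)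
  rw [← h3, ← h]
  apply Nat.card_congr
  apply Equiv.subtypeEquivRight
  intro x
  simp [AddMonoidHom.mem_ker, nsmul_eq_mul]

lemma s7_card2 (p m r a b : ℕ) (hp : p.Prime) (h : ZMod (p ^ m) → ZMod (p ^ r)) :
    Nat.card {z : ZMod (p ^ m) × ZMod (p ^ r) //
      (p : ZMod (p ^ m)) ^ a * z.1 = 0 ∧ (p : ZMod (p ^ r)) ^ b * (z.2 - h z.1) = 0}
      = p ^ (min b r + min a m) := by
  rw [pow_add, mul_comm, ← s7_card p m a hp, ← s7_card p r b hp, ← Nat.card_prod]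
  exact Nat.card_congr
    { toFun := fun z => (⟨z.1.1, z.2.1⟩, ⟨z.1.2 - h z.1.1, z.2.2⟩)
      invFun := fun q => ⟨(q.1.1, q.2.1 + h q.1.1), q.1.2, by simpa using q.2.2⟩
      left_inv := fun z => by simp
      right_inv := fun q => by simp }

/-- homs as elements -/
lemma s7_equiv (p u v m r : ℕ) :
    Nat.card {f : ZMod (p ^ v) →+ (ZMod (p ^ m) × ZMod (p ^ r)) //
        ∀ a ∈ AddSubgroup.zmultiples ((p : ZMod (p ^ v)) ^ (v - u)),
          f a ∈ AddSubgroup.zmultiples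
            ((p : ZMod (p ^ m)) ^ (m - 2), (p : ZMod (p ^ r)) ^ (r - 1))} =
    Nat.card {z : ZMod (p ^ m) × ZMod (p ^ r) //
      ((p : ZMod (p ^ m)) ^ v * z.1 = 0 ∧ (p : ZMod (p ^ r)) ^ v * z.2 = 0) ∧
        S7mem p m r (v - u) z.1 z.2} := by
  let e1 : {z : (ZMod (p ^ m) × ZMod (p ^ r)) // ((p : ZMod (p ^ m)) ^ v * z.1 = 0 ∧ (p : ZMod (p ^ r)) ^ v * z.2 = 0)} ≃
      {f : ℤ →+ (ZMod (p ^ m) × ZMod (p ^ r)) // f ((p ^ v : ℕ) : ℤ) = 0} :=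
    (zmultiplesHom (ZMod (p ^ m) × ZMod (p ^ r))).subtypeEquiv (by
      intro z
      rw [zmultiplesHom_apply, natCast_zsmul, Prod.ext_iff, Prod.smul_fst, Prod.smul_snd, nsmul_eq_mul, nsmul_eq_mul]
      simp)
  let e := e1.trans (ZMod.lift (p ^ v))
  have he : ∀ z (k : ℤ), e z (k : ZMod (p ^ v)) = k • z.1 := by
    intro z k
    exact ZMod.lift_coe (p ^ v) (e1 z) k
  symm
  refine Nat.card_congr ((Equiv.subtypeSubtypeEquivSubtypeInter _ _).symm.trans
    (e.subtypeEquiv ?_))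
  intro z
  have hz : e z ((p : ZMod (p ^ v)) ^ (v - u)) = ((p : ℤ) ^ (v - u)) • z.1 := by
    rw [← he]; push_cast; rfl
  have key : e z ((p : ZMod (p ^ v)) ^ (v - u)) ∈ AddSubgroup.zmultiples
            ((p : ZMod (p ^ m)) ^ (m - 2), (p : ZMod (p ^ r)) ^ (r - 1)) ↔
            S7mem p m r (v - u) z.1.1 z.1.2 := by
    rw [hz, AddSubgroup.mem_zmultiples_iff, S7mem]
    apply exists_congr
    intro k
    rw [Prod.ext_iff]
    simp only [Prod.smul_fst, Prod.smul_snd]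
    simp only [zsmul_eq_mul]
    push_cast
    rfl
  rw [← key]
  constructor
  · intro h a ha
    obtain ⟨k, rfl⟩ := AddSubgroup.mem_zmultiples_iff.1 ha
    rw [map_zsmul]
    exact AddSubgroup.zsmul_mem _ h k
  · intro h
    exact h _ (AddSubgroup.mem_zmultiples _)

lemma s7_a (p m r w : ℕ) (hp : p.Prime) (h1 : 1 ≤ r) (h2 : r + 2 ≤ m)
    (x : ZMod (p ^ m)) (y : ZMod (p ^ r)) (h : S7mem p m r w x y)
    (hx : (p : ZMod (p ^ m)) ^ (w + 1) * x = 0) : (p : ZMod (p ^ r)) ^ w * y = 0 := by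
  obtain ⟨k, hk1, hk2⟩ := h
  have : (p : ℤ) ^ 1 ∣ k := by
    apply s7_dvd p hp m (m - 1) 1 (by omega)
    rw [show m - 1 = (m - 2) + 1 by omega, pow_succ, ← mul_assoc, hk1, ← hx]; ring
  obtain ⟨c, rfl⟩ := this
  rw [← hk2]
  push_cast
  have := s7_self p r r le_rfl
  obtain ⟨s, rfl⟩ := Nat.exists_eq_add_of_le' h1
  calc _ = (c : ZMod (p ^ (s + 1))) * (p : ZMod (p ^ (s + 1))) ^ (s + 1) := by
        rw [Nat.add_sub_cancel]; ring
    _ = 0 := by rw [this, mul_zero]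

lemma s7_b (p m r w : ℕ) (hp : p.Prime) (h1 : 1 ≤ r) (h2 : r + 2 ≤ m)
    (x : ZMod (p ^ m)) (y : ZMod (p ^ r)) (h : S7mem p m r w x y)
    (hy : (p : ZMod (p ^ r)) ^ w * y = 0) : (p : ZMod (p ^ m)) ^ (w + 1) * x = 0 := by
  obtain ⟨k, hk1, hk2⟩ := h
  have : (p : ℤ) ^ 1 ∣ k := by
    apply s7_dvd p hp r (r - 1) 1 (by omega)
    rw [hk2, hy]
  obtain ⟨c, rfl⟩ := this
  rw [pow_succ, mul_right_comm, ← hk1]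
  push_cast
  have := s7_self p m m le_rfl
  obtain ⟨s, rfl⟩ := Nat.exists_eq_add_of_le' (show 2 ≤ m by omega)
  calc _ = (c : ZMod (p ^ (s + 2))) * (p : ZMod (p ^ (s + 2))) ^ (s + 2) := by
        rw [Nat.add_sub_cancel]; ring
    _ = 0 := by rw [this, mul_zero]

lemma s7_c (p m r w : ℕ) (hp : p.Prime) (h1 : 1 ≤ r) (h2 : r + 2 ≤ m)
    (x : ZMod (p ^ m)) (y : ZMod (p ^ r))
    (hx : (p : ZMod (p ^ m)) ^ (w + 1) * x = 0)
    (hy : (p : ZMod (p ^ r)) ^ w * y = 0) : S7mem p m r w x y := by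
  obtain ⟨X, rfl⟩ := ZMod.intCast_surjective x
  have : (p : ℤ) ^ (m - 1) ∣ p ^ w * X := by
    apply s7_dvd p hp m 1 (m - 1) (by omega)
    push_cast
    rw [← hx]; ring
  obtain ⟨t, ht⟩ := this
  refine ⟨p * t, ?_, ?_⟩
  · have := congrArg (Int.cast : ℤ → ZMod (p ^ m)) ht
    push_cast at this ⊢
    rw [this, show m - 1 = (m - 2) + 1 by omega]; ring
  · rw [hy]
    have := s7_self p r (r - 1 + 1) (by omega)
    push_cast
    rw [pow_succ] at this
    linear_combination (t : ZMod (p ^ r)) * this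

lemma s7_g (p m r w : ℕ) (h1 : 1 ≤ r) (h2 : r + 2 ≤ m)
    (x : ZMod (p ^ m)) (y : ZMod (p ^ r)) (h : S7mem p m r w x y) (e : ℕ) (he : w + 2 ≤ e) :
    (p : ZMod (p ^ m)) ^ e * x = 0 ∧ (p : ZMod (p ^ r)) ^ e * y = 0 := by
  obtain ⟨k, hk1, hk2⟩ := h
  obtain ⟨c, rfl⟩ := Nat.exists_eq_add_of_le he
  have e1 := s7_self p m (m - 2 + 2) (by omega)
  have e2 := s7_self p r (r - 1 + 2) (by omega)
  rw [pow_add] at e1 e2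
  constructor
  · rw [show w + 2 + c = w + (2 + c) by ring, pow_add, mul_right_comm, ← hk1, pow_add]
    linear_combination (k : ZMod (p ^ m)) * (p : ZMod (p ^ m)) ^ c * e1
  · rw [show w + 2 + c = w + (2 + c) by ring, pow_add, mul_right_comm, ← hk2, pow_add]
    linear_combination (k : ZMod (p ^ r)) * (p : ZMod (p ^ r)) ^ c * e2

lemma s7_f (p m r w : ℕ) (hp : p.Prime) (h2 : r + 2 ≤ m) (hw : w < r) :
    ∃ h : ZMod (p ^ m) → ZMod (p ^ r), ∀ x y, S7mem p m r w x y ↔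
      (p : ZMod (p ^ m)) ^ (w + 2) * x = 0 ∧ (p : ZMod (p ^ r)) ^ w * (y - h x) = 0 := by
  have main : ∀ x : ZMod (p ^ m), ∃ g : ZMod (p ^ r), ∀ y, S7mem p m r w x y ↔
      (p : ZMod (p ^ m)) ^ (w + 2) * x = 0 ∧ (p : ZMod (p ^ r)) ^ w * (y - g) = 0 := by
    intro x
    by_cases hx : (p : ZMod (p ^ m)) ^ (w + 2) * x = 0
    swap
    · refine ⟨0, fun y => ⟨fun h => absurd (s7_g p m r w (by omega) h2 x y h _ le_rfl).1 hx,
        fun h => absurd h.1 hx⟩⟩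
    obtain ⟨X, rfl⟩ := ZMod.intCast_surjective x
    obtain ⟨t, rfl⟩ : (p : ℤ) ^ (m - 2 - w) ∣ X := by
      apply s7_dvd p hp m (w + 2) (m - 2 - w) (by omega)
      rw [← hx]; ring
    have em : (p : ZMod (p ^ m)) ^ (m - 2) = p ^ w * p ^ (m - 2 - w) := by
      rw [← pow_add]; congr 1; omega
    have er : (p : ZMod (p ^ r)) ^ (r - 1) = p ^ w * p ^ (r - 1 - w) := by
      rw [← pow_add]; congr 1; omega
    refine ⟨t * p ^ (r - 1 - w), fun y => ⟨fun ⟨k, hk1, hk2⟩ => ⟨hx, ?_⟩, fun ⟨_, hy⟩ => ⟨t, ?_, ?_⟩⟩⟩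
    · have : (p : ℤ) ^ 2 ∣ k - t := by
        apply s7_dvd p hp m (m - 2) 2 (by omega)
        push_cast at hk1 ⊢
        rw [sub_mul, hk1, em]; ring
      obtain ⟨c, hc⟩ := this
      have hk : k = t + p ^ 2 * c := by linarith
      have e2 := s7_self p r (r - 1 + 1) (by omega)
      rw [pow_succ, er] at e2
      rw [hk, er] at hk2
      push_cast at hk2
      linear_combination -hk2 + (c : ZMod (p ^ r)) * p * e2
    · push_cast; rw [em]; ring
    · rw [er]; linear_combination -hy
  choose h hh using main
  exact ⟨h, hh⟩


/-- The number of morphisms of pairs from the picket `P_u^v` to the bipicket `T_2^{m,r}`,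
i.e. homomorphisms `f : ℤ/p^v → ℤ/p^m ⊕ ℤ/p^r` with
`f(p^{v-u}(ℤ/p^v)) ⊆ ⟨(p^{m-2}, p^{r-1})⟩`. -/
theorem stmt_7 (p : ℕ) (hp : p.Prime) (u v m r : ℕ) (huv : u ≤ v) (h1 : 1 ≤ r)
    (h2 : r + 2 ≤ m) :
    Nat.card {f : ZMod (p ^ v) →+ (ZMod (p ^ m) × ZMod (p ^ r)) //
        ∀ a ∈ AddSubgroup.zmultiples ((p : ZMod (p ^ v)) ^ (v - u)),
          f a ∈ AddSubgroup.zmultiples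
            ((p : ZMod (p ^ m)) ^ (m - 2), (p : ZMod (p ^ r)) ^ (r - 1))} =
      if u = 0 then p ^ (min v r + min v m)
      else if u = 1 then p ^ (min (v - 1) r + min v m)
      else p ^ (min (v - u + 1) r + min (v - u + 1) m) := by
  rw [s7_equiv]
  have fin : ∀ a b (h : ZMod (p ^ m) → ZMod (p ^ r)),
      (∀ x y, (((p : ZMod (p ^ m)) ^ v * x = 0 ∧ (p : ZMod (p ^ r)) ^ v * y = 0) ∧
        S7mem p m r (v - u) x y) ↔
        (p : ZMod (p ^ m)) ^ a * x = 0 ∧ (p : ZMod (p ^ r)) ^ b * (y - h x) = 0) →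
      Nat.card {z : ZMod (p ^ m) × ZMod (p ^ r) //
        ((p : ZMod (p ^ m)) ^ v * z.1 = 0 ∧ (p : ZMod (p ^ r)) ^ v * z.2 = 0) ∧
        S7mem p m r (v - u) z.1 z.2} = p ^ (min b r + min a m) := by
    intro a b h hh
    rw [← s7_card2 p m r a b hp h]
    exact Nat.card_congr (Equiv.subtypeEquivRight fun z => hh z.1 z.2)
  split_ifs with hu0 hu1
  · subst hu0
    refine fin v v (fun _ => 0) fun x y => ?_
    rw [sub_zero]
    refine ⟨fun h => h.1, fun h => ⟨h, 0, ?_, ?_⟩⟩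
    · rw [Nat.sub_zero, h.1]; simp
    · rw [Nat.sub_zero, h.2]; simp
  · subst hu1
    refine fin v (v - 1) (fun _ => 0) fun x y => ?_
    rw [sub_zero]
    have hv : v - 1 + 1 = v := by omega
    refine ⟨fun h => ⟨h.1.1, s7_a p m r (v - 1) hp h1 h2 x y h.2 (by rw [hv]; exact h.1.1)⟩,
      fun h => ⟨⟨h.1, ?_⟩, s7_c p m r (v - 1) hp h1 h2 x y (by rw [hv]; exact h.1) h.2⟩⟩
    rw [← hv, pow_succ, mul_right_comm, h.2, zero_mul]
  · have hg : ∀ x y, S7mem p m r (v - u) x y →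
        ((p : ZMod (p ^ m)) ^ v * x = 0 ∧ (p : ZMod (p ^ r)) ^ v * y = 0) :=
      fun x y h => s7_g p m r (v - u) h1 h2 x y h v (by omega)
    by_cases hw : v - u < r
    · obtain ⟨h, hh⟩ := s7_f p m r (v - u) hp h2 hw
      rw [fin (v - u + 2) (v - u) h fun x y =>
        ⟨fun q => (hh x y).1 q.2, fun q => ⟨hg x y ((hh x y).2 q), (hh x y).2 q⟩⟩]
      congr 1
      omega
    · refine fin (v - u + 1) (v - u + 1) (fun _ => 0) fun x y => ?_
      have hy : ∀ e, r ≤ e → (p : ZMod (p ^ r)) ^ e * y = 0 := fun e he => by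
        rw [s7_self p r e he, zero_mul]
      rw [sub_zero]
      refine ⟨fun h => ⟨s7_b p m r _ hp h1 h2 x y h.2 (hy _ (by omega)), hy _ (by omega)⟩,
        fun h => ?_⟩
      have := s7_c p m r _ hp h1 h2 x y h.1 (hy _ (by omega))
      exact ⟨hg x y this, this⟩
end

section
/- Let p be a prime and let 1 ≤ r ≤ m−2 and 0 ≤ s ≤ r−1 be integers. Set B = ℤ/p^mℤ ⊕ ℤ/p^rℤ and let A be the cyclic subgroup generated by (p^{m−2}, p^{r−1}). Then {b ∈ B : p^s b ∈ A} is the subgroup of B generated by the two elements (p^{m−2−s}, p^{r−1−s}) and (0, p^{r−s}), and this subgroup is isomorphic to ℤ/p^{2+s}ℤ ⊕ ℤ/p^sℤ (where ℤ/p⁰ℤ is the trivial group). -/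
theorem aux_eq (n : ℕ) (a b : ℤ) : ((a : ZMod n) = b) ↔ (n : ℤ) ∣ b - a := by
  rw [ZMod.intCast_eq_intCast_iff, Int.modEq_iff_dvd]

/-- For `0 ≤ s ≤ r-1`, lifting the bipicket `T_2^{m,r}` `s` times: the subgroup
`{b ∈ ℤ/p^m ⊕ ℤ/p^r : p^s b ∈ ⟨(p^{m-2}, p^{r-1})⟩}` is generated by
`(p^{m-2-s}, p^{r-1-s})` and `(0, p^{r-s})`, and is isomorphic to
`ℤ/p^{2+s} ⊕ ℤ/p^s` (with `ℤ/p⁰` the trivial group). -/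
theorem stmt_13 (p : ℕ) (hp : p.Prime) (m r s : ℕ) (h1 : 1 ≤ r) (h2 : r + 2 ≤ m)
    (hs : s + 1 ≤ r)
    (S : AddSubgroup (ZMod (p ^ m) × ZMod (p ^ r)))
    (hS : S = (AddSubgroup.zmultiples
        ((p : ZMod (p ^ m)) ^ (m - 2), (p : ZMod (p ^ r)) ^ (r - 1))).comap
        (AddMonoidHom.mk' (fun b => p ^ s • b) fun x y => smul_add (p ^ s) x y)) :
    S = AddSubgroup.closure
        {((p : ZMod (p ^ m)) ^ (m - 2 - s), (p : ZMod (p ^ r)) ^ (r - 1 - s)),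
         ((0 : ZMod (p ^ m)), (p : ZMod (p ^ r)) ^ (r - s))} ∧
      Nonempty (S ≃+ (ZMod (p ^ (2 + s)) × ZMod (p ^ s))) := by
  obtain ⟨q, rfl⟩ : ∃ q, r = q + s + 1 := ⟨r - s - 1, by omega⟩
  obtain ⟨t, rfl⟩ : ∃ t, m = t + s + 2 := ⟨m - s - 2, by omega⟩
  have e1 : t + s + 2 - 2 - s = t := by omega
  have e2 : q + s + 1 - 1 - s = q := by omega
  have e3 : q + s + 1 - s = q + 1 := by omega
  have e4 : t + s + 2 - 2 = t + s := by omega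
  have e5 : q + s + 1 - 1 = q + s := by omega
  rw [e4, e5] at hS
  rw [e1, e2, e3]
  have hp0 : (p : ℤ) ≠ 0 := by exact_mod_cast hp.ne_zero
  have key : S = AddSubgroup.closure
        {((p : ZMod (p ^ (t + s + 2))) ^ t, (p : ZMod (p ^ (q + s + 1))) ^ q),
         ((0 : ZMod (p ^ (t + s + 2))), (p : ZMod (p ^ (q + s + 1))) ^ (q + 1))} := by
    rw [hS]
    ext ⟨b1, b2⟩
    obtain ⟨b1, rfl⟩ := ZMod.intCast_surjective b1
    obtain ⟨b2, rfl⟩ := ZMod.intCast_surjective b2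
    rw [AddSubgroup.mem_closure_pair, AddSubgroup.mem_comap, AddSubgroup.mem_zmultiples_iff]
    simp only [AddMonoidHom.mk'_apply, Prod.smul_mk, Prod.mk_add_mk, Prod.mk.injEq]
    simp only [zsmul_eq_mul, nsmul_eq_mul, mul_zero, add_zero]
    have c1 : ∀ k : ℤ, ((k : ZMod (p ^ (t + s + 2))) * (p : ZMod (p ^ (t + s + 2))) ^ (t + s) =
        ((p ^ s : ℕ) : ZMod (p ^ (t + s + 2))) * (b1 : ZMod (p ^ (t + s + 2)))) ↔
        ((p : ℤ) ^ (t + 2) ∣ b1 - k * (p : ℤ) ^ t) := by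
      intro k
      have := aux_eq (p ^ (t + s + 2)) (k * (p : ℤ) ^ (t + s)) ((p : ℤ) ^ s * b1)
      push_cast at this ⊢
      rw [this, show (p : ℤ) ^ (t + s + 2) = (p : ℤ) ^ s * (p : ℤ) ^ (t + 2) by ring,
        show (p : ℤ) ^ s * b1 - k * (p : ℤ) ^ (t + s) = (p : ℤ) ^ s * (b1 - k * (p : ℤ) ^ t) by ring,
        mul_dvd_mul_iff_left (pow_ne_zero _ hp0)]
    have c2 : ∀ k : ℤ, ((k : ZMod (p ^ (q + s + 1))) * (p : ZMod (p ^ (q + s + 1))) ^ (q + s) =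
        ((p ^ s : ℕ) : ZMod (p ^ (q + s + 1))) * (b2 : ZMod (p ^ (q + s + 1)))) ↔
        ((p : ℤ) ^ (q + 1) ∣ b2 - k * (p : ℤ) ^ q) := by
      intro k
      have := aux_eq (p ^ (q + s + 1)) (k * (p : ℤ) ^ (q + s)) ((p : ℤ) ^ s * b2)
      push_cast at this ⊢
      rw [this, show (p : ℤ) ^ (q + s + 1) = (p : ℤ) ^ s * (p : ℤ) ^ (q + 1) by ring,
        show (p : ℤ) ^ s * b2 - k * (p : ℤ) ^ (q + s) = (p : ℤ) ^ s * (b2 - k * (p : ℤ) ^ q) by ring,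
        mul_dvd_mul_iff_left (pow_ne_zero _ hp0)]
    simp only [c1, c2]
    constructor
    · rintro ⟨k, ⟨u, hu⟩, ⟨v, hv⟩⟩
      refine ⟨k + (p : ℤ) ^ 2 * u, v - (p : ℤ) * u, ?_, ?_⟩
      · have : b1 = (k + (p : ℤ) ^ 2 * u) * (p : ℤ) ^ t := by linear_combination hu
        rw [this]; push_cast; ring
      · have : b2 = (k + (p : ℤ) ^ 2 * u) * (p : ℤ) ^ q + (v - (p : ℤ) * u) * (p : ℤ) ^ (q + 1) := by
          linear_combination hv
        rw [this]; push_cast; ring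
    · rintro ⟨a, b, h, h'⟩
      have g1 := aux_eq (p ^ (t + s + 2)) (a * (p : ℤ) ^ t) b1
      have g2 := aux_eq (p ^ (q + s + 1)) (a * (p : ℤ) ^ q + b * (p : ℤ) ^ (q + 1)) b2
      push_cast at g1 g2
      obtain ⟨u, hu⟩ := g1.1 h
      obtain ⟨v, hv⟩ := g2.1 h'
      exact ⟨a, ⟨(p : ℤ) ^ s * u, by linear_combination hu⟩,
        ⟨(p : ℤ) ^ s * v + b, by linear_combination hv⟩⟩
  refine ⟨key, ?_⟩
  let x : ZMod (p ^ (t + s + 2)) × ZMod (p ^ (q + s + 1)) :=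
    ((p : ZMod (p ^ (t + s + 2))) ^ t, (p : ZMod (p ^ (q + s + 1))) ^ q)
  let y : ZMod (p ^ (t + s + 2)) × ZMod (p ^ (q + s + 1)) :=
    (0, (p : ZMod (p ^ (q + s + 1))) ^ (q + 1))
  have z1 : (p : ZMod (p ^ (t + s + 2))) ^ (t + s + 2) = 0 := by
    exact_mod_cast ZMod.natCast_self (p ^ (t + s + 2))
  have z2 : (p : ZMod (p ^ (q + s + 1))) ^ (q + s + 1) = 0 := by
    exact_mod_cast ZMod.natCast_self (p ^ (q + s + 1))
  have hx : zmultiplesHom _ x ((p ^ (2 + s) : ℕ) : ℤ) = 0 := by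
    rw [zmultiplesHom_apply]
    ext
    · simp only [x, Prod.smul_mk, zsmul_eq_mul, Prod.fst_zero]
      push_cast
      linear_combination z1
    · simp only [x, Prod.smul_mk, zsmul_eq_mul, Prod.snd_zero]
      push_cast
      linear_combination (p : ZMod (p ^ (q + s + 1))) * z2
  have hy : zmultiplesHom _ y ((p ^ s : ℕ) : ℤ) = 0 := by
    rw [zmultiplesHom_apply]
    ext
    · simp [y]
    · simp only [y, Prod.smul_mk, zsmul_eq_mul, Prod.snd_zero]
      push_cast
      linear_combination z2
  let f : ZMod (p ^ (2 + s)) × ZMod (p ^ s) →+ ZMod (p ^ (t + s + 2)) × ZMod (p ^ (q + s + 1)) :=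
    (ZMod.lift _ ⟨zmultiplesHom _ x, hx⟩).coprod (ZMod.lift _ ⟨zmultiplesHom _ y, hy⟩)
  have hf : ∀ a b : ℤ, f ((a : ZMod (p ^ (2 + s))), (b : ZMod (p ^ s))) = a • x + b • y := by
    intro a b
    simp [f, ZMod.lift_coe]
  have hinj : Function.Injective f := by
    rw [injective_iff_map_eq_zero]
    rintro ⟨a, b⟩ hab
    obtain ⟨a, rfl⟩ := ZMod.intCast_surjective a
    obtain ⟨b, rfl⟩ := ZMod.intCast_surjective b
    rw [hf] at hab
    simp only [x, y, Prod.smul_mk, Prod.mk_add_mk, zsmul_eq_mul, mul_zero, add_zero,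
      Prod.mk_eq_zero] at hab
    obtain ⟨h, h'⟩ := hab
    have g1 := (ZMod.intCast_zmod_eq_zero_iff_dvd (a * (p : ℤ) ^ t) (p ^ (t + s + 2))).1
      (by push_cast; exact h)
    have g2 := (ZMod.intCast_zmod_eq_zero_iff_dvd
      (a * (p : ℤ) ^ q + b * (p : ℤ) ^ (q + 1)) (p ^ (q + s + 1))).1
      (by push_cast; exact h')
    push_cast at g1 g2
    have ha : (p : ℤ) ^ (2 + s) ∣ a := by
      rw [show (p : ℤ) ^ (t + s + 2) = (p : ℤ) ^ (2 + s) * (p : ℤ) ^ t by ring] at g1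
      exact (mul_dvd_mul_iff_right (pow_ne_zero _ hp0)).1 g1
    have hb : (p : ℤ) ^ s ∣ b := by
      obtain ⟨u, hu⟩ := ha
      obtain ⟨v, hv⟩ := g2
      refine ⟨v - p * u, ?_⟩
      apply mul_right_cancel₀ (pow_ne_zero (q + 1) hp0)
      rw [hu] at hv
      linear_combination hv
    rw [Prod.mk_eq_zero]
    exact ⟨(ZMod.intCast_zmod_eq_zero_iff_dvd _ _).2 (by push_cast; exact ha),
      (ZMod.intCast_zmod_eq_zero_iff_dvd _ _).2 (by push_cast; exact hb)⟩
  have hr : f.range = S := by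
    rw [key]
    ext z
    rw [AddSubgroup.mem_closure_pair, AddMonoidHom.mem_range]
    constructor
    · rintro ⟨⟨a, b⟩, rfl⟩
      obtain ⟨a, rfl⟩ := ZMod.intCast_surjective a
      obtain ⟨b, rfl⟩ := ZMod.intCast_surjective b
      exact ⟨a, b, (hf a b).symm⟩
    · rintro ⟨a, b, h⟩
      exact ⟨(a, b), (hf a b).trans h⟩
  rw [← hr]
  exact ⟨(AddMonoidHom.ofInjective hinj).symm⟩
end

section
/- Let p be a prime and let 1 ≤ r ≤ m−2 and s ≥ r be integers. Set B = ℤ/p^mℤ ⊕ ℤ/p^rℤ and let A be the cyclic subgroup generated by (p^{m−2}, p^{r−1}). Then {b ∈ B : p^s b ∈ A} = p^{m−min{1+s, m}}(ℤ/p^mℤ) ⊕ ℤ/p^rℤ. In particular, the lifted pair ({b : p^s b ∈ A} ⊆ B) is the direct sum of the pickets P_{min{1+s,m}}^m and P_r^r. -/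
/-- For `s ≥ r`, lifting the bipicket `T_2^{m,r}` `s` times yields the direct sum of the
pickets `P_{min{1+s,m}}^m` and `P_r^r`:
`{b ∈ ℤ/p^m ⊕ ℤ/p^r : p^s b ∈ ⟨(p^{m-2}, p^{r-1})⟩} = p^{m-min{1+s,m}}(ℤ/p^m) ⊕ ℤ/p^r`. -/
theorem stmt_14 (p : ℕ) (hp : p.Prime) (m r s : ℕ) (h1 : 1 ≤ r) (h2 : r + 2 ≤ m)
    (hs : r ≤ s) :
    (AddSubgroup.zmultiples
        ((p : ZMod (p ^ m)) ^ (m - 2), (p : ZMod (p ^ r)) ^ (r - 1))).comap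
        (AddMonoidHom.mk' (fun b : ZMod (p ^ m) × ZMod (p ^ r) => p ^ s • b)
          fun x y => smul_add (p ^ s) x y) =
      (AddSubgroup.zmultiples ((p : ZMod (p ^ m)) ^ (m - min (1 + s) m))).prod ⊤ := by
  have hp0 : (p : ℤ) ≠ 0 := by exact_mod_cast hp.ne_zero
  have hz : ∀ n a : ℕ, n ≤ a → (p : ZMod (p ^ n)) ^ a = 0 := by
    intro n a h
    have : ((p ^ a : ℕ) : ZMod (p ^ n)) = 0 :=
      (ZMod.natCast_eq_zero_iff _ _).2 (pow_dvd_pow p h)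
    simpa using this
  obtain ⟨e, he⟩ : ∃ e, e = m - min (1 + s) m := ⟨_, rfl⟩
  rw [← he]
  ext ⟨x, y⟩
  simp only [AddSubgroup.mem_comap, AddMonoidHom.mk'_apply, AddSubgroup.mem_prod,
    AddSubgroup.mem_top, and_true, AddSubgroup.mem_zmultiples_iff, Prod.ext_iff, Prod.smul_mk]
  simp only [
    zsmul_eq_mul, nsmul_eq_mul, Nat.cast_pow, hz r s hs, zero_mul]
  constructor
  · rintro ⟨k, hk1, hk2⟩
    obtain ⟨X, rfl⟩ := ZMod.intCast_surjective x
    have hk : (p : ℤ) ∣ k := by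
      have h : ((k * (p : ℤ) ^ (r - 1) : ℤ) : ZMod (p ^ r)) = 0 := by
        push_cast; exact hk2
      rw [ZMod.intCast_zmod_eq_zero_iff_dvd] at h
      push_cast at h
      obtain ⟨q, rfl⟩ : ∃ q, r = q + 1 := ⟨r - 1, by omega⟩
      rw [Nat.add_sub_cancel, pow_succ'] at h
      exact Int.dvd_of_mul_dvd_mul_right (pow_ne_zero q hp0) h
    have hX : (p : ℤ) ^ (m - 1) ∣ p ^ s * X := by
      have h : ((p ^ s * X - k * (p : ℤ) ^ (m - 2) : ℤ) : ZMod (p ^ m)) = 0 := by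
        push_cast; rw [hk1, sub_self]
      rw [ZMod.intCast_zmod_eq_zero_iff_dvd] at h
      push_cast at h
      have h' := (pow_dvd_pow (p : ℤ) (Nat.sub_le m 1)).trans h
      refine (dvd_sub_left ?_).1 h'
      have : m - 1 = (m - 2) + 1 := by omega
      rw [this, pow_succ']
      exact mul_dvd_mul_right hk _
    have hd : (p : ℤ) ^ e ∣ X := by
      by_cases hsm : 1 + s ≤ m
      · have : m - 1 = s + e := by omega
        rw [this, pow_add] at hX
        exact (mul_dvd_mul_iff_left (pow_ne_zero s hp0)).1 hX
      · have : e = 0 := by omega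
        simp [this]
    obtain ⟨j, rfl⟩ := hd
    exact ⟨j, by push_cast; ring⟩
  · rintro ⟨j, rfl⟩
    refine ⟨j * (p : ℤ) ^ (e + s + 2 - m), ?_, ?_⟩
    · have : e + s = (e + s + 2 - m) + (m - 2) := by omega
      push_cast
      rw [mul_assoc, ← pow_add, ← this]
      ring
    · push_cast
      rw [mul_assoc, ← pow_add, hz r _ (by omega), mul_zero]
end

section
/- Let p be a prime. Set B = ℤ/p⁴ℤ ⊕ ℤ/p²ℤ ⊕ ℤ/p³ℤ and let A be the subgroup of B generated by the two elements (p², p, 0) and (0, 0, p²). Then the number of group automorphisms φ of B with φ(A) = A equals (p−1)²·p^{20}. -/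
namespace S15

abbrev B (p : ℕ) := ZMod (p ^ 4) × ZMod (p ^ 2) × ZMod (p ^ 3)

def mk (p : ℕ) (x y z : ℤ) : B p := ((x : ZMod (p ^ 4)), (y : ZMod (p ^ 2)), (z : ZMod (p ^ 3)))

abbrev A (p : ℕ) : AddSubgroup (B p) := AddSubgroup.closure
          {((p : ZMod (p ^ 4)) ^ 2, (p : ZMod (p ^ 2)), (0 : ZMod (p ^ 3))),
           ((0 : ZMod (p ^ 4)), (0 : ZMod (p ^ 2)), (p : ZMod (p ^ 3)) ^ 2)}

lemma mk_surj (p : ℕ) (w : B p) : ∃ x y z, w = mk p x y z := by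
  obtain ⟨x, y, z⟩ := w
  obtain ⟨x, rfl⟩ := ZMod.intCast_surjective x
  obtain ⟨y, rfl⟩ := ZMod.intCast_surjective y
  obtain ⟨z, rfl⟩ := ZMod.intCast_surjective z
  exact ⟨x, y, z, rfl⟩

lemma mk_add (p : ℕ) (x y z x' y' z' : ℤ) :
    mk p x y z + mk p x' y' z' = mk p (x + x') (y + y') (z + z') := by
  simp [mk]

lemma mk_smul (p : ℕ) (n x y z : ℤ) : n • mk p x y z = mk p (n * x) (n * y) (n * z) := by
  simp [mk]

lemma cast_zero_iff (p k : ℕ) (x : ℤ) : (x : ZMod (p ^ k)) = 0 ↔ (p : ℤ) ^ k ∣ x := by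
  rw [ZMod.intCast_zmod_eq_zero_iff_dvd]; push_cast; rfl

lemma mk_eq_zero (p : ℕ) (x y z : ℤ) :
    mk p x y z = 0 ↔ (p : ℤ) ^ 4 ∣ x ∧ (p : ℤ) ^ 2 ∣ y ∧ (p : ℤ) ^ 3 ∣ z := by
  simp only [mk, Prod.mk_eq_zero, cast_zero_iff]

lemma mk_eq (p : ℕ) (x y z x' y' z' : ℤ) :
    mk p x y z = mk p x' y' z' ↔
      (p : ℤ) ^ 4 ∣ x - x' ∧ (p : ℤ) ^ 2 ∣ y - y' ∧ (p : ℤ) ^ 3 ∣ z - z' := by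
  rw [← mk_eq_zero, ← sub_eq_zero]
  simp [mk]

lemma mem_A (p : ℕ) (x y z : ℤ) : mk p x y z ∈ A p ↔ ∃ m n : ℤ,
    (p : ℤ) ^ 4 ∣ m * p ^ 2 - x ∧ (p : ℤ) ^ 2 ∣ m * p - y ∧ (p : ℤ) ^ 3 ∣ n * p ^ 2 - z := by
  have h1 : ((p : ZMod (p ^ 4)) ^ 2, (p : ZMod (p ^ 2)), (0 : ZMod (p ^ 3))) = mk p (p ^ 2) p 0 := by
    simp [mk]
  have h2 : ((0 : ZMod (p ^ 4)), (0 : ZMod (p ^ 2)), (p : ZMod (p ^ 3)) ^ 2) = mk p 0 0 (p ^ 2) := by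
    simp [mk]
  rw [A, h1, h2, AddSubgroup.mem_closure_pair]
  simp only [mk_smul, mk_add, mk_eq, mul_zero, add_zero, zero_add]

lemma hom_apply (p : ℕ) (φ : B p →+ B p) {a b c d e f g h i : ℤ}
    (h1 : φ (mk p 1 0 0) = mk p a b c) (h2 : φ (mk p 0 1 0) = mk p d e f)
    (h3 : φ (mk p 0 0 1) = mk p g h i) (x y z : ℤ) :
    φ (mk p x y z) = mk p (x * a + y * d + z * g) (x * b + y * e + z * h)
      (x * c + y * f + z * i) := by
  have : mk p x y z = x • mk p 1 0 0 + y • mk p 0 1 0 + z • mk p 0 0 1 := by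
    simp only [mk_smul, mk_add, mul_one, mul_zero, add_zero, zero_add]
  rw [this, map_add, map_add, map_zsmul, map_zsmul, map_zsmul, h1, h2, h3]
  simp only [mk_smul, mk_add]

lemma exists_hom (p : ℕ) (v1 v2 v3 : B p) (h1 : (p ^ 4 : ℕ) • v1 = 0) (h2 : (p ^ 2 : ℕ) • v2 = 0)
    (h3 : (p ^ 3 : ℕ) • v3 = 0) : ∃ φ : B p →+ B p, φ (mk p 1 0 0) = v1 ∧ φ (mk p 0 1 0) = v2 ∧
      φ (mk p 0 0 1) = v3 := by
  let f (n : ℕ) (v : B p) (h : n • v = 0) : ZMod n →+ B p :=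
    ZMod.lift n ⟨zmultiplesHom _ v, by simpa using h⟩
  have hf (n : ℕ) (v : B p) (h : n • v = 0) (x : ℤ) : f n v h x = x • v := by
    simp only [f, ZMod.lift_coe]; simp
  refine ⟨(f _ v1 h1).coprod ((f _ v2 h2).coprod (f _ v3 h3)), ?_, ?_, ?_⟩ <;>
  · simp only [AddMonoidHom.coprod_apply, mk, hf]; simp

def Good (p : ℕ) (v : B p × B p × B p) : Prop :=
  IsUnit v.1.1 ∧ p • (v.2.1.2.1 - ZMod.castHom (pow_dvd_pow p (by norm_num : 2 ≤ 4))
    (ZMod (p ^ 2)) v.1.1) = 0 ∧ p ^ 2 • v.2.1.1 = 0 ∧ p ^ 2 • v.2.1.2.2 = 0 ∧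
    p ^ 3 • v.2.2.1 = 0 ∧ IsUnit v.2.2.2.2

lemma unit_iff (p : ℕ) (hp : p.Prime) (k : ℕ) (hk : k ≠ 0) (x : ℤ) :
    IsUnit (x : ZMod (p ^ k)) ↔ ¬ (p : ℤ) ∣ x := by
  rw [ZMod.coe_int_isUnit_iff_isCoprime]
  push_cast
  rw [IsCoprime.pow_left_iff (Nat.pos_of_ne_zero hk),
    (Nat.prime_iff_prime_int.mp hp).coprime_iff_not_dvd]

lemma smul_zero_iff (p : ℕ) (hp : p.Prime) (k l : ℕ) (x : ℤ) :
    p ^ k • (x : ZMod (p ^ (k + l))) = 0 ↔ (p : ℤ) ^ l ∣ x := by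
  have h0 : (p : ℤ) ≠ 0 := by exact_mod_cast hp.ne_zero
  have : p ^ k • (x : ZMod (p ^ (k + l))) = (((p : ℤ) ^ k * x : ℤ) : ZMod (p ^ (k + l))) := by
    simp
  rw [this, cast_zero_iff, pow_add, mul_dvd_mul_iff_left (pow_ne_zero _ h0)]

lemma good_iff (p : ℕ) (hp : p.Prime) (a b c d e f g h i : ℤ) :
    Good p (mk p a b c, mk p d e f, mk p g h i) ↔ ¬ (p : ℤ) ∣ a ∧ (p : ℤ) ∣ e - a ∧
      (p : ℤ) ^ 2 ∣ d ∧ (p : ℤ) ∣ f ∧ (p : ℤ) ∣ g ∧ ¬ (p : ℤ) ∣ i := by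
  have h1 := smul_zero_iff p hp 1 1 (e - a)
  have h2 := smul_zero_iff p hp 2 2 d
  have h3 := smul_zero_iff p hp 2 1 f
  have h4 := smul_zero_iff p hp 3 1 g
  norm_num only [pow_one] at h1 h2 h3 h4
  rw [Good]
  simp only [mk, map_intCast]
  rw [unit_iff p hp 4 (by norm_num), unit_iff p hp 3 (by norm_num), ← Int.cast_sub, h1, h2, h3, h4]

lemma card_tor (p : ℕ) (hp : p.Prime) (k n : ℕ) (h : k ≤ n) :
    Nat.card {x : ZMod (p ^ n) // p ^ k • x = 0} = p ^ k := by
  have : NeZero (p ^ n) := ⟨pow_ne_zero _ hp.ne_zero⟩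
  have h1 := IsAddCyclic.card_nsmulAddMonoidHom_ker (G := ZMod (p ^ n)) (p ^ k)
  rw [Nat.card_zmod, Nat.gcd_eq_right (pow_dvd_pow p h)] at h1
  exact h1

lemma card_isUnit (p : ℕ) (hp : p.Prime) (n : ℕ) :
    Nat.card {x : ZMod (p ^ (n + 1)) // IsUnit x} = p ^ n * (p - 1) := by
  have : NeZero (p ^ (n + 1)) := ⟨pow_ne_zero _ hp.ne_zero⟩
  rw [← Nat.totient_prime_pow_succ hp, ← ZMod.card_units_eq_totient, ← Nat.card_eq_fintype_card]
  exact (Nat.card_congr (Equiv.ofBijective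
    (fun u : (ZMod (p ^ (n + 1)))ˣ => (⟨u, u.isUnit⟩ : {x : ZMod (p ^ (n + 1)) // IsUnit x}))
    ⟨fun u v h => Units.ext (congrArg Subtype.val h), fun ⟨_, u, hu⟩ => ⟨u, Subtype.ext hu⟩⟩)).symm

lemma card_good (p : ℕ) (hp : p.Prime) : Nat.card {v // Good p v} = (p - 1) ^ 2 * p ^ 20 := by
  let P := {x : ZMod (p ^ 4) // IsUnit x} × ZMod (p ^ 2) × ZMod (p ^ 3) ×
    {x : ZMod (p ^ 4) // p ^ 2 • x = 0} × {x : ZMod (p ^ 2) // p ^ 1 • x = 0} ×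
    {x : ZMod (p ^ 3) // p ^ 2 • x = 0} × {x : ZMod (p ^ 4) // p ^ 3 • x = 0} × ZMod (p ^ 2) ×
    {x : ZMod (p ^ 3) // IsUnit x}
  let C := ZMod.castHom (pow_dvd_pow p (by norm_num : 2 ≤ 4)) (ZMod (p ^ 2))
  let E : {v // Good p v} ≃ P :=
    { toFun := fun v => (⟨v.1.1.1, v.2.1⟩, v.1.1.2.1, v.1.1.2.2, ⟨v.1.2.1.1, v.2.2.2.1⟩,
        ⟨v.1.2.1.2.1 - C v.1.1.1, by rw [pow_one]; exact v.2.2.1⟩, ⟨v.1.2.1.2.2, v.2.2.2.2.1⟩,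
        ⟨v.1.2.2.1, v.2.2.2.2.2.1⟩, v.1.2.2.2.1, ⟨v.1.2.2.2.2, v.2.2.2.2.2.2⟩)
      invFun := fun ⟨a, b, c, d, e, f, g, h, i⟩ =>
        ⟨((a.1, b, c), (d.1, e.1 + C a.1, f.1), (g.1, h, i.1)),
          ⟨a.2, by simpa [C] using e.2, d.2, f.2, g.2, i.2⟩⟩
      left_inv := fun v => by simp
      right_inv := fun ⟨a, b, c, d, e, f, g, h, i⟩ => by simp }
  rw [Nat.card_congr E]
  simp only [P, Nat.card_prod, Nat.card_zmod, card_isUnit p hp 3, card_isUnit p hp 2,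
    card_tor p hp 2 4 (by norm_num), card_tor p hp 1 2 (by norm_num),
    card_tor p hp 2 3 (by norm_num), card_tor p hp 3 4 (by norm_num)]
  ring

lemma good_of_equiv (p : ℕ) (hp : p.Prime) (φ : B p ≃+ B p)
    (hφ : (A p).map φ.toAddMonoidHom = A p) :
    Good p (φ (mk p 1 0 0), φ (mk p 0 1 0), φ (mk p 0 0 1)) := by
  have h0 : (p : ℤ) ≠ 0 := by exact_mod_cast hp.ne_zero
  have hP : Prime (p : ℤ) := Nat.prime_iff_prime_int.mp hp
  obtain ⟨a, b, c, h1⟩ := mk_surj p (φ (mk p 1 0 0))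
  obtain ⟨d, e, f, h2⟩ := mk_surj p (φ (mk p 0 1 0))
  obtain ⟨g, h, i, h3⟩ := mk_surj p (φ (mk p 0 0 1))
  have ha := hom_apply p φ.toAddMonoidHom h1 h2 h3
  simp only [AddEquiv.toAddMonoidHom_eq_coe, AddMonoidHom.coe_coe] at ha
  rw [h1, h2, h3, good_iff p hp]
  have tor : ∀ x y z : ℤ, mk p x y z = 0 → φ (mk p x y z) = 0 := fun x y z h => by rw [h, map_zero]
  have inj : ∀ x y z : ℤ, φ (mk p x y z) = 0 → mk p x y z = 0 := fun x y z h => by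
    rwa [map_eq_zero_iff φ φ.injective] at h
  simp only [ha, mk_eq_zero] at tor inj
  have t2 := tor 0 (p ^ 2) 0 (by simp)
  have t3 := tor 0 0 (p ^ 3) (by simp)
  simp only [zero_mul, zero_add, add_zero] at t2 t3
  have hd : (p : ℤ) ^ 2 ∣ d := by
    have := t2.1
    rwa [show (p : ℤ) ^ 4 = p ^ 2 * p ^ 2 by ring, mul_dvd_mul_iff_left (pow_ne_zero _ h0)] at this
  have hf : (p : ℤ) ∣ f := by
    have := t2.2.2
    rwa [show (p : ℤ) ^ 3 = p ^ 2 * p by ring, mul_dvd_mul_iff_left (pow_ne_zero _ h0)] at this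
  have hg : (p : ℤ) ∣ g := by
    have := t3.1
    rwa [show (p : ℤ) ^ 4 = p ^ 3 * p by ring, mul_dvd_mul_iff_left (pow_ne_zero _ h0)] at this
  have hone : ¬ (p : ℤ) ∣ 1 := fun h => hP.not_isUnit (isUnit_of_dvd_one h)
  have hna : ¬ (p : ℤ) ∣ a := by
    rintro ⟨a, rfl⟩
    have := (inj (p ^ 3) 0 0 ⟨⟨a, by ring⟩, ⟨p * b, by ring⟩, ⟨c, by ring⟩⟩).1
    rw [pow_dvd_pow_iff h0 hP.not_isUnit] at this
    omega
  refine ⟨hna, ?_, hd, hf, hg, ?_⟩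
  · have hm : φ (mk p (p ^ 2) p 0) ∈ A p := by
      rw [← hφ]
      refine ⟨mk p (p ^ 2) p 0, ?_, rfl⟩
      rw [SetLike.mem_coe, mem_A]
      exact ⟨1, 0, by simp⟩
    rw [ha, mem_A] at hm
    obtain ⟨d, rfl⟩ := hd
    obtain ⟨m, n, ⟨u, hu⟩, ⟨v, hv⟩, -⟩ := hm
    have e1 : m = a + p * d + p ^ 2 * u := by
      apply mul_left_cancel₀ (pow_ne_zero 2 h0)
      linear_combination hu
    have e2 : m = p * b + e + p * v := by
      apply mul_left_cancel₀ h0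
      linear_combination hv
    exact ⟨d + p * u - b - v, by linear_combination e1 - e2⟩
  · rintro ⟨i, rfl⟩
    obtain ⟨g, rfl⟩ := hg
    obtain ⟨s, t, hst⟩ := (hP.coprime_iff_not_dvd.mpr hna)
    have := (inj (- p ^ 3 * g * t) 0 (p ^ 2) ⟨⟨g * s, by linear_combination (-p ^ 3 * g) * hst⟩, 
      ⟨-p * g * t * b + h, by ring⟩, ⟨- g * t * c + i, by ring⟩⟩).2.2
    rw [pow_dvd_pow_iff h0 hP.not_isUnit] at this
    omega

lemma equiv_of_good (p : ℕ) (hp : p.Prime) (v : B p × B p × B p) (hv : Good p v) :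
    ∃ φ : B p ≃+ B p, (A p).map φ.toAddMonoidHom = A p ∧
      (φ (mk p 1 0 0), φ (mk p 0 1 0), φ (mk p 0 0 1)) = v := by
  have h0 : (p : ℤ) ≠ 0 := by exact_mod_cast hp.ne_zero
  have hP : Prime (p : ℤ) := Nat.prime_iff_prime_int.mp hp
  have : NeZero (p ^ 2) := ⟨pow_ne_zero _ hp.ne_zero⟩
  have : NeZero (p ^ 3) := ⟨pow_ne_zero _ hp.ne_zero⟩
  have : NeZero (p ^ 4) := ⟨pow_ne_zero _ hp.ne_zero⟩
  obtain ⟨v1, v2, v3⟩ := v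
  obtain ⟨a, b, c, rfl⟩ := mk_surj p v1
  obtain ⟨d, e, f, rfl⟩ := mk_surj p v2
  obtain ⟨g, h, i, rfl⟩ := mk_surj p v3
  rw [good_iff p hp] at hv
  obtain ⟨hna, ⟨k, hk⟩, ⟨d, rfl⟩, ⟨f, rfl⟩, ⟨g, rfl⟩, hni⟩ := hv
  obtain rfl : e = a + p * k := by linear_combination hk
  have hne : ¬ (p : ℤ) ∣ a + p * k := by
    rwa [Int.dvd_add_left (dvd_mul_right _ _)]
  obtain ⟨φ, h1, h2, h3⟩ := exists_hom p (mk p a b c) (mk p (p ^ 2 * d) (a + p * k) (p * f))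
    (mk p (p * g) h i)
    (by
      rw [← natCast_zsmul, mk_smul, mk_eq_zero]; push_cast
      exact ⟨⟨a, by ring⟩, ⟨p ^ 2 * b, by ring⟩, ⟨p * c, by ring⟩⟩)
    (by
      rw [← natCast_zsmul, mk_smul, mk_eq_zero]; push_cast
      exact ⟨⟨d, by ring⟩, ⟨a + p * k, by ring⟩, ⟨f, by ring⟩⟩)
    (by
      rw [← natCast_zsmul, mk_smul, mk_eq_zero]; push_cast
      exact ⟨⟨g, by ring⟩, ⟨p * h, by ring⟩, ⟨i, by ring⟩⟩)
  have ha := hom_apply p φ h1 h2 h3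
  have soc : ∀ w : B p, (p : ℤ) • w = 0 → φ w = 0 → w = 0 := by
    intro w hw hφ
    obtain ⟨x, y, z, rfl⟩ := mk_surj p w
    rw [mk_smul, mk_eq_zero] at hw
    rw [show (p : ℤ) ^ 4 = p * p ^ 3 by ring, show (p : ℤ) ^ 3 = p * p ^ 2 by ring,
      show (p : ℤ) ^ 2 = p * p by ring,
      mul_dvd_mul_iff_left h0, mul_dvd_mul_iff_left h0, mul_dvd_mul_iff_left h0] at hw
    obtain ⟨⟨x, rfl⟩, ⟨y, rfl⟩, ⟨z, rfl⟩⟩ := hw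
    rw [ha, mk_eq_zero] at hφ
    obtain ⟨⟨u1, q1⟩, ⟨u2, q2⟩, ⟨u3, q3⟩⟩ := hφ
    have hy : (p : ℤ) ∣ y := by
      refine (hP.dvd_or_dvd (?_ : (p : ℤ) ∣ y * (a + p * k))).resolve_right hne
      refine ⟨u2 - p * x * b - z * h, ?_⟩
      apply mul_left_cancel₀ h0
      linear_combination q2
    obtain ⟨y, rfl⟩ := hy
    have hz : (p : ℤ) ∣ z := by
      refine (hP.dvd_or_dvd (?_ : (p : ℤ) ∣ z * i)).resolve_right hni
      refine ⟨u3 - x * c - y * f, ?_⟩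
      apply mul_left_cancel₀ (pow_ne_zero 2 h0)
      linear_combination q3
    obtain ⟨z, rfl⟩ := hz
    have hx : (p : ℤ) ∣ x := by
      refine (hP.dvd_or_dvd (?_ : (p : ℤ) ∣ x * a)).resolve_right hna
      refine ⟨u1 - y * d - z * g, ?_⟩
      apply mul_left_cancel₀ (pow_ne_zero 3 h0)
      linear_combination q1
    obtain ⟨x, rfl⟩ := hx
    rw [mk_eq_zero]
    exact ⟨⟨x, by ring⟩, ⟨y, by ring⟩, ⟨z, by ring⟩⟩
  have kill : ∀ w : B p, (p : ℤ) ^ 4 • w = 0 := by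
    intro w
    obtain ⟨x, y, z, rfl⟩ := mk_surj p w
    rw [mk_smul, mk_eq_zero]
    exact ⟨⟨x, by ring⟩, ⟨p ^ 2 * y, by ring⟩, ⟨p * z, by ring⟩⟩
  have inj : Function.Injective φ := by
    rw [injective_iff_map_eq_zero]
    intro w hw
    have step : ∀ n : ℕ, (p : ℤ) ^ n • w = 0 → w = 0 := by
      intro n
      induction n with
      | zero => intro h; simpa using h
      | succ n ih =>
        intro h
        apply ih
        apply soc
        · rw [smul_smul, ← pow_succ']; exact h
        · rw [map_zsmul, hw, smul_zero]
    exact step 4 (kill w)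
  have bij : Function.Bijective φ := Finite.injective_iff_bijective.mp inj
  refine ⟨AddEquiv.ofBijective φ bij, ?_, ?_⟩
  · have : (AddEquiv.ofBijective φ bij).toAddMonoidHom = φ := by ext <;> rfl
    rw [this]
    apply AddSubgroup.eq_of_le_of_card_ge
    · rw [A, AddMonoidHom.map_closure, AddSubgroup.closure_le]
      rintro _ ⟨w, hw | hw, rfl⟩
      · have : w = mk p (p ^ 2) p 0 := by rw [hw]; simp [mk]
        rw [this, ha, SetLike.mem_coe, mem_A]
        exact ⟨a + p * d, c + f, ⟨0, by ring⟩, ⟨d - b - k, by ring⟩, ⟨0, by ring⟩⟩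
      · have : w = mk p 0 0 (p ^ 2) := by rw [hw]; simp [mk]
        rw [this, ha, SetLike.mem_coe, mem_A]
        exact ⟨p * g, i, ⟨0, by ring⟩, ⟨g - h, by ring⟩, ⟨0, by ring⟩⟩
    · rw [AddSubgroup.card_map_of_injective inj]
  · simp [h1, h2, h3]

end S15


/-- The number of automorphisms of the pair `T_2^{4,2} ⊕ P_1^3`, i.e. automorphisms `φ` of
`B = ℤ/p⁴ ⊕ ℤ/p² ⊕ ℤ/p³` with `φ(A) = A` where `A = ⟨(p², p, 0), (0, 0, p²)⟩`, equals
`(p-1)²·p^20`. -/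
theorem stmt_15 (p : ℕ) (hp : p.Prime) :
    Nat.card {φ : (ZMod (p ^ 4) × ZMod (p ^ 2) × ZMod (p ^ 3)) ≃+
        (ZMod (p ^ 4) × ZMod (p ^ 2) × ZMod (p ^ 3)) //
      (AddSubgroup.closure
          {((p : ZMod (p ^ 4)) ^ 2, (p : ZMod (p ^ 2)), (0 : ZMod (p ^ 3))),
           ((0 : ZMod (p ^ 4)), (0 : ZMod (p ^ 2)), (p : ZMod (p ^ 3)) ^ 2)}).map
          φ.toAddMonoidHom =
        AddSubgroup.closure
          {((p : ZMod (p ^ 4)) ^ 2, (p : ZMod (p ^ 2)), (0 : ZMod (p ^ 3))),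
           ((0 : ZMod (p ^ 4)), (0 : ZMod (p ^ 2)), (p : ZMod (p ^ 3)) ^ 2)}} =
      (p - 1) ^ 2 * p ^ 20 := by
  rw [← S15.card_good p hp]
  refine Nat.card_congr (Equiv.ofBijective (fun φ => ⟨(φ.1 (S15.mk p 1 0 0), φ.1 (S15.mk p 0 1 0),
    φ.1 (S15.mk p 0 0 1)), S15.good_of_equiv p hp φ.1 φ.2⟩) ⟨?_, ?_⟩)
  · rintro ⟨φ, h⟩ ⟨ψ, h'⟩ heq
    simp only [Subtype.mk.injEq, Prod.mk.injEq] at heq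
    obtain ⟨e1, e2, e3⟩ := heq
    apply Subtype.ext
    apply AddEquiv.ext
    intro w
    obtain ⟨x, y, z, rfl⟩ := S15.mk_surj p w
    obtain ⟨a, b, c, h1⟩ := S15.mk_surj p (φ (S15.mk p 1 0 0))
    obtain ⟨d, e, f, h2⟩ := S15.mk_surj p (φ (S15.mk p 0 1 0))
    obtain ⟨g, h, i, h3⟩ := S15.mk_surj p (φ (S15.mk p 0 0 1))
    have k1 := S15.hom_apply p φ.toAddMonoidHom h1 h2 h3 x y z
    have k2 := S15.hom_apply p ψ.toAddMonoidHom (e1.symm.trans h1) (e2.symm.trans h2)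
      (e3.symm.trans h3) x y z
    exact k1.trans k2.symm
  · rintro ⟨v, hv⟩
    obtain ⟨φ, h1, h2⟩ := S15.equiv_of_good p hp v hv
    exact ⟨⟨φ, h1⟩, Subtype.ext h2⟩
end

section
/- Let p be a prime and let 2 ≤ ℓ < m ≤ n be integers. Consider the group homomorphism f : ℤ/p^nℤ × ℤ/p^{ℓ−2}ℤ → ℤ/p^{m−2}ℤ given by f(x, y) = x̄ + p^{m−ℓ}ȳ, where x̄ is the image of x under the canonical projection ℤ/p^nℤ → ℤ/p^{m−2}ℤ and p^{m−ℓ}ȳ is the image of y under the well-defined homomorphism ℤ/p^{ℓ−2}ℤ → ℤ/p^{m−2}ℤ induced by multiplication by p^{m−ℓ}. Then f is surjective and its kernel is the cyclic subgroup generated by (p^{m−ℓ}, −1), which has order p^{n+ℓ−m}. -/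
/-- For `2 ≤ ℓ < m ≤ n`, the homomorphism
`f : ℤ/p^n × ℤ/p^{ℓ-2} → ℤ/p^{m-2}`, `f(x, y) = x̄ + p^{m-ℓ} ȳ` (characterized on integer
representatives) is surjective with kernel the cyclic subgroup generated by
`(p^{m-ℓ}, -1)`, which has order `p^{n+ℓ-m}`. -/
theorem stmt_16 (p : ℕ) (hp : p.Prime) (ℓ m n : ℕ) (h1 : 2 ≤ ℓ) (h2 : ℓ < m) (h3 : m ≤ n)
    (f : (ZMod (p ^ n) × ZMod (p ^ (ℓ - 2))) →+ ZMod (p ^ (m - 2)))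
    (hf : ∀ x y : ℤ, f ((x : ZMod (p ^ n)), (y : ZMod (p ^ (ℓ - 2)))) =
        (x : ZMod (p ^ (m - 2))) + (p : ZMod (p ^ (m - 2))) ^ (m - ℓ) * (y : ZMod (p ^ (m - 2)))) :
    Function.Surjective f ∧
    f.ker = AddSubgroup.zmultiples
        (((p : ZMod (p ^ n)) ^ (m - ℓ), (-1 : ZMod (p ^ (ℓ - 2))))) ∧
    Nat.card (AddSubgroup.zmultiples
        (((p : ZMod (p ^ n)) ^ (m - ℓ), (-1 : ZMod (p ^ (ℓ - 2)))))) = p ^ (n + ℓ - m) := by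
  have hpow : p ^ (m - 2) = p ^ (m - ℓ) * p ^ (ℓ - 2) := by
    rw [← pow_add]; congr 1; omega
  have hpn : p ^ n = p ^ (m - ℓ) * p ^ (n + ℓ - m) := by
    rw [← pow_add]; congr 1; omega
  have hle : p ^ (ℓ - 2) ∣ p ^ (n + ℓ - m) := pow_dvd_pow _ (by omega)
  have hpos : 0 < p ^ (m - ℓ) := pow_pos hp.pos _
  refine ⟨?_, ?_, ?_⟩
  · intro z
    obtain ⟨x, rfl⟩ := ZMod.intCast_surjective z
    refine ⟨((x : ZMod (p ^ n)), ((0 : ℤ) : ZMod (p ^ (ℓ - 2)))), ?_⟩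
    rw [hf]; simp
  · ext ⟨a, b⟩
    obtain ⟨x, rfl⟩ := ZMod.intCast_surjective a
    obtain ⟨y, rfl⟩ := ZMod.intCast_surjective b
    rw [AddMonoidHom.mem_ker, AddSubgroup.mem_zmultiples_iff]
    constructor
    · intro h
      rw [hf] at h
      have h' : ((x + (p : ℤ) ^ (m - ℓ) * y : ℤ) : ZMod (p ^ (m - 2))) = 0 := by
        push_cast; exact h
      rw [ZMod.intCast_zmod_eq_zero_iff_dvd, hpow] at h'
      obtain ⟨k, hk⟩ := h'
      push_cast at hk
      have hx : x = (p : ℤ) ^ (m - ℓ) * (-y + (p : ℤ) ^ (ℓ - 2) * k) := by linarith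
      refine ⟨-y + (p : ℤ) ^ (ℓ - 2) * k, ?_⟩
      have h0 : (p : ZMod (p ^ (ℓ - 2))) ^ (ℓ - 2) = 0 := by
        have := ZMod.natCast_self (p ^ (ℓ - 2))
        push_cast at this; exact this
      refine Prod.ext ?_ ?_
      · rw [hx]; simp only [Prod.smul_mk, zsmul_eq_mul]; push_cast; ring
      · simp only [Prod.smul_mk, zsmul_eq_mul]; push_cast; rw [h0]; ring
    · rintro ⟨t, ht⟩
      rw [← ht, map_zsmul]
      have := hf ((p : ℤ) ^ (m - ℓ)) (-1)
      push_cast at this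
      rw [this]; simp
  · rw [Nat.card_zmultiples]
    have key : ∀ t : ℕ, t • (((p : ZMod (p ^ n)) ^ (m - ℓ), (-1 : ZMod (p ^ (ℓ - 2))))) = 0 ↔
        p ^ (n + ℓ - m) ∣ t := by
      intro t
      have e1 : t • ((p : ZMod (p ^ n)) ^ (m - ℓ)) = 0 ↔ p ^ (n + ℓ - m) ∣ t := by
        have : t • ((p : ZMod (p ^ n)) ^ (m - ℓ)) = ((p ^ (m - ℓ) * t : ℕ) : ZMod (p ^ n)) := by
          push_cast; rw [nsmul_eq_mul]; ring
        rw [this, ZMod.natCast_eq_zero_iff]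
        conv_lhs => rw [hpn]
        exact Nat.mul_dvd_mul_iff_left hpos
      rw [Prod.smul_mk, Prod.mk_eq_zero, e1]
      refine ⟨fun h => h.1, fun h => ⟨h, ?_⟩⟩
      have : (t : ZMod (p ^ (ℓ - 2))) = 0 := (ZMod.natCast_eq_zero_iff _ _).2 (hle.trans h)
      rw [nsmul_eq_mul, this, zero_mul]
    apply Nat.dvd_antisymm
    · rw [addOrderOf_dvd_iff_nsmul_eq_zero, key]
    · rw [← key]; exact addOrderOf_nsmul_eq_zero _
end
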